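/- In the non-uniform case (not all p_j equal) with ρ > 1, the variance of the size S_n of a random G-trie built from n labelings of an M-ary tree satisfies Var(S_n) = ((M-1)/(M·P(2ρ-1)) - 1) · (Σ_{β ∈ S_ρ} β G_E(β) n^{β-1})^2 · n + o(n^{2ρ-1}) as n → ∞. -/

import Mathlib

/-!
`S_n` counts the words occurring in at least two of the labelings, so `Var S_n` is the sum over all
pairs of words of the covariance of the events "the word occurs at most once". For words of
probabilities `a`, `b` and joint probability `t` this covariance is close to
`n³ (t - a b) a b exp (-n (a + b))`. Pairs of words one of which is a prefix of the other contribute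
`o(n^{2ρ-1})` through the term `t`. For two words that fork after a common prefix `u`, `t` vanishes
if they leave `u` in the same direction and is `a b` divided by the probability of `u` otherwise;
with the harmonic sum `Λ(x) = ∑_w P(w)² exp (-x P(w))` over all words, such pairs and the products
`a b` combine to a constant multiple of `n³ Λ(n)²`, up to `o(n^{2ρ-1})`.

Splitting off the first letter of a word turns `Φ(t) = e^{(2-ρ)t} Λ(e^t)` into the solution of a
renewal equation with step distribution `g(x)^ρ` at `-log g(x)`. Every step is an asymptotic period
of `Φ`. Hence `Φ` converges to a constant if the steps generate a dense subgroup, and to a periodic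
function with an explicit Fourier series, by Poisson summation, if they generate a lattice. In both
cases the limit is `μ⁻¹ ∑_β Γ(2-β) e^{(β-ρ)t}`, summed over the roots `β` on the line `Re β = ρ`,
where `μ` is the mean step.
-/

open MeasureTheory ProbabilityTheory Filter Topology

/-- A word `w` over `{1,…,M}×{1,…,A}` occurs in the labeling `L` of the infinite rooted
`M`-ary tree (nodes are identified with words over `Fin M`; the value of `L` on the root `[]`
is irrelevant) if along the path determined by the first components the labels are the
second components. -/
def Occurs {M A : ℕ} (L : List (Fin M) → Fin A) (w : List (Fin M × Fin A)) : Prop :=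
  ∀ t : Fin w.length, L ((w.take (t.1 + 1)).map Prod.fst) = (w.get t).2

/-- The number of labelings among `Ls` in which the word `w` occurs. -/
noncomputable def occCount {M A n : ℕ} (Ls : Fin n → List (Fin M) → Fin A)
    (w : List (Fin M × Fin A)) : ℕ :=
  Nat.card {i : Fin n // Occurs (Ls i) w}

/-- The G-trie built from the labelings `Ls`: all words occurring in at least two of them. -/
def GTrie {M A n : ℕ} (Ls : Fin n → List (Fin M) → Fin A) : Set (List (Fin M × Fin A)) :=
  {w | 2 ≤ occCount Ls w}

/-- The size of the G-trie built from the labelings `Ls` (as a real number). -/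
noncomputable def gtrieSize {M A n : ℕ} (Ls : Fin n → List (Fin M) → Fin A) : ℝ :=
  (GTrie Ls).ncard

/-- `μL` is the distribution of a random labeling of the infinite rooted `M`-ary tree where
all labels are independent with `P(letter = j) = p j`: every finite cylinder set has the
product probability. -/
def IsLabelingMeasure {M A : ℕ} (p : Fin A → ℝ) (μL : Measure (List (Fin M) → Fin A)) : Prop :=
  ∀ (s : Finset (List (Fin M))) (f : List (Fin M) → Fin A),
    μL {L | ∀ w ∈ s, L w = f w} = ∏ w ∈ s, ENNReal.ofReal (p (f w))

/-- `P(s) = 1 - M ∑_j p_j ^ s` for complex `s`. -/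
noncomputable def Pfun (M A : ℕ) (p : Fin A → ℝ) (s : ℂ) : ℂ :=
  1 - (M : ℂ) * ∑ j, (p j : ℂ) ^ s

/-- `G_E(s) = (1-s)Γ(-s)/(M ∑_j p_j^s log p_j)`. -/
noncomputable def GE (M A : ℕ) (p : Fin A → ℝ) (s : ℂ) : ℂ :=
  (1 - s) * Complex.Gamma (-s) / ((M : ℂ) * ∑ j, (p j : ℂ) ^ s * (Real.log (p j) : ℂ))

/-- The roots of `P` with real part equal to `ρ`. -/
def rootsLine (M A : ℕ) (p : Fin A → ℝ) (ρ : ℝ) : Set ℂ :=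
  {s | Pfun M A p s = 0 ∧ s.re = ρ}

namespace GTrieVariance

/-! ### Renewal equations -/

/-- Barbălat's lemma in the square-integrable case. -/
lemma tendsto_atTop_zero_of_integrableOn_sq {D : ℝ → ℝ} {a : ℝ} (hD : UniformContinuous D)
    (hint : IntegrableOn (fun t => D t ^ 2) (Set.Ioi a)) : Tendsto D atTop (𝓝 0) := by
  have hii : ∀ u v, IntervalIntegrable (fun t => D t ^ 2) volume u v :=
    fun u v => (hD.continuous.pow 2).intervalIntegrable u v
  rw [Metric.tendsto_atTop]
  intro ε hε
  obtain ⟨δ, hδ, hclose⟩ := Metric.uniformContinuous_iff.1 hD (ε / 2) (by positivity)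
  have hwindow : Tendsto (fun T => ∫ t in T..(T + δ / 2), D t ^ 2) atTop (𝓝 0) := by
    have hright := intervalIntegral_tendsto_integral_Ioi a hint
      (tendsto_atTop_add_const_right atTop (δ / 2) tendsto_id)
    have hleft := intervalIntegral_tendsto_integral_Ioi a hint tendsto_id
    simpa [intervalIntegral.integral_interval_sub_left (hii _ _) (hii _ _)]
      using hright.sub hleft
  obtain ⟨N, hN⟩ := eventually_atTop.1
    (hwindow.eventually_lt_const (show 0 < δ / 2 * (ε / 2) ^ 2 by positivity))
  refine ⟨N, fun t ht => ?_⟩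
  by_contra! hlarge
  refine absurd (hN t ht) (not_lt.2 ?_)
  calc δ / 2 * (ε / 2) ^ 2 = ∫ _ in t..(t + δ / 2), (ε / 2) ^ 2 := by simp
    _ ≤ ∫ s in t..(t + δ / 2), D s ^ 2 := by
      refine intervalIntegral.integral_mono_on (by linarith) (by simp) (hii _ _) fun s hs => ?_
      have hst : dist s t < δ := by
        rw [Real.dist_eq, abs_of_nonneg (by linarith [hs.1])]; linarith [hs.2]
      have hDst := hclose hst
      rw [Real.dist_eq] at hDst hlarge
      have htri := abs_sub_abs_le_abs_sub (D t) (D s)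
      rw [abs_sub_comm] at htri
      rw [← sq_abs (D s)]
      rw [sub_zero] at hlarge
      gcongr
      linarith

lemma integral_comp_sub_sub_self_le {f : ℝ → ℝ} {B c T : ℝ} (hf : Continuous f)
    (hf0 : ∀ t, 0 ≤ f t) (hB : ∀ t, f t ≤ B) (hc : 0 ≤ c) :
    ∫ t in (0 : ℝ)..T, (f (t - c) - f t) ≤ c * B := by
  have hii : ∀ u v, IntervalIntegrable f volume u v := fun u v => hf.intervalIntegrable u v
  have htelescope : ∫ t in (0 : ℝ)..T, (f (t - c) - f t) =
      (∫ t in (-c)..0, f t) - ∫ t in (T - c)..T, f t := by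
    rw [intervalIntegral.integral_sub (Continuous.intervalIntegrable (by fun_prop) _ _) (hii _ _),
      intervalIntegral.integral_comp_sub_right f, zero_sub,
      intervalIntegral.integral_interval_sub_interval_comm (hii _ _) (hii _ _) (hii _ _)]
  have hlast : 0 ≤ ∫ t in (T - c)..T, f t :=
    intervalIntegral.integral_nonneg (by linarith) fun t _ => hf0 t
  have hfirst : ∫ t in (-c)..0, f t ≤ ∫ _ in (-c)..0, B :=
    intervalIntegral.integral_mono_on (by linarith) (hii _ _) (by simp) fun t _ => hB t
  rw [intervalIntegral.integral_const, smul_eq_mul] at hfirst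
  linarith

lemma uniformContinuous_sum {ι : Type*} (s : Finset ι) {f : ι → ℝ → ℝ}
    (hf : ∀ i, UniformContinuous (f i)) : UniformContinuous fun t => ∑ i ∈ s, f i t := by
  classical
  induction s using Finset.induction_on with
  | empty => simpa using uniformContinuous_const
  | insert i s hi ih => simpa only [Finset.sum_insert hi] using (hf i).add ih

/-- `φ` is a bounded solution, vanishing at `-∞`, of the renewal equation
`φ(t) = k(t) + ∑ a, q a * φ(t - ξ a)` whose step distribution puts mass `q a` on the positive
number `ξ a`. The regularity required of `φ` and `k` is what the asymptotic analysis needs. -/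
structure RenewalEquation {ι : Type*} [Fintype ι] (q ξ : ι → ℝ) (k φ : ℝ → ℝ) : Prop where
  weight_pos : ∀ a, 0 < q a
  sum_weight : ∑ a, q a = 1
  step_pos : ∀ a, 0 < ξ a
  kernel_decay : ∃ C, ∀ t, |k t| ≤ C * (1 + t ^ 2)⁻¹
  bounded : ∃ C, ∀ t, |φ t| ≤ C
  uniformContinuous : UniformContinuous φ
  tendsto_atBot : Tendsto φ atBot (𝓝 0)
  renewal : ∀ t, φ t = k t + ∑ a, q a * φ (t - ξ a)

/-- The mean of the step distribution with mass `q a` at `ξ a`. -/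
noncomputable def meanStep {ι : Type*} [Fintype ι] (q ξ : ι → ℝ) : ℝ := ∑ a, q a * ξ a

/-- The group of asymptotic periods of `φ` at `+∞`. -/
def asymptoticPeriods (φ : ℝ → ℝ) : AddSubgroup ℝ where
  carrier := {s | Tendsto (fun t => φ (t - s) - φ t) atTop (𝓝 0)}
  zero_mem' := by simp
  add_mem' := by
    intro s s' hs hs'
    have h := (hs'.comp (tendsto_atTop_add_const_right atTop (-s) tendsto_id)).add hs
    rw [add_zero] at h
    refine h.congr fun t => ?_
    simp only [Function.comp, id]
    rw [show t + -s - s' = t - (s + s') by ring, ← sub_eq_add_neg t s]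
    ring
  neg_mem' := by
    intro s hs
    have h := (hs.comp (tendsto_atTop_add_const_right atTop s tendsto_id)).neg
    rw [neg_zero] at h
    exact h.congr fun t => by simp

lemma isClosed_asymptoticPeriods {φ : ℝ → ℝ} (hφ : UniformContinuous φ) :
    IsClosed (asymptoticPeriods φ : Set ℝ) := by
  refine isClosed_of_closure_subset fun s hs => ?_
  refine Metric.tendsto_atTop.2 fun ε hε => ?_
  obtain ⟨δ, hδ, hclose⟩ := Metric.uniformContinuous_iff.1 hφ (ε / 2) (by positivity)
  obtain ⟨s', hs', hd⟩ := Metric.mem_closure_iff.1 hs δ hδ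
  obtain ⟨N, hN⟩ := Metric.tendsto_atTop.1 hs' (ε / 2) (by positivity)
  refine ⟨N, fun t ht => ?_⟩
  have hperiod := hN t ht
  have hnear := hclose (show dist (t - s) (t - s') < δ by rwa [dist_sub_left])
  rw [Real.dist_eq, sub_zero] at hperiod ⊢
  rw [Real.dist_eq] at hnear
  calc |φ (t - s) - φ t| ≤ |φ (t - s) - φ (t - s')| + |φ (t - s') - φ t| := abs_sub_le _ _ _
    _ < ε := by linarith

namespace RenewalEquation

variable {ι : Type*} [Fintype ι] {q ξ : ι → ℝ} {k φ : ℝ → ℝ}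

lemma meanStep_pos (h : RenewalEquation q ξ k φ) : 0 < meanStep q ξ := by
  refine Finset.sum_pos (fun a _ => mul_pos (h.weight_pos a) (h.step_pos a)) ?_
  exact Finset.nonempty_of_sum_ne_zero (h.sum_weight.trans_ne one_ne_zero)

lemma kernel_eq (h : RenewalEquation q ξ k φ) (t : ℝ) :
    k t = ∑ a, q a * (φ t - φ (t - ξ a)) := by
  simp only [mul_sub]
  rw [Finset.sum_sub_distrib, ← Finset.sum_mul, h.sum_weight]
  linarith [h.renewal t]

lemma uniformContinuous_kernel (h : RenewalEquation q ξ k φ) : UniformContinuous k := by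
  rw [funext h.kernel_eq]
  refine uniformContinuous_sum _ fun a => UniformContinuous.const_mul' ?_ _
  exact h.uniformContinuous.sub
    (h.uniformContinuous.comp (uniformContinuous_id.sub uniformContinuous_const))

lemma integrable_kernel (h : RenewalEquation q ξ k φ) : Integrable k := by
  obtain ⟨C, hC⟩ := h.kernel_decay
  exact (integrable_inv_one_add_sq.const_mul C).mono'
    h.uniformContinuous_kernel.continuous.aestronglyMeasurable (ae_of_all _ hC)

lemma tendsto_kernel_atTop (h : RenewalEquation q ξ k φ) : Tendsto k atTop (𝓝 0) := by
  obtain ⟨C, hC⟩ := h.kernel_decay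
  have hdecay : Tendsto (fun t : ℝ => C * (1 + t ^ 2)⁻¹) atTop (𝓝 0) := by
    simpa using (tendsto_inv_atTop_zero.comp
      (tendsto_atTop_add_const_left _ 1 (tendsto_pow_atTop two_ne_zero))).const_mul C
  exact squeeze_zero_norm hC hdecay

/-- The `q`-mean of `φ(t - ξ b)` is `φ t - k t`, so the sum of squares about it is a variance. -/
lemma weight_mul_sq_le (h : RenewalEquation q ξ k φ) (a : ι) (t : ℝ) :
    q a * (φ (t - ξ a) - φ t + k t) ^ 2 ≤
      ∑ b, q b * (φ (t - ξ b) ^ 2 - φ t ^ 2) + 2 * (φ t * k t) := by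
  have hsingle : q a * (φ (t - ξ a) - φ t + k t) ^ 2 ≤
      ∑ b, q b * (φ (t - ξ b) - φ t + k t) ^ 2 :=
    Finset.single_le_sum (f := fun b => q b * (φ (t - ξ b) - φ t + k t) ^ 2)
      (fun b _ => mul_nonneg (h.weight_pos b).le (sq_nonneg _)) (Finset.mem_univ a)
  have hexpand : ∑ b, q b * (φ (t - ξ b) - φ t + k t) ^ 2 =
      ∑ b, q b * (φ (t - ξ b) ^ 2 - φ t ^ 2)
        + 2 * (k t - φ t) * ∑ b, q b * φ (t - ξ b)
        + ((k t - φ t) ^ 2 + φ t ^ 2) * ∑ b, q b := by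
    simp only [Finset.mul_sum, ← Finset.sum_add_distrib]
    exact Finset.sum_congr rfl fun b _ => by ring
  have hmean : ∑ b, q b * φ (t - ξ b) = φ t - k t := by linarith [h.renewal t]
  rw [h.sum_weight, hmean] at hexpand
  nlinarith [sq_nonneg (k t)]

lemma integrableOn_sq_shift_sub (h : RenewalEquation q ξ k φ) (a : ι) :
    IntegrableOn (fun t => (φ (t - ξ a) - φ t + k t) ^ 2) (Set.Ioi 0) := by
  obtain ⟨C, hC⟩ := h.bounded
  have hφ := h.uniformContinuous.continuous
  have hk := h.uniformContinuous_kernel.continuous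
  refine integrableOn_Ioi_of_intervalIntegral_norm_bounded
    ((∑ b, q b * (ξ b * C ^ 2) + 2 * C * ∫ t, |k t|) / q a) 0
    (fun T => (Continuous.integrableOn_Icc (by fun_prop)).mono_set Set.Ioc_subset_Icc_self)
    tendsto_id (eventually_ge_atTop 0 |>.mono fun T hT => ?_)
  have hsq_le : ∀ t, φ t ^ 2 ≤ C ^ 2 := fun t => sq_le_sq' (abs_le.1 (hC t)).1 (abs_le.1 (hC t)).2
  simp only [Real.norm_of_nonneg (sq_nonneg _), id]
  rw [le_div_iff₀ (h.weight_pos a), mul_comm, ← intervalIntegral.integral_const_mul]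
  calc ∫ t in (0 : ℝ)..T, q a * (φ (t - ξ a) - φ t + k t) ^ 2
      ≤ ∫ t in (0 : ℝ)..T, (∑ b, q b * (φ (t - ξ b) ^ 2 - φ t ^ 2) + 2 * C * |k t|) := by
        refine intervalIntegral.integral_mono_on hT
          (Continuous.intervalIntegrable (by fun_prop) _ _)
          (Continuous.intervalIntegrable (by fun_prop) _ _) fun t _ => ?_
        have hφk : φ t * k t ≤ C * |k t| :=
          (le_abs_self _).trans (abs_mul (φ t) (k t) ▸ by gcongr; exact hC t)
        linarith [h.weight_mul_sq_le a t]
    _ = ∑ b, q b * (∫ t in (0 : ℝ)..T, (φ (t - ξ b) ^ 2 - φ t ^ 2)) +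
          2 * C * ∫ t in (0 : ℝ)..T, |k t| := by
        rw [intervalIntegral.integral_add (Continuous.intervalIntegrable (by fun_prop) _ _)
          (Continuous.intervalIntegrable (by fun_prop) _ _), intervalIntegral.integral_finsetSum
          fun b _ => Continuous.intervalIntegrable (by fun_prop) _ _]
        simp only [intervalIntegral.integral_const_mul]
    _ ≤ ∑ b, q b * (ξ b * C ^ 2) + 2 * C * ∫ t, |k t| := by
        have hC0 : 0 ≤ C := (abs_nonneg _).trans (hC 0)
        gcongr with b
        · exact (h.weight_pos b).le
        · exact integral_comp_sub_sub_self_le (hφ.pow 2) (fun t => sq_nonneg _) hsq_le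
            (h.step_pos b).le
        · rw [intervalIntegral.integral_of_le hT]
          exact setIntegral_le_integral h.integrable_kernel.abs (ae_of_all _ fun t => abs_nonneg _)

lemma step_mem_asymptoticPeriods (h : RenewalEquation q ξ k φ) (a : ι) :
    ξ a ∈ asymptoticPeriods φ := by
  have huc : UniformContinuous fun t => φ (t - ξ a) - φ t + k t :=
    ((h.uniformContinuous.comp (uniformContinuous_id.sub uniformContinuous_const)).sub
      h.uniformContinuous).add h.uniformContinuous_kernel
  have hlim := (tendsto_atTop_zero_of_integrableOn_sq huc (h.integrableOn_sq_shift_sub a)).sub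
    h.tendsto_kernel_atTop
  rw [sub_zero] at hlim
  exact hlim.congr fun t => by ring

lemma closure_range_step_le (h : RenewalEquation q ξ k φ) :
    AddSubgroup.closure (Set.range ξ) ≤ asymptoticPeriods φ := by
  rw [AddSubgroup.closure_le]
  rintro _ ⟨a, rfl⟩
  exact h.step_mem_asymptoticPeriods a

end RenewalEquation

lemma summable_int_of_decay {k : ℝ → ℝ} {C d : ℝ} (hk : ∀ t, |k t| ≤ C * (1 + t ^ 2)⁻¹)
    (hd : 0 < d) (T : ℝ) : Summable fun n : ℤ => k (T - n * d) := by
  have hC : 0 ≤ C := by simpa using (abs_nonneg _).trans (hk 0)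
  refine Summable.of_norm_bounded_eventually
    (g := fun n : ℤ => C * (2 * (1 + T ^ 2) / d ^ 2) * (1 / (n : ℝ) ^ 2))
    ((Real.summable_one_div_int_pow.2 one_lt_two).mul_left _) ?_
  filter_upwards [(Set.finite_singleton (0 : ℤ)).compl_mem_cofinite] with n hn
  have hn : (n : ℝ) ≠ 0 := by exact_mod_cast hn
  refine (hk _).trans ?_
  rw [mul_assoc]
  gcongr
  rw [div_mul_div_comm, mul_one, inv_eq_one_div, div_le_div_iff₀ (by positivity) (by positivity)]
  nlinarith [sq_nonneg (2 * T - n * d), mul_nonneg (sq_nonneg T) (sq_nonneg (T - n * d))]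

lemma tendsto_tsum_tail_of_decay {k : ℝ → ℝ} {C d : ℝ} (hk : ∀ t, |k t| ≤ C * (1 + t ^ 2)⁻¹)
    (hd : 0 < d) (hlim : Tendsto k atTop (𝓝 0)) :
    Tendsto (fun T => ∑' n : ℕ, k (T + (n + 1) * d)) atTop (𝓝 0) := by
  have hC : 0 ≤ C := by simpa using (abs_nonneg _).trans (hk 0)
  have hbound : Summable fun n : ℕ => C * (1 / d ^ 2) * (1 / ((n : ℝ) + 1) ^ 2) := by
    refine Summable.mul_left _ ?_
    exact_mod_cast (summable_nat_add_iff 1).2 (Real.summable_one_div_nat_pow.2 one_lt_two)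
  rw [← tsum_zero (α := ℝ) (β := ℕ)]
  refine tendsto_tsum_of_dominated_convergence hbound
    (fun n => hlim.comp (tendsto_atTop_add_const_right _ _ tendsto_id)) ?_
  filter_upwards [eventually_ge_atTop 0] with T hT n
  refine (hk _).trans ?_
  rw [mul_assoc, div_mul_div_comm, mul_one, ← one_div, ← mul_pow]
  gcongr
  nlinarith [mul_nonneg hT (show (0 : ℝ) ≤ (n + 1) * d by positivity), sq_nonneg T]

/-- The convolution of `φ` with the tail `s ↦ ∑_{ξ a > s} q a` of the step distribution. If `φ`
solves a renewal equation with kernel `k`, then this is a primitive of `k`. -/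
noncomputable def tailConvolution {ι : Type*} [Fintype ι] (q ξ : ι → ℝ) (φ : ℝ → ℝ) (T : ℝ) : ℝ :=
  ∑ a, q a * ∫ s in (0 : ℝ)..(ξ a), φ (T - s)

section TailConvolution

variable {ι : Type*} [Fintype ι] {q ξ : ι → ℝ} {k φ : ℝ → ℝ}

lemma tailConvolution_sub (hφ : Continuous φ) (hk : ∀ t, k t = ∑ a, q a * (φ t - φ (t - ξ a)))
    (S T : ℝ) : tailConvolution q ξ φ T - tailConvolution q ξ φ S = ∫ t in S..T, k t := by
  have hii : ∀ u v, IntervalIntegrable φ volume u v := fun u v => hφ.intervalIntegrable u v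
  simp only [hk, tailConvolution]
  rw [intervalIntegral.integral_finsetSum
    fun a _ => Continuous.intervalIntegrable (by fun_prop) _ _, ← Finset.sum_sub_distrib]
  refine Finset.sum_congr rfl fun a _ => ?_
  rw [intervalIntegral.integral_const_mul, ← mul_sub,
    intervalIntegral.integral_sub (hii _ _) (Continuous.intervalIntegrable (by fun_prop) _ _),
    intervalIntegral.integral_comp_sub_right φ, intervalIntegral.integral_comp_sub_left φ,
    intervalIntegral.integral_comp_sub_left φ, sub_zero, sub_zero,
    intervalIntegral.integral_interval_sub_interval_comm' (hii _ _) (hii _ _) (hii _ _)]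

lemma tendsto_tailConvolution_atBot (hφ : Continuous φ) (hξ : ∀ a, 0 ≤ ξ a)
    (hbot : Tendsto φ atBot (𝓝 0)) : Tendsto (tailConvolution q ξ φ) atBot (𝓝 0) := by
  obtain ⟨N, hN⟩ := eventually_atBot.1 (hbot.norm.eventually_le_const (by simp : ‖(0 : ℝ)‖ < 1))
  rw [show (0 : ℝ) = ∑ a, q a * ∫ _ in (0 : ℝ)..(ξ a), (0 : ℝ) by simp]
  refine tendsto_finsetSum _ fun a _ => Tendsto.const_mul _ ?_
  refine intervalIntegral.tendsto_integral_filter_of_dominated_convergence (fun _ => 1)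
    (Eventually.of_forall fun T => Continuous.aestronglyMeasurable (by fun_prop))
    ((eventually_le_atBot N).mono fun T hT => ae_of_all _ fun s hs => hN _ ?_) (by simp)
    (ae_of_all _ fun s _ => hbot.comp ?_)
  · rw [Set.uIoc_of_le (hξ a)] at hs
    linarith [hs.1]
  · simpa only [sub_eq_add_neg] using! tendsto_atBot_add_const_right _ (-s) tendsto_id

lemma tailConvolution_le_integral (hφ : Continuous φ) (hξ : ∀ a, 0 ≤ ξ a)
    (hbot : Tendsto φ atBot (𝓝 0)) (hint : Integrable k) (hk0 : ∀ t, 0 ≤ k t)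
    (hk : ∀ t, k t = ∑ a, q a * (φ t - φ (t - ξ a))) (T : ℝ) :
    tailConvolution q ξ φ T ≤ ∫ t, k t := by
  have hlim := (tendsto_tailConvolution_atBot (q := q) hφ hξ hbot).const_sub
    (tailConvolution q ξ φ T)
  rw [sub_zero] at hlim
  refine le_of_tendsto hlim ((eventually_le_atBot T).mono fun S hS => ?_)
  rw [tailConvolution_sub hφ hk, intervalIntegral.integral_of_le hS]
  exact setIntegral_le_integral hint (ae_of_all _ hk0)

/-- A lower bound on the decay of `φ` to the left bounds `φ T` by a multiple of the tail
convolution at `T`, which is at most `∫ k`. -/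
lemma exists_forall_le_of_exp_mul_le {c : ℝ} (hφ : Continuous φ) (hc : 0 ≤ c)
    (hq : ∀ a, 0 < q a) (hq1 : ∑ a, q a = 1) (hξ : ∀ a, 0 < ξ a) (hφ0 : ∀ t, 0 ≤ φ t)
    (hslow : ∀ t s, 0 ≤ s → Real.exp (-(c * s)) * φ t ≤ φ (t - s))
    (hbot : Tendsto φ atBot (𝓝 0)) (hint : Integrable k) (hk0 : ∀ t, 0 ≤ k t)
    (hk : ∀ t, k t = ∑ a, q a * (φ t - φ (t - ξ a))) : ∃ C, ∀ t, φ t ≤ C := by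
  have hmass : 0 < ∑ a, q a * (ξ a * Real.exp (-(c * ξ a))) :=
    Finset.sum_pos (fun a _ => mul_pos (hq a) (mul_pos (hξ a) (Real.exp_pos _)))
      (Finset.nonempty_of_sum_ne_zero (hq1.trans_ne one_ne_zero))
  refine ⟨(∫ t, k t) / ∑ a, q a * (ξ a * Real.exp (-(c * ξ a))), fun T => ?_⟩
  rw [le_div_iff₀ hmass]
  refine le_trans ?_ (tailConvolution_le_integral hφ (fun a => (hξ a).le) hbot hint hk0 hk T)
  rw [tailConvolution, mul_comm, Finset.sum_mul]
  refine Finset.sum_le_sum fun a _ => ?_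
  rw [mul_assoc]
  refine mul_le_mul_of_nonneg_left ?_ (hq a).le
  calc ξ a * Real.exp (-(c * ξ a)) * φ T
      = ∫ _ in (0 : ℝ)..(ξ a), Real.exp (-(c * ξ a)) * φ T := by simp; ring
    _ ≤ ∫ s in (0 : ℝ)..(ξ a), φ (T - s) := by
      refine intervalIntegral.integral_mono_on (hξ a).le (by simp)
        (Continuous.intervalIntegrable (by fun_prop) _ _) fun s hs => ?_
      refine le_trans ?_ (hslow T s hs.1)
      gcongr
      · exact hφ0 T
      · exact hs.2

end TailConvolution

/-- The analogue of `tailConvolution` for steps `n a * d` in a lattice: its difference over a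
lattice step `d` is the kernel of the renewal equation. -/
noncomputable def latticeTailConvolution {ι : Type*} [Fintype ι] (q : ι → ℝ) (n : ι → ℕ) (d : ℝ)
    (φ : ℝ → ℝ) (T : ℝ) : ℝ :=
  ∑ a, q a * ∑ i ∈ Finset.range (n a), φ (T - i * d)

lemma tendsto_latticeTailConvolution_sub {ι : Type*} [Fintype ι] (q : ι → ℝ) {ξ : ι → ℝ}
    {φ : ℝ → ℝ} {d : ℝ} {n : ι → ℕ} (hn : ∀ a, ξ a = n a * d) (hd : 0 < d)
    (hper : d ∈ asymptoticPeriods φ) :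
    Tendsto (fun T => latticeTailConvolution q n d φ T - φ T * (meanStep q ξ / d))
      atTop (𝓝 0) := by
  have hmean : meanStep q ξ / d = ∑ a, q a * n a := by
    rw [meanStep, Finset.sum_div]
    refine Finset.sum_congr rfl fun a _ => ?_
    rw [hn]; field_simp
  have hrewrite : ∀ T, latticeTailConvolution q n d φ T - φ T * (meanStep q ξ / d) =
      ∑ a, q a * ∑ i ∈ Finset.range (n a), (φ (T - i * d) - φ T) := by
    intro T
    rw [latticeTailConvolution, hmean, Finset.mul_sum, ← Finset.sum_sub_distrib]
    refine Finset.sum_congr rfl fun a _ => ?_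
    rw [Finset.sum_sub_distrib, Finset.sum_const, Finset.card_range, nsmul_eq_mul]
    ring
  simp only [hrewrite]
  rw [show 𝓝 (0 : ℝ) = 𝓝 (∑ a, q a * ∑ _ ∈ Finset.range (n a), (0 : ℝ)) by simp]
  refine tendsto_finsetSum _ fun a _ => Tendsto.const_mul _ (tendsto_finsetSum _ fun i _ => ?_)
  have hmem := (asymptoticPeriods φ).nsmul_mem hper i
  rwa [nsmul_eq_mul] at hmem

namespace RenewalEquation

variable {ι : Type*} [Fintype ι] {q ξ : ι → ℝ} {k φ : ℝ → ℝ}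

lemma tendsto_tailConvolution_sub (h : RenewalEquation q ξ k φ)
    (hper : ∀ s, s ∈ asymptoticPeriods φ) :
    Tendsto (fun T => tailConvolution q ξ φ T - φ T * meanStep q ξ) atTop (𝓝 0) := by
  obtain ⟨C, hC⟩ := h.bounded
  have hφ := h.uniformContinuous.continuous
  have hrewrite : ∀ T, tailConvolution q ξ φ T - φ T * meanStep q ξ =
      ∑ a, q a * ∫ s in (0 : ℝ)..(ξ a), (φ (T - s) - φ T) := by
    intro T
    rw [tailConvolution, meanStep, Finset.mul_sum, ← Finset.sum_sub_distrib]
    refine Finset.sum_congr rfl fun a _ => ?_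
    rw [intervalIntegral.integral_sub (Continuous.intervalIntegrable (by fun_prop) _ _) (by simp),
      intervalIntegral.integral_const, smul_eq_mul]
    ring
  simp only [hrewrite]
  rw [show 𝓝 (0 : ℝ) = 𝓝 (∑ a, q a * ∫ _ in (0 : ℝ)..(ξ a), (0 : ℝ)) by simp]
  refine tendsto_finsetSum _ fun a _ => Tendsto.const_mul _ ?_
  exact intervalIntegral.tendsto_integral_filter_of_dominated_convergence (fun _ => C + C)
    (Eventually.of_forall fun T => Continuous.aestronglyMeasurable (by fun_prop))
    (Eventually.of_forall fun T => ae_of_all _ fun s _ =>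
      (norm_sub_le _ _).trans (add_le_add (hC _) (hC _)))
    (by simp) (ae_of_all _ fun s _ => hper s)

/-- The nonlattice renewal theorem. -/
lemma tendsto_of_dense (h : RenewalEquation q ξ k φ)
    (hdense : Dense (AddSubgroup.closure (Set.range ξ) : Set ℝ)) :
    Tendsto φ atTop (𝓝 ((∫ t, k t) / meanStep q ξ)) := by
  have hper : ∀ s, s ∈ asymptoticPeriods φ := fun s =>
    closure_minimal h.closure_range_step_le
      (isClosed_asymptoticPeriods h.uniformContinuous) (hdense s)
  have hkernel := intervalIntegral_tendsto_integral h.integrable_kernel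
    tendsto_neg_atTop_atBot tendsto_id
  have hpast := (tendsto_tailConvolution_atBot (q := q) h.uniformContinuous.continuous
    (fun a => (h.step_pos a).le) h.tendsto_atBot).comp tendsto_neg_atTop_atBot
  have hlim := ((hkernel.add hpast).sub
    (h.tendsto_tailConvolution_sub hper)).div_const (meanStep q ξ)
  rw [add_zero, sub_zero] at hlim
  refine hlim.congr fun T => ?_
  simp only [Function.comp, id]
  rw [← tailConvolution_sub h.uniformContinuous.continuous h.kernel_eq]
  have := h.meanStep_pos.ne'
  field_simp
  ring

lemma latticeTailConvolution_sub (h : RenewalEquation q ξ k φ) {d : ℝ} {n : ι → ℕ}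
    (hn : ∀ a, ξ a = n a * d) (T : ℝ) :
    latticeTailConvolution q n d φ T - latticeTailConvolution q n d φ (T - d) = k T := by
  rw [h.kernel_eq, latticeTailConvolution, latticeTailConvolution, ← Finset.sum_sub_distrib]
  refine Finset.sum_congr rfl fun a _ => ?_
  have htelescope := Finset.sum_range_sub' (fun i : ℕ => φ (T - i * d)) (n a)
  simp only [Nat.cast_zero, zero_mul, sub_zero] at htelescope
  rw [← mul_sub, ← Finset.sum_sub_distrib, hn, ← htelescope]
  congr 1
  refine Finset.sum_congr rfl fun i _ => ?_
  push_cast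
  ring_nf

lemma tendsto_latticeTailConvolution_atBot (h : RenewalEquation q ξ k φ) (d : ℝ) (n : ι → ℕ) :
    Tendsto (latticeTailConvolution q n d φ) atBot (𝓝 0) := by
  rw [show (0 : ℝ) = ∑ a, q a * ∑ _ ∈ Finset.range (n a), (0 : ℝ) by simp]
  refine tendsto_finsetSum _ fun a _ => Tendsto.const_mul _ (tendsto_finsetSum _ fun i _ => ?_)
  refine h.tendsto_atBot.comp ?_
  simpa only [sub_eq_add_neg] using! tendsto_atBot_add_const_right _ (-(i * d)) tendsto_id

lemma tsum_kernel_eq_latticeTailConvolution (h : RenewalEquation q ξ k φ) {d : ℝ} {n : ι → ℕ}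
    (hn : ∀ a, ξ a = n a * d) (hd : 0 < d) (T : ℝ) :
    ∑' j : ℕ, k (T - j * d) = latticeTailConvolution q n d φ T := by
  obtain ⟨C, hC⟩ := h.kernel_decay
  have hsummable : Summable fun j : ℕ => k (T - j * d) :=
    ((summable_int_of_decay hC hd T).comp_injective (Nat.cast_injective (R := ℤ))).congr
      fun j => by simp
  have hpartial : ∀ N : ℕ, ∑ j ∈ Finset.range N, k (T - j * d) =
      latticeTailConvolution q n d φ T - latticeTailConvolution q n d φ (T - N * d) := by
    intro N
    have htelescope :=
      Finset.sum_range_sub' (fun i : ℕ => latticeTailConvolution q n d φ (T - i * d)) N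
    simp only [Nat.cast_zero, zero_mul, sub_zero] at htelescope
    rw [← htelescope]
    refine Finset.sum_congr rfl fun j _ => ?_
    rw [← h.latticeTailConvolution_sub hn]
    push_cast
    ring_nf
  have hshift : Tendsto (fun N : ℕ => T - N * d) atTop atBot := by
    simpa only [sub_eq_add_neg] using! tendsto_atBot_add_const_left _ T
      (tendsto_neg_atTop_atBot.comp (tendsto_natCast_atTop_atTop.atTop_mul_const hd))
  have hlim := tendsto_const_nhds (x := latticeTailConvolution q n d φ T) |>.sub
    ((h.tendsto_latticeTailConvolution_atBot d n).comp hshift)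
  rw [sub_zero] at hlim
  exact tendsto_nhds_unique hsummable.hasSum.tendsto_sum_nat (hlim.congr fun N => (hpartial N).symm)

lemma exists_nat_mul_eq_step (h : RenewalEquation q ξ k φ) {d : ℝ} (hd : 0 < d)
    (hlattice : AddSubgroup.closure (Set.range ξ) = AddSubgroup.zmultiples d) (a : ι) :
    ∃ n : ℕ, ξ a = n * d := by
  have hmem : ξ a ∈ AddSubgroup.zmultiples d :=
    hlattice ▸ AddSubgroup.subset_closure (Set.mem_range_self a)
  obtain ⟨m, hm⟩ := AddSubgroup.mem_zmultiples_iff.1 hmem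
  rw [zsmul_eq_mul] at hm
  have hm0 : 0 ≤ m := by
    have := pos_of_mul_pos_left (hm ▸ h.step_pos a) hd.le
    exact_mod_cast this.le
  lift m to ℕ using hm0
  exact ⟨m, by simpa using hm.symm⟩

/-- The lattice renewal theorem. -/
lemma tendsto_of_lattice (h : RenewalEquation q ξ k φ) {d : ℝ} (hd : 0 < d)
    (hlattice : AddSubgroup.closure (Set.range ξ) = AddSubgroup.zmultiples d) :
    Tendsto (fun T => φ T - d / meanStep q ξ * ∑' j : ℤ, k (T - j * d)) atTop (𝓝 0) := by
  obtain ⟨C, hC⟩ := h.kernel_decay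
  choose n hn using h.exists_nat_mul_eq_step hd hlattice
  have hper : d ∈ asymptoticPeriods φ :=
    h.closure_range_step_le (hlattice ▸ AddSubgroup.mem_zmultiples d)
  have hsplit : ∀ T, ∑' j : ℤ, k (T - j * d) =
      latticeTailConvolution q n d φ T + ∑' j : ℕ, k (T + (j + 1) * d) := by
    intro T
    have hs := summable_int_of_decay hC hd T
    rw [tsum_of_nat_of_neg_add_one (f := fun j : ℤ => k (T - j * d))
      (hs.comp_injective Nat.cast_injective)
      (hs.comp_injective fun i j hij => by simpa using hij),
      ← h.tsum_kernel_eq_latticeTailConvolution hn hd]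
    push_cast
    simp only [neg_mul, sub_neg_eq_add]
  have hlim := ((tendsto_latticeTailConvolution_sub q hn hd hper).add
    (tendsto_tsum_tail_of_decay hC hd h.tendsto_kernel_atTop)).const_mul (-(d / meanStep q ξ))
  rw [add_zero, mul_zero] at hlim
  refine hlim.congr fun T => ?_
  have := h.meanStep_pos.ne'
  rw [hsplit]
  field_simp
  ring

end RenewalEquation

/-! ### The Gamma integral in logarithmic scale -/

lemma norm_Gamma_le {s : ℂ} (hs : 0 < s.re) : ‖Complex.Gamma s‖ ≤ Real.Gamma s.re := by
  rw [Complex.Gamma_eq_integral hs, Real.Gamma_eq_integral hs, Complex.GammaIntegral]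
  refine (norm_integral_le_integral_norm _).trans (le_of_eq ?_)
  refine setIntegral_congr_fun measurableSet_Ioi fun x hx => ?_
  rw [norm_mul, Complex.norm_cpow_eq_rpow_re_of_pos hx, Complex.norm_real,
    Real.norm_of_nonneg (Real.exp_pos _).le, Complex.sub_re, Complex.one_re]

lemma sq_im_mul_norm_Gamma_le {s : ℂ} (hs : 0 < s.re) :
    s.im ^ 2 * ‖Complex.Gamma s‖ ≤ Real.Gamma (s.re + 2) := by
  have hs0 : s ≠ 0 := fun h => by simp [h] at hs
  have hs1 : s + 1 ≠ 0 := fun h => by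
    have := congrArg Complex.re h
    simp only [Complex.add_re, Complex.one_re, Complex.zero_re] at this
    linarith
  have hrec : Complex.Gamma (s + 2) = (s + 1) * (s * Complex.Gamma s) := by
    rw [← Complex.Gamma_add_one s hs0, ← Complex.Gamma_add_one (s + 1) hs1, add_assoc]
    norm_num
  calc s.im ^ 2 * ‖Complex.Gamma s‖ = |s.im| * (|s.im| * ‖Complex.Gamma s‖) := by
        rw [← sq_abs]
        ring
    _ ≤ ‖s + 1‖ * (‖s‖ * ‖Complex.Gamma s‖) := by
        gcongr
        · simpa using Complex.abs_im_le_norm (s + 1)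
        · exact Complex.abs_im_le_norm s
    _ = ‖Complex.Gamma (s + 2)‖ := by rw [hrec, norm_mul, norm_mul]
    _ ≤ Real.Gamma (s.re + 2) := by
        have hre : 0 < (s + 2).re := by
          rw [Complex.add_re, Complex.re_ofNat]
          linarith
        simpa using norm_Gamma_le hre

lemma summable_Gamma_vertical {c d : ℝ} (hc : 0 < c) (hd : d ≠ 0) :
    Summable fun n : ℤ => Complex.Gamma (c + (2 * Real.pi * n / d : ℝ) * Complex.I) := by
  refine Summable.of_norm_bounded_eventually
    ((Real.summable_one_div_int_pow.2 one_lt_two).mul_left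
      (Real.Gamma (c + 2) * (d / (2 * Real.pi)) ^ 2)) ?_
  filter_upwards [(Set.finite_singleton (0 : ℤ)).compl_mem_cofinite] with n hn
  have hn : (n : ℝ) ≠ 0 := Int.cast_ne_zero.2 hn
  have hbound := sq_im_mul_norm_Gamma_le
    (s := c + (2 * Real.pi * n / d : ℝ) * Complex.I) (by simpa using hc)
  simp only [Complex.add_re, Complex.add_im, Complex.ofReal_re, Complex.ofReal_im,
    Complex.re_ofReal_mul, Complex.im_ofReal_mul, Complex.I_re, Complex.I_im, mul_zero, mul_one,
    add_zero, zero_add] at hbound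
  calc ‖Complex.Gamma (c + (2 * Real.pi * n / d : ℝ) * Complex.I)‖
      ≤ Real.Gamma (c + 2) / (2 * Real.pi * n / d) ^ 2 := by
        rwa [le_div_iff₀' (by positivity)]
    _ = Real.Gamma (c + 2) * (d / (2 * Real.pi)) ^ 2 * (1 / (n : ℝ) ^ 2) := by
        field_simp

lemma exp_neg_mul_abs_le {m : ℝ} (hm : 0 < m) (t : ℝ) :
    Real.exp (-(m * |t|)) ≤ (1 + 2 / m ^ 2) * (1 + t ^ 2)⁻¹ := by
  have hexp := Real.quadratic_le_exp_of_nonneg (show 0 ≤ m * |t| by positivity)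
  have hnonneg : 0 ≤ m * |t| := by positivity
  have hsq : t ^ 2 ≤ 2 / m ^ 2 * Real.exp (m * |t|) := by
    rw [div_mul_eq_mul_div, le_div_iff₀ (by positivity), ← sq_abs]
    nlinarith
  rw [Real.exp_neg, ← div_eq_mul_inv, le_div_iff₀ (by positivity), inv_mul_le_iff₀ (by positivity)]
  nlinarith

/-- The integrand of Euler's integral for `Γ(c)` after the substitution `x = exp t`. -/
noncomputable def logGammaKernel (c t : ℝ) : ℝ := Real.exp (c * t - Real.exp t)

section LogGammaKernel

variable {c d : ℝ}

lemma logGammaKernel_pos (c t : ℝ) : 0 < logGammaKernel c t := Real.exp_pos _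

lemma continuous_logGammaKernel (c : ℝ) : Continuous (logGammaKernel c) := by
  unfold logGammaKernel
  fun_prop

lemma logGammaKernel_le (hc : 0 < c) (t : ℝ) : logGammaKernel c t ≤
    Real.exp ((c + 1) * Real.log (c + 1)) * Real.exp (-(min c 1 * |t|)) := by
  rw [logGammaKernel, ← Real.exp_add, Real.exp_le_exp]
  rcases le_total 0 t with ht | ht
  · have htangent : (c + 1) * (t - Real.log (c + 1) + 1) ≤ Real.exp t := by
      calc (c + 1) * (t - Real.log (c + 1) + 1)
          ≤ Real.exp (Real.log (c + 1)) * Real.exp (t - Real.log (c + 1)) := by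
            rw [Real.exp_log (by positivity)]
            gcongr
            exact Real.add_one_le_exp _
        _ = Real.exp t := by rw [← Real.exp_add, add_sub_cancel]
    rw [abs_of_nonneg ht]
    nlinarith [min_le_right c 1]
  · have hlog : 0 ≤ (c + 1) * Real.log (c + 1) :=
      mul_nonneg (by positivity) (Real.log_nonneg (by linarith))
    rw [abs_of_nonpos ht]
    nlinarith [min_le_left c 1, Real.exp_pos t]

lemma exists_logGammaKernel_le (hc : 0 < c) :
    ∃ C, 0 ≤ C ∧ ∀ t, |logGammaKernel c t| ≤ C * (1 + t ^ 2)⁻¹ := by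
  refine ⟨Real.exp ((c + 1) * Real.log (c + 1)) * (1 + 2 / min c 1 ^ 2), by positivity,
    fun t => ?_⟩
  rw [abs_of_pos (logGammaKernel_pos c t), mul_assoc]
  refine (logGammaKernel_le hc t).trans ?_
  gcongr
  exact exp_neg_mul_abs_le (lt_min hc one_pos) t

lemma integrable_logGammaKernel (hc : 0 < c) : Integrable (logGammaKernel c) := by
  obtain ⟨C, -, hC⟩ := exists_logGammaKernel_le hc
  exact (integrable_inv_one_add_sq.const_mul C).mono'
    (continuous_logGammaKernel c).aestronglyMeasurable (ae_of_all _ hC)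

open FourierTransform in
lemma fourier_logGammaKernel (hc : 0 < c) (hd : 0 < d) (x : ℝ) :
    𝓕 (fun y : ℝ => (logGammaKernel c (-(d * y)) : ℂ)) x =
      (d : ℂ)⁻¹ * Complex.Gamma (c + (2 * Real.pi * x / d : ℝ) * Complex.I) := by
  set s : ℂ := (d * c : ℝ) + (2 * Real.pi * x : ℝ) * Complex.I with hs
  have hre : s.re = d * c := by simp [hs]
  have him : s.im / (2 * Real.pi) = x := by
    simp only [hs, Complex.add_im, Complex.ofReal_im, Complex.im_ofReal_mul, Complex.I_im]
    field_simp
    ring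
  have hdiv : s / d = c + (2 * Real.pi * x / d : ℝ) * Complex.I := by
    have : (d : ℂ) ≠ 0 := Complex.ofReal_ne_zero.2 hd.ne'
    rw [hs]
    push_cast
    field_simp
  have hmellin := mellin_comp_rpow (fun x : ℝ => (Real.exp (-x) : ℂ)) s d
  rw [mellin_eq_fourier, him, ← Complex.GammaIntegral_eq_mellin, hdiv, abs_of_pos hd,
    ← Complex.Gamma_eq_integral (by simpa using hc), Complex.real_smul,
    Complex.ofReal_inv] at hmellin
  rw [← hmellin]
  refine congrArg (fun f : ℝ → ℂ => 𝓕 f x) (funext fun y => ?_)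
  rw [hre, ← Real.exp_mul, Complex.real_smul, ← Complex.ofReal_mul, ← Real.exp_add, logGammaKernel]
  ring_nf

lemma integral_logGammaKernel (hc : 0 < c) : ∫ t, logGammaKernel c t = Real.Gamma c := by
  have h := fourier_logGammaKernel hc one_pos 0
  rw [Real.fourier_real_eq_integral_exp_smul] at h
  simp only [one_mul, mul_zero, Complex.ofReal_zero, zero_mul, Complex.exp_zero, one_smul,
    Complex.ofReal_one, inv_one, zero_div, add_zero, Complex.Gamma_ofReal] at h
  rw [integral_complex_ofReal] at h
  rw [← Complex.ofReal_injective h, integral_neg_eq_self (logGammaKernel c)]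

lemma isBigO_logGammaKernel_comp (hc : 0 < c) (hd : 0 < d) :
    (fun y : ℝ => (logGammaKernel c (-(d * y)) : ℂ)) =O[cocompact ℝ]
      fun y : ℝ => |y| ^ (-2 : ℝ) := by
  obtain ⟨C, hC0, hC⟩ := exists_logGammaKernel_le hc
  refine Asymptotics.IsBigO.of_bound (C * (d ^ 2)⁻¹) ?_
  filter_upwards [(isCompact_singleton (x := (0 : ℝ))).compl_mem_cocompact] with y hy
  have hy : y ≠ 0 := hy
  rw [Complex.norm_real, Real.rpow_neg (abs_nonneg y), Real.rpow_two, sq_abs, norm_inv,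
    Real.norm_of_nonneg (sq_nonneg y), mul_assoc, ← mul_inv]
  refine (hC _).trans ?_
  gcongr
  nlinarith

/-- Poisson summation for the Gamma kernel. -/
lemma tsum_logGammaKernel_sub_mul (hc : 0 < c) (hd : 0 < d) (T : ℝ) :
    ((∑' n : ℤ, logGammaKernel c (T - n * d) : ℝ) : ℂ) = (d : ℂ)⁻¹ * ∑' n : ℤ,
      Complex.Gamma (c + (2 * Real.pi * n / d : ℝ) * Complex.I) *
        Complex.exp (-((2 * Real.pi * n / d : ℝ) * Complex.I * T)) := by
  have hcont : Continuous fun y : ℝ => (logGammaKernel c (-(d * y)) : ℂ) := by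
    have := continuous_logGammaKernel c
    fun_prop
  have hpoisson := Real.tsum_eq_tsum_fourier_of_rpow_decay_of_summable hcont one_lt_two
    (isBigO_logGammaKernel_comp hc hd)
    (by simpa only [fourier_logGammaKernel hc hd] using
      (summable_Gamma_vertical hc hd.ne').mul_left _) (-(T / d))
  simp only [fourier_logGammaKernel hc hd] at hpoisson
  rw [Complex.ofReal_tsum, ← tsum_mul_left]
  convert hpoisson using 1
  · refine tsum_congr fun n => ?_
    congr 2
    field_simp
    ring
  · refine tsum_congr fun n => ?_
    rw [fourier_coe_apply, ← mul_assoc]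
    congr 2
    push_cast
    have : (d : ℂ) ≠ 0 := Complex.ofReal_ne_zero.2 hd.ne'
    field_simp

end LogGammaKernel

/-! ### Multiplicative weights on words -/

/-- The weight of a word: the product of the weights `g` of its letters. For the letter weights
`g (m, a) = p a` it is the probability that the word occurs in a random labeling. -/
def wordWeight {α : Type*} (g : α → ℝ) (w : List α) : ℝ := (w.map g).prod

section WordWeight

variable {α : Type*} {g : α → ℝ}

@[simp] lemma wordWeight_nil (g : α → ℝ) : wordWeight g [] = 1 := rfl

@[simp] lemma wordWeight_cons (g : α → ℝ) (x : α) (w : List α) :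
    wordWeight g (x :: w) = g x * wordWeight g w := by
  simp [wordWeight]

@[simp] lemma wordWeight_append (g : α → ℝ) (u w : List α) :
    wordWeight g (u ++ w) = wordWeight g u * wordWeight g w := by
  simp [wordWeight]

lemma wordWeight_pos (hg : ∀ x, 0 < g x) (w : List α) : 0 < wordWeight g w := by
  induction w with
  | nil => simp
  | cons x w ih => rw [wordWeight_cons]; exact mul_pos (hg x) ih

lemma wordWeight_nonneg (hg : ∀ x, 0 ≤ g x) (w : List α) : 0 ≤ wordWeight g w :=
  List.prod_nonneg (by simpa using fun x _ => hg x)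

lemma wordWeight_le_one (hg : ∀ x, 0 ≤ g x) (hg1 : ∀ x, g x ≤ 1) (w : List α) :
    wordWeight g w ≤ 1 := by
  induction w with
  | nil => simp
  | cons x w ih =>
    rw [wordWeight_cons]
    exact mul_le_one₀ (hg1 x) (wordWeight_nonneg hg w) ih

lemma wordWeight_rpow (hg : ∀ x, 0 ≤ g x) (σ : ℝ) (w : List α) :
    wordWeight g w ^ σ = wordWeight (fun x => g x ^ σ) w := by
  induction w with
  | nil => simp
  | cons x w ih =>
    rw [wordWeight_cons, wordWeight_cons, Real.mul_rpow (hg x) (wordWeight_nonneg hg w), ih]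

lemma sum_wordWeight_ofFn [Fintype α] (g : α → ℝ) (n : ℕ) :
    ∑ f : Fin n → α, wordWeight g (List.ofFn f) = (∑ x, g x) ^ n := by
  rw [Finset.sum_pow']
  simp [wordWeight, List.prod_ofFn, List.map_ofFn]

lemma summable_wordWeight [Fintype α] (hg : ∀ x, 0 ≤ g x) (hsum : ∑ x, g x < 1) :
    Summable (wordWeight g) := by
  rw [← (List.equivSigmaTuple (α := α)).symm.summable_iff]
  refine (summable_sigma_of_nonneg fun s => wordWeight_nonneg hg _).2
    ⟨fun n => Summable.of_finite, ?_⟩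
  refine (summable_geometric_of_lt_one (Finset.sum_nonneg fun x _ => hg x) hsum).congr fun n => ?_
  rw [tsum_fintype]
  exact (sum_wordWeight_ofFn g n).symm

/-- A word is either empty or a letter followed by a word. -/
def listEquivUnitSumProd (α : Type*) : List α ≃ Unit ⊕ α × List α where
  toFun
    | [] => Sum.inl ()
    | x :: w => Sum.inr (x, w)
  invFun := Sum.elim (fun _ => []) fun v => v.1 :: v.2
  left_inv l := by cases l <;> rfl
  right_inv s := by rcases s with _ | ⟨x, w⟩ <;> rfl

lemma tsum_list [Fintype α] {f : List α → ℝ} (hf : Summable f) :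
    ∑' w, f w = f [] + ∑ x, ∑' w, f (x :: w) := by
  have hsum : Summable (f ∘ (listEquivUnitSumProd α).symm) :=
    (listEquivUnitSumProd α).symm.summable_iff.2 hf
  have hcons : Summable fun v : α × List α => f (v.1 :: v.2) :=
    hsum.comp_injective Sum.inr_injective
  rw [← (listEquivUnitSumProd α).symm.tsum_eq f]
  refine (Summable.tsum_sum (hsum.comp_injective Sum.inl_injective) hcons).trans ?_
  simp only [tsum_fintype, Finset.univ_unique, Finset.sum_singleton]
  exact congrArg _ (hcons.tsum_prod.trans (tsum_fintype _))

lemma tsum_wordWeight [Fintype α] (hg : ∀ x, 0 ≤ g x) (hsum : ∑ x, g x < 1) :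
    ∑' w, wordWeight g w = (1 - ∑ x, g x)⁻¹ := by
  have hrec := tsum_list (summable_wordWeight hg hsum)
  simp only [wordWeight_nil, wordWeight_cons, tsum_mul_left, ← Finset.sum_mul] at hrec
  refine eq_inv_of_mul_eq_one_left ?_
  linear_combination hrec

end WordWeight

/-- Letter weights in `(0, 1)` with exponent `ρ ∈ (1, 2)` solving `∑ x, g x ^ ρ = 1`. -/
structure MalthusianWeights {α : Type*} [Fintype α] (g : α → ℝ) (ρ : ℝ) : Prop where
  pos : ∀ x, 0 < g x
  lt_one : ∀ x, g x < 1
  sum_rpow : ∑ x, g x ^ ρ = 1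
  one_lt : 1 < ρ
  lt_two : ρ < 2

/-! ### The harmonic sum -/

/-- The contribution of the word `w` to the harmonic sum `harmonicSum g x`. -/
noncomputable def harmonicTerm {α : Type*} (g : α → ℝ) (x : ℝ) (w : List α) : ℝ :=
  wordWeight g w ^ 2 * Real.exp (-(x * wordWeight g w))

/-- The harmonic sum `Λ(x) = ∑_w g(w)² exp(-x g(w))` over all words `w`. -/
noncomputable def harmonicSum {α : Type*} (g : α → ℝ) (x : ℝ) : ℝ := ∑' w, harmonicTerm g x w

lemma harmonicTerm_nonneg {α : Type*} (g : α → ℝ) (x : ℝ) (w : List α) : 0 ≤ harmonicTerm g x w :=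
  mul_nonneg (sq_nonneg _) (Real.exp_pos _).le

lemma harmonicTerm_cons {α : Type*} (g : α → ℝ) (x : ℝ) (a : α) (w : List α) :
    harmonicTerm g x (a :: w) = g a ^ 2 * harmonicTerm g (g a * x) w := by
  rw [harmonicTerm, harmonicTerm, wordWeight_cons]
  ring_nf

lemma harmonicSum_nonneg {α : Type*} (g : α → ℝ) (x : ℝ) : 0 ≤ harmonicSum g x :=
  tsum_nonneg (harmonicTerm_nonneg g x)

lemma le_exp_half (z : ℝ) : z ≤ Real.exp (z / 2) := by
  rcases le_total z 0 with hz | hz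
  · exact hz.trans (Real.exp_pos _).le
  · nlinarith [Real.quadratic_le_exp_of_nonneg (by linarith : 0 ≤ z / 2), sq_nonneg (z - 2)]

namespace MalthusianWeights

variable {α : Type*} [Fintype α] {g : α → ℝ} {ρ : ℝ}

lemma nonempty (h : MalthusianWeights g ρ) : Nonempty α := by
  by_contra hα
  rw [not_nonempty_iff] at hα
  simpa using h.sum_rpow

lemma sum_rpow_lt_one (h : MalthusianWeights g ρ) {σ : ℝ} (hσ : ρ < σ) : ∑ x, g x ^ σ < 1 := by
  have := h.nonempty
  rw [← h.sum_rpow]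
  exact Finset.sum_lt_sum_of_nonempty Finset.univ_nonempty fun x _ =>
    Real.rpow_lt_rpow_of_exponent_gt (h.pos x) (h.lt_one x) hσ

lemma weight_pos (h : MalthusianWeights g ρ) (w : List α) : 0 < wordWeight g w :=
  wordWeight_pos h.pos w

lemma summable_rpow (h : MalthusianWeights g ρ) {σ : ℝ} (hσ : ρ < σ) :
    Summable fun w => wordWeight g w ^ σ := by
  simp only [wordWeight_rpow fun x => (h.pos x).le]
  exact summable_wordWeight (fun x => (Real.rpow_pos_of_pos (h.pos x) _).le) (h.sum_rpow_lt_one hσ)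

lemma tsum_rpow (h : MalthusianWeights g ρ) {σ : ℝ} (hσ : ρ < σ) :
    ∑' w, wordWeight g w ^ σ = (1 - ∑ x, g x ^ σ)⁻¹ := by
  simp only [wordWeight_rpow fun x => (h.pos x).le]
  exact tsum_wordWeight (fun x => (Real.rpow_pos_of_pos (h.pos x) _).le) (h.sum_rpow_lt_one hσ)

lemma summable_sq (h : MalthusianWeights g ρ) : Summable fun w => wordWeight g w ^ 2 := by
  simpa using h.summable_rpow h.lt_two

lemma harmonicTerm_le_sq (h : MalthusianWeights g ρ) {x : ℝ} (hx : 0 ≤ x) (w : List α) :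
    harmonicTerm g x w ≤ wordWeight g w ^ 2 :=
  mul_le_of_le_one_right (sq_nonneg _)
    (Real.exp_le_one_iff.2 (neg_nonpos.2 (mul_nonneg hx (h.weight_pos w).le)))

lemma summable_harmonicTerm (h : MalthusianWeights g ρ) {x : ℝ} (hx : 0 ≤ x) :
    Summable (harmonicTerm g x) :=
  .of_nonneg_of_le (harmonicTerm_nonneg g x) (h.harmonicTerm_le_sq hx) h.summable_sq

lemma harmonicSum_anti (h : MalthusianWeights g ρ) {x y : ℝ} (hx : 0 ≤ x) (hxy : x ≤ y) :
    harmonicSum g y ≤ harmonicSum g x := by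
  refine (h.summable_harmonicTerm (hx.trans hxy)).tsum_le_tsum (fun w => ?_)
    (h.summable_harmonicTerm hx)
  have := h.weight_pos w
  unfold harmonicTerm
  gcongr

lemma hasSum_harmonicTerm_cons (h : MalthusianWeights g ρ) {x : ℝ} (hx : 0 ≤ x) (a : α) :
    HasSum (fun w => harmonicTerm g x (a :: w)) (g a ^ 2 * harmonicSum g (g a * x)) := by
  simp only [harmonicTerm_cons]
  exact (h.summable_harmonicTerm (mul_nonneg (h.pos a).le hx)).hasSum.mul_left _

lemma harmonicSum_eq_exp_add (h : MalthusianWeights g ρ) {x : ℝ} (hx : 0 ≤ x) :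
    harmonicSum g x = Real.exp (-x) + ∑ a, g a ^ 2 * harmonicSum g (g a * x) := by
  rw [harmonicSum, tsum_list (h.summable_harmonicTerm hx)]
  simp only [(h.hasSum_harmonicTerm_cons hx _).tsum_eq]
  simp [harmonicTerm]

lemma exp_neg_le_harmonicSum (h : MalthusianWeights g ρ) {x : ℝ} (hx : 0 ≤ x) :
    Real.exp (-x) ≤ harmonicSum g x := by
  rw [h.harmonicSum_eq_exp_add hx]
  exact le_add_of_nonneg_right
    (Finset.sum_nonneg fun a _ => mul_nonneg (sq_nonneg _) (harmonicSum_nonneg g _))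

lemma continuousOn_harmonicSum (h : MalthusianWeights g ρ) :
    ContinuousOn (harmonicSum g) (Set.Ici 0) := by
  refine continuousOn_tsum (fun w => by unfold harmonicTerm; fun_prop) h.summable_sq
    fun w x hx => ?_
  rw [Real.norm_of_nonneg (harmonicTerm_nonneg g x w)]
  exact h.harmonicTerm_le_sq hx w

/-- The loss of a factor two in the argument absorbs the factor `g(w)` of the derivative. -/
lemma harmonicSum_sub_le (h : MalthusianWeights g ρ) {x y : ℝ} (hy : 0 < y) (hyx : y ≤ x) :
    harmonicSum g y - harmonicSum g x ≤ (x - y) / y * harmonicSum g (y / 2) := by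
  have hsy := h.summable_harmonicTerm hy.le
  have hsx := h.summable_harmonicTerm (hy.le.trans hyx)
  unfold harmonicSum
  rw [← hsy.tsum_sub hsx, ← tsum_mul_left]
  refine (hsy.sub hsx).tsum_le_tsum (fun w => ?_)
    ((h.summable_harmonicTerm (half_pos hy).le).mul_left _)
  set z := wordWeight g w
  have hincr : Real.exp (-(y * z)) * (1 - (x - y) * z) ≤ Real.exp (-(x * z)) := by
    rw [show -(x * z) = -(y * z) + -((x - y) * z) by ring, Real.exp_add]
    gcongr
    exact Real.one_sub_le_exp_neg _
  have habsorb : y * z * Real.exp (-(y * z)) ≤ Real.exp (-(y / 2 * z)) :=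
    calc _ ≤ Real.exp (y * z / 2) * Real.exp (-(y * z)) := by gcongr; exact le_exp_half _
      _ = _ := by rw [← Real.exp_add]; ring_nf
  calc z ^ 2 * Real.exp (-(y * z)) - z ^ 2 * Real.exp (-(x * z))
      = z ^ 2 * (Real.exp (-(y * z)) - Real.exp (-(x * z))) := by ring
    _ ≤ z ^ 2 * ((x - y) / y * (y * z * Real.exp (-(y * z)))) := by
        gcongr
        rw [show (x - y) / y * (y * z * Real.exp (-(y * z))) = (x - y) * z * Real.exp (-(y * z)) by
          field_simp]
        linarith
    _ ≤ z ^ 2 * ((x - y) / y * Real.exp (-(y / 2 * z))) := by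
        have : 0 ≤ (x - y) / y := div_nonneg (sub_nonneg.2 hyx) hy.le
        gcongr
    _ = (x - y) / y * harmonicTerm g (y / 2) w := by rw [harmonicTerm]; ring

end MalthusianWeights

/-- The harmonic sum in logarithmic scale, normalized to be bounded: `x ^ (2 - ρ) * Λ(x)` at
`x = exp t`. -/
noncomputable def logHarmonicSum {α : Type*} (g : α → ℝ) (ρ t : ℝ) : ℝ :=
  Real.exp ((2 - ρ) * t) * harmonicSum g (Real.exp t)

lemma logHarmonicSum_nonneg {α : Type*} (g : α → ℝ) (ρ t : ℝ) : 0 ≤ logHarmonicSum g ρ t :=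
  mul_nonneg (Real.exp_pos _).le (harmonicSum_nonneg g _)

lemma logHarmonicSum_log {α : Type*} (g : α → ℝ) (ρ : ℝ) {x : ℝ} (hx : 0 < x) :
    logHarmonicSum g ρ (Real.log x) = x ^ (2 - ρ) * harmonicSum g x := by
  rw [logHarmonicSum, Real.exp_log hx, Real.rpow_def_of_pos hx, mul_comm (2 - ρ)]

namespace MalthusianWeights

variable {α : Type*} [Fintype α] {g : α → ℝ} {ρ : ℝ}

lemma rpow_pos (h : MalthusianWeights g ρ) (a : α) : 0 < g a ^ ρ :=
  Real.rpow_pos_of_pos (h.pos a) ρ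

lemma neg_log_pos (h : MalthusianWeights g ρ) (a : α) : 0 < -Real.log (g a) :=
  neg_pos.2 (Real.log_neg (h.pos a) (h.lt_one a))

lemma continuous_logHarmonicSum (h : MalthusianWeights g ρ) : Continuous (logHarmonicSum g ρ) :=
  (by fun_prop : Continuous fun t : ℝ => Real.exp ((2 - ρ) * t)).mul
    (h.continuousOn_harmonicSum.comp_continuous Real.continuous_exp fun t => (Real.exp_pos t).le)

lemma logHarmonicSum_eq_kernel_add (h : MalthusianWeights g ρ) (t : ℝ) :
    logHarmonicSum g ρ t =
      logGammaKernel (2 - ρ) t + ∑ a, g a ^ ρ * logHarmonicSum g ρ (t - -Real.log (g a)) := by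
  unfold logHarmonicSum logGammaKernel
  rw [h.harmonicSum_eq_exp_add (Real.exp_pos t).le, mul_add, sub_eq_add_neg ((2 - ρ) * t),
    Real.exp_add, Finset.mul_sum]
  refine congrArg _ (Finset.sum_congr rfl fun a _ => ?_)
  have harg : Real.exp (t - -Real.log (g a)) = g a * Real.exp t := by
    rw [sub_neg_eq_add, Real.exp_add, Real.exp_log (h.pos a), mul_comm]
  have hweight : g a ^ ρ * Real.exp ((2 - ρ) * (t - -Real.log (g a))) =
      Real.exp ((2 - ρ) * t) * g a ^ 2 := by
    rw [← Real.rpow_two, Real.rpow_def_of_pos (h.pos a), Real.rpow_def_of_pos (h.pos a),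
      ← Real.exp_add, ← Real.exp_add]
    ring_nf
  rw [harg, ← mul_assoc, ← mul_assoc, hweight]

lemma exp_neg_mul_logHarmonicSum_le (h : MalthusianWeights g ρ) (t : ℝ) {s : ℝ} (hs : 0 ≤ s) :
    Real.exp (-((2 - ρ) * s)) * logHarmonicSum g ρ t ≤ logHarmonicSum g ρ (t - s) := by
  unfold logHarmonicSum
  rw [← mul_assoc, ← Real.exp_add, show -((2 - ρ) * s) + (2 - ρ) * t = (2 - ρ) * (t - s) by ring]
  gcongr
  exact h.harmonicSum_anti (Real.exp_pos _).le (Real.exp_le_exp.2 (by linarith))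

lemma tendsto_logHarmonicSum_atBot (h : MalthusianWeights g ρ) :
    Tendsto (logHarmonicSum g ρ) atBot (𝓝 0) := by
  have hexp : Tendsto (fun t : ℝ => Real.exp ((2 - ρ) * t) * harmonicSum g 0) atBot (𝓝 0) := by
    simpa using (Real.tendsto_exp_atBot.comp
      (tendsto_id.const_mul_atBot (by linarith [h.lt_two] : 0 < 2 - ρ))).mul_const (harmonicSum g 0)
  refine squeeze_zero (logHarmonicSum_nonneg g ρ) (fun t => ?_) hexp
  unfold logHarmonicSum
  gcongr
  exact h.harmonicSum_anti le_rfl (Real.exp_pos _).le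

lemma exists_logHarmonicSum_le (h : MalthusianWeights g ρ) :
    ∃ C, ∀ t, logHarmonicSum g ρ t ≤ C := by
  have hc : 0 < 2 - ρ := by linarith [h.lt_two]
  refine exists_forall_le_of_exp_mul_le (q := fun a => g a ^ ρ) (ξ := fun a => -Real.log (g a))
    h.continuous_logHarmonicSum hc.le h.rpow_pos h.sum_rpow h.neg_log_pos
    (logHarmonicSum_nonneg g ρ) (fun t s hs => h.exp_neg_mul_logHarmonicSum_le t hs)
    h.tendsto_logHarmonicSum_atBot (integrable_logGammaKernel hc)
    (fun t => (logGammaKernel_pos _ t).le) fun t => ?_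
  simp only [mul_sub, Finset.sum_sub_distrib, ← Finset.sum_mul, h.sum_rpow, one_mul]
  linarith [h.logHarmonicSum_eq_kernel_add t]

lemma exp_mul_harmonicSum_half_le (h : MalthusianWeights g ρ) (t : ℝ) :
    Real.exp ((2 - ρ) * t) * harmonicSum g (Real.exp t / 2) ≤
      2 * logHarmonicSum g ρ (t - Real.log 2) := by
  have hlog2 := Real.log_pos one_lt_two
  have hfactor : Real.exp ((2 - ρ) * t) ≤ 2 * Real.exp ((2 - ρ) * (t - Real.log 2)) := by
    calc Real.exp ((2 - ρ) * t) ≤ Real.exp (Real.log 2 + (2 - ρ) * (t - Real.log 2)) :=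
          Real.exp_le_exp.2 (by nlinarith [h.one_lt])
      _ = _ := by rw [Real.exp_add, Real.exp_log two_pos]
  rw [logHarmonicSum, Real.exp_sub, Real.exp_log two_pos, ← mul_assoc]
  exact mul_le_mul_of_nonneg_right hfactor (harmonicSum_nonneg g _)

lemma logHarmonicSum_sub_sub_self_le (h : MalthusianWeights g ρ) (t : ℝ) {s : ℝ} (hs : 0 ≤ s) :
    logHarmonicSum g ρ (t - s) - logHarmonicSum g ρ t ≤
      2 * logHarmonicSum g ρ (t - s - Real.log 2) * (Real.exp s - 1) := by
  have hdiff := h.harmonicSum_sub_le (Real.exp_pos (t - s)) (Real.exp_le_exp.2 (sub_le_self t hs))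
  rw [sub_div, div_self (Real.exp_pos _).ne', ← Real.exp_sub, sub_sub_cancel] at hdiff
  calc logHarmonicSum g ρ (t - s) - logHarmonicSum g ρ t
      ≤ Real.exp ((2 - ρ) * (t - s)) *
          (harmonicSum g (Real.exp (t - s)) - harmonicSum g (Real.exp t)) := by
        rw [mul_sub]
        refine sub_le_sub_left (mul_le_mul_of_nonneg_right (Real.exp_le_exp.2 ?_)
          (harmonicSum_nonneg g _)) _
        nlinarith [h.lt_two]
    _ ≤ Real.exp ((2 - ρ) * (t - s)) *
          ((Real.exp s - 1) * harmonicSum g (Real.exp (t - s) / 2)) := by gcongr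
    _ = Real.exp ((2 - ρ) * (t - s)) * harmonicSum g (Real.exp (t - s) / 2) *
          (Real.exp s - 1) := by ring
    _ ≤ _ := mul_le_mul_of_nonneg_right (h.exp_mul_harmonicSum_half_le _)
        (by linarith [Real.one_le_exp hs])

lemma abs_logHarmonicSum_sub_le (h : MalthusianWeights g ρ) {C : ℝ}
    (hC : ∀ t, logHarmonicSum g ρ t ≤ C) (t : ℝ) {s : ℝ} (hs : 0 ≤ s) :
    |logHarmonicSum g ρ t - logHarmonicSum g ρ (t - s)| ≤ 2 * C * (Real.exp s - 1) := by
  have hexp : 0 ≤ Real.exp s - 1 := by linarith [Real.one_le_exp hs]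
  have hnonneg := logHarmonicSum_nonneg g ρ t
  refine abs_le.2 ⟨?_, ?_⟩
  · have := h.logHarmonicSum_sub_sub_self_le t hs
    have := mul_le_mul_of_nonneg_right (hC (t - s - Real.log 2)) hexp
    linarith
  · have hslow := h.exp_neg_mul_logHarmonicSum_le t hs
    have hlin : 1 - Real.exp (-((2 - ρ) * s)) ≤ Real.exp s - 1 := by
      nlinarith [Real.one_sub_le_exp_neg ((2 - ρ) * s), Real.add_one_le_exp s, h.one_lt]
    have := mul_le_mul_of_nonneg_left hlin hnonneg
    have := mul_le_mul_of_nonneg_right (hC t) hexp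
    nlinarith

lemma uniformContinuous_logHarmonicSum (h : MalthusianWeights g ρ) :
    UniformContinuous (logHarmonicSum g ρ) := by
  obtain ⟨C, hC⟩ := h.exists_logHarmonicSum_le
  refine (Metric.uniformEquicontinuous_of_continuity_modulus
    (fun s => 2 * C * (Real.exp s - 1)) ?_ (fun _ : Unit => logHarmonicSum g ρ)
    fun s t _ => ?_).uniformContinuous ()
  · simpa using (by fun_prop : Continuous fun s : ℝ => 2 * C * (Real.exp s - 1)).tendsto 0
  · wlog hst : s ≤ t generalizing s t
    · rw [dist_comm, dist_comm s]
      exact this t s (le_of_not_ge hst)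
    · rw [dist_comm, dist_comm s, Real.dist_eq, Real.dist_eq, abs_of_nonneg (sub_nonneg.2 hst)]
      simpa using h.abs_logHarmonicSum_sub_le hC t (sub_nonneg.2 hst)

lemma renewalEquation (h : MalthusianWeights g ρ) :
    RenewalEquation (fun a => g a ^ ρ) (fun a => -Real.log (g a)) (logGammaKernel (2 - ρ))
      (logHarmonicSum g ρ) where
  weight_pos := h.rpow_pos
  sum_weight := h.sum_rpow
  step_pos := h.neg_log_pos
  kernel_decay :=
    let ⟨C, _, hC⟩ := exists_logGammaKernel_le (by linarith [h.lt_two] : 0 < 2 - ρ)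
    ⟨C, hC⟩
  bounded :=
    let ⟨C, hC⟩ := h.exists_logHarmonicSum_le
    ⟨C, fun t => (abs_of_nonneg (logHarmonicSum_nonneg g ρ t)).trans_le (hC t)⟩
  uniformContinuous := h.uniformContinuous_logHarmonicSum
  tendsto_atBot := h.tendsto_logHarmonicSum_atBot
  renewal := h.logHarmonicSum_eq_kernel_add

lemma logGammaKernel_le_logHarmonicSum (h : MalthusianWeights g ρ) (t : ℝ) :
    logGammaKernel (2 - ρ) t ≤ logHarmonicSum g ρ t := by
  rw [logGammaKernel, sub_eq_add_neg, Real.exp_add]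
  exact mul_le_mul_of_nonneg_left (h.exp_neg_le_harmonicSum (Real.exp_pos t).le) (Real.exp_pos _).le

/-- Interpolates between the bounds `harmonicSum g 0` and `C * x ^ (ρ - 2)`. -/
lemma exists_harmonicSum_le_rpow (h : MalthusianWeights g ρ) {τ : ℝ} (hτ0 : 0 ≤ τ)
    (hτ : τ ≤ 2 - ρ) : ∃ C, ∀ x, 0 < x → harmonicSum g x ≤ C * x ^ (-τ) := by
  obtain ⟨C, hC⟩ := h.exists_logHarmonicSum_le
  refine ⟨max C (harmonicSum g 0), fun x hx => ?_⟩
  have hpow : x ^ τ * harmonicSum g x ≤ max C (harmonicSum g 0) := by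
    rcases le_total x 1 with hx1 | hx1
    · calc _ ≤ 1 * harmonicSum g x :=
            mul_le_mul_of_nonneg_right (Real.rpow_le_one hx.le hx1 hτ0) (harmonicSum_nonneg g x)
        _ ≤ _ := by rw [one_mul]; exact (h.harmonicSum_anti le_rfl hx.le).trans (le_max_right _ _)
    · calc _ ≤ x ^ (2 - ρ) * harmonicSum g x :=
            mul_le_mul_of_nonneg_right (Real.rpow_le_rpow_of_exponent_le hx1 hτ)
              (harmonicSum_nonneg g x)
        _ ≤ _ := by rw [← logHarmonicSum_log g ρ hx]; exact (hC _).trans (le_max_left _ _)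
  rw [Real.rpow_neg hx.le, ← div_eq_mul_inv, le_div_iff₀ (Real.rpow_pos_of_pos hx τ), mul_comm]
  exact hpow

end MalthusianWeights

/-! ### Roots on the critical line -/

/-- The roots of `∑ x, g x ^ s = 1` on the line `re s = ρ`. -/
def criticalRoots {α : Type*} [Fintype α] (g : α → ℝ) (ρ : ℝ) : Set ℂ :=
  {s | ∑ x, (g x : ℂ) ^ s = 1 ∧ s.re = ρ}

/-- The periods of the cosine of frequency `θ`. -/
noncomputable def cosPeriods (θ : ℝ) : AddSubgroup ℝ :=
  (AddSubgroup.zmultiples (2 * Real.pi)).comap (AddMonoidHom.mulLeft θ)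

lemma mem_cosPeriods_iff {θ x : ℝ} : x ∈ cosPeriods θ ↔ ∃ n : ℤ, n * (2 * Real.pi) = θ * x := by
  simp [cosPeriods, AddSubgroup.mem_zmultiples_iff]

lemma mem_cosPeriods_iff_cos {θ x : ℝ} : x ∈ cosPeriods θ ↔ Real.cos (θ * x) = 1 := by
  rw [mem_cosPeriods_iff, Real.cos_eq_one_iff]

lemma isClosed_cosPeriods (θ : ℝ) : IsClosed (cosPeriods θ : Set ℝ) := by
  have : (cosPeriods θ : Set ℝ) = {x | Real.cos (θ * x) = 1} :=
    Set.ext fun x => mem_cosPeriods_iff_cos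
  rw [this]
  exact isClosed_eq (by fun_prop) continuous_const

lemma eq_zero_of_forall_mem_cosPeriods {θ : ℝ} (h : ∀ x, x ∈ cosPeriods θ) : θ = 0 := by
  by_contra hθ
  have := mem_cosPeriods_iff_cos.1 (h (Real.pi / θ))
  rw [mul_div_cancel₀ _ hθ, Real.cos_pi] at this
  norm_num at this

lemma ofReal_cpow_eq_mul_exp {x : ℝ} (hx : 0 < x) (s : ℂ) :
    (x : ℂ) ^ s = (x ^ s.re : ℝ) * Complex.exp ((-(s.im * -Real.log x) : ℝ) * Complex.I) := by
  rw [Complex.cpow_def_of_ne_zero (by exact_mod_cast hx.ne'), Real.rpow_def_of_pos hx,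
    Complex.ofReal_exp, ← Complex.exp_add, ← Complex.ofReal_log hx.le]
  congr 1
  nth_rewrite 1 [← Complex.re_add_im s]
  push_cast
  ring

lemma ofReal_cpow_re {x : ℝ} (hx : 0 < x) (s : ℂ) :
    ((x : ℂ) ^ s).re = x ^ s.re * Real.cos (s.im * -Real.log x) := by
  rw [ofReal_cpow_eq_mul_exp hx, Complex.re_ofReal_mul, Complex.exp_ofReal_mul_I_re, Real.cos_neg]

lemma ofReal_cpow_of_mem_cosPeriods {x : ℝ} (hx : 0 < x) {s : ℂ}
    (hs : -Real.log x ∈ cosPeriods s.im) : (x : ℂ) ^ s = (x ^ s.re : ℝ) := by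
  obtain ⟨n, hn⟩ := mem_cosPeriods_iff.1 (neg_mem hs)
  rw [ofReal_cpow_eq_mul_exp hx, Complex.exp_eq_one_iff.2 ⟨n, ?_⟩, mul_one]
  rw [← mul_neg, ← hn]
  push_cast
  ring

namespace MalthusianWeights

variable {α : Type*} [Fintype α] {g : α → ℝ} {ρ : ℝ}

/-- Equality in `re ∑ g ^ s ≤ ∑ g ^ ρ = 1` forces every phase to vanish. -/
lemma neg_log_mem_cosPeriods (h : MalthusianWeights g ρ) {s : ℂ} (hs : s ∈ criticalRoots g ρ)
    (a : α) : -Real.log (g a) ∈ cosPeriods s.im := by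
  obtain ⟨hroot, rfl⟩ := hs
  have hre := congrArg Complex.re hroot
  simp only [Complex.re_sum, ofReal_cpow_re (h.pos _), Complex.one_re] at hre
  have hsum : ∑ x, g x ^ s.re * (1 - Real.cos (s.im * -Real.log (g x))) = 0 := by
    simp only [mul_sub, mul_one, Finset.sum_sub_distrib, hre, h.sum_rpow, sub_self]
  rw [Finset.sum_eq_zero_iff_of_nonneg fun x _ =>
    mul_nonneg (h.rpow_pos x).le (sub_nonneg.2 (Real.cos_le_one _))] at hsum
  have := (mul_eq_zero.1 (hsum a (Finset.mem_univ a))).resolve_left (h.rpow_pos a).ne'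
  exact mem_cosPeriods_iff_cos.2 (by linarith)

lemma mem_criticalRoots_iff (h : MalthusianWeights g ρ) {s : ℂ} :
    s ∈ criticalRoots g ρ ↔
      s.re = ρ ∧ AddSubgroup.closure (Set.range fun a => -Real.log (g a)) ≤ cosPeriods s.im := by
  rw [AddSubgroup.closure_le, Set.range_subset_iff]
  refine ⟨fun hs => ⟨hs.2, h.neg_log_mem_cosPeriods hs⟩, fun ⟨hre, hs⟩ => ⟨?_, hre⟩⟩
  simp only [ofReal_cpow_of_mem_cosPeriods (h.pos _) (hs _), hre, ← Complex.ofReal_sum, h.sum_rpow,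
    Complex.ofReal_one]

lemma sum_cpow_mul_log (h : MalthusianWeights g ρ) {s : ℂ} (hs : s ∈ criticalRoots g ρ) :
    ∑ a, (g a : ℂ) ^ s * (Real.log (g a) : ℂ) =
      -(meanStep (fun a => g a ^ ρ) (fun a => -Real.log (g a)) : ℂ) := by
  simp only [ofReal_cpow_of_mem_cosPeriods (h.pos _) (h.neg_log_mem_cosPeriods hs _), hs.2,
    meanStep, mul_neg, Finset.sum_neg_distrib]
  push_cast
  ring

lemma criticalRoots_eq_singleton (h : MalthusianWeights g ρ)
    (hdense : Dense (AddSubgroup.closure (Set.range fun a => -Real.log (g a)) : Set ℝ)) :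
    criticalRoots g ρ = {(ρ : ℂ)} := by
  ext s
  rw [h.mem_criticalRoots_iff, Set.mem_singleton_iff]
  refine ⟨fun ⟨hre, hle⟩ => ?_, fun hs => ?_⟩
  · refine Complex.ext (by simpa using hre) ?_
    simpa using eq_zero_of_forall_mem_cosPeriods fun x =>
      closure_minimal hle (isClosed_cosPeriods s.im) (hdense x)
  · exact ⟨by simp [hs], fun x _ => by simp [hs, mem_cosPeriods_iff_cos]⟩

lemma criticalRoots_eq_range (h : MalthusianWeights g ρ) {d : ℝ} (hd : d ≠ 0)
    (hlattice : AddSubgroup.closure (Set.range fun a => -Real.log (g a)) =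
      AddSubgroup.zmultiples d) :
    criticalRoots g ρ = Set.range fun n : ℤ => (ρ : ℂ) - (2 * Real.pi * n / d : ℝ) * Complex.I := by
  have him (x : ℝ) : ((ρ : ℂ) - x * Complex.I).im = -x := by simp
  ext s
  rw [h.mem_criticalRoots_iff, hlattice, AddSubgroup.zmultiples_le, mem_cosPeriods_iff,
    Set.mem_range]
  constructor
  · rintro ⟨hre, n, hn⟩
    refine ⟨-n, Complex.ext (by simp [hre]) ?_⟩
    rw [him, (eq_div_iff hd).2 hn.symm]
    push_cast
    ring
  · rintro ⟨n, rfl⟩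
    refine ⟨by simp, -n, ?_⟩
    rw [him]
    push_cast
    field_simp

lemma tsum_criticalRoots_of_lattice (h : MalthusianWeights g ρ) {d : ℝ} (hd : 0 < d)
    (hlattice : AddSubgroup.closure (Set.range fun a => -Real.log (g a)) =
      AddSubgroup.zmultiples d) (T : ℝ) :
    ∑' β : criticalRoots g ρ, Complex.Gamma (2 - β) * Complex.exp (T * (β - ρ)) =
      ((d * ∑' n : ℤ, logGammaKernel (2 - ρ) (T - n * d) : ℝ) : ℂ) := by
  have hinj : Function.Injective
      fun n : ℤ => (ρ : ℂ) - (2 * Real.pi * n / d : ℝ) * Complex.I := by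
    intro m n hmn
    have him := congrArg Complex.im hmn
    simpa [div_left_inj' hd.ne', Real.pi_ne_zero] using him
  rw [h.criticalRoots_eq_range hd.ne' hlattice,
    tsum_range (fun β : ℂ => Complex.Gamma (2 - β) * Complex.exp (T * (β - ρ))) hinj,
    Complex.ofReal_mul, tsum_logGammaKernel_sub_mul (by linarith [h.lt_two]) hd,
    mul_inv_cancel_left₀ (by exact_mod_cast hd.ne')]
  refine tsum_congr fun n => ?_
  congr 2 <;> push_cast <;> ring

/-- The renewal theorem in the two possible cases, the lattice one rewritten by Poisson
summation. -/
theorem tendsto_logHarmonicSum_sub_tsum_criticalRoots (h : MalthusianWeights g ρ) :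
    Tendsto (fun T : ℝ => (logHarmonicSum g ρ T : ℂ) -
      (∑' β : criticalRoots g ρ, Complex.Gamma (2 - β) * Complex.exp (T * (β - ρ))) /
        meanStep (fun a => g a ^ ρ) (fun a => -Real.log (g a))) atTop (𝓝 0) := by
  rcases AddSubgroup.dense_or_cyclic
    (AddSubgroup.closure (Set.range fun a => -Real.log (g a))) with hdense | ⟨d, hd⟩
  · have hlim := (Complex.continuous_ofReal.tendsto _).comp
      (h.renewalEquation.tendsto_of_dense hdense)
    rw [integral_logGammaKernel (by linarith [h.lt_two])] at hlim
    rw [h.criticalRoots_eq_singleton hdense]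
    simpa [tsum_singleton (ρ : ℂ) fun β : ℂ => Complex.Gamma (2 - β) * Complex.exp (_ * (β - ρ)),
      ← Complex.Gamma_ofReal] using hlim.sub_const (Real.Gamma (2 - ρ) /
        meanStep (fun a => g a ^ ρ) (fun a => -Real.log (g a)) : ℂ)
  · have hlattice : AddSubgroup.closure (Set.range fun a => -Real.log (g a)) =
        AddSubgroup.zmultiples |d| := by
      rw [hd, ← AddSubgroup.zmultiples_eq_closure]
      rcases abs_choice d with habs | habs <;> simp [habs]
    have hd0 : 0 < |d| := by
      obtain ⟨a⟩ := h.nonempty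
      refine abs_pos.2 fun hd0 => (h.neg_log_pos a).ne' ?_
      have hmem : -Real.log (g a) ∈ AddSubgroup.zmultiples |d| :=
        hlattice ▸ AddSubgroup.subset_closure (Set.mem_range_self a)
      rw [hd0, abs_zero, AddSubgroup.zmultiples_zero_eq_bot] at hmem
      exact AddSubgroup.mem_bot.1 hmem
    refine ((Complex.continuous_ofReal.tendsto 0).comp
      (h.renewalEquation.tendsto_of_lattice hd0 hlattice)).congr fun T => ?_
    rw [h.tsum_criticalRoots_of_lattice hd0 hlattice]
    simp [mul_div_right_comm]

end MalthusianWeights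

/-! ### Pairs of binomial counts -/

/-- `t` is the probability of `E ∩ F` for some events with `ℙ E = a` and `ℙ F = b`. -/
structure IsJointProb (a b t : ℝ) : Prop where
  nonneg : 0 ≤ t
  le_left : t ≤ a
  le_right : t ≤ b
  add_le : a + b ≤ 1 + t

/-- The probability that an event of probability `a` occurs at most once in `n` independent
trials. -/
noncomputable def atMostOnceProb (n : ℕ) (a : ℝ) : ℝ := (1 - a) ^ n + n * a * (1 - a) ^ (n - 1)

/-- The probability that two events of probabilities `a` and `b`, jointly occurring with
probability `t`, each occur at most once in `n` independent trials. -/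
noncomputable def jointAtMostOnceProb (n : ℕ) (a b t : ℝ) : ℝ :=
  (1 - a - b + t) ^ n + n * (1 - a - b + t) ^ (n - 1) * (a + b - t) +
    n * (n - 1) * (1 - a - b + t) ^ (n - 2) * ((a - t) * (b - t))

lemma jointAtMostOnceProb_mul {n : ℕ} (hn : 2 ≤ n) (a b : ℝ) :
    jointAtMostOnceProb n a b (a * b) = atMostOnceProb n a * atMostOnceProb n b := by
  obtain ⟨k, rfl⟩ := Nat.exists_eq_add_of_le' hn
  simp only [jointAtMostOnceProb, atMostOnceProb, Nat.add_sub_cancel,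
    show k + 2 - 1 = k + 1 by lia]
  rw [show 1 - a - b + a * b = (1 - a) * (1 - b) by ring, mul_pow, mul_pow, mul_pow]
  push_cast
  ring

lemma jointAtMostOnceProb_comm (n : ℕ) (a b t : ℝ) :
    jointAtMostOnceProb n a b t = jointAtMostOnceProb n b a t := by
  simp only [jointAtMostOnceProb, sub_right_comm 1 a b, add_comm a b, mul_comm (a - t)]

lemma jointAtMostOnceProb_right (n : ℕ) (a b : ℝ) :
    jointAtMostOnceProb n a b b = atMostOnceProb n a := by
  simp only [jointAtMostOnceProb, atMostOnceProb, sub_add_cancel, add_sub_cancel_right, sub_self,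
    mul_zero, add_zero]
  ring

lemma atMostOnceProb_succ (k : ℕ) (a : ℝ) :
    atMostOnceProb (k + 1) a = (1 - a) ^ k * (1 + k * a) := by
  simp only [atMostOnceProb, Nat.add_sub_cancel]
  push_cast
  ring

lemma atMostOnceProb_nonneg {a : ℝ} (h0 : 0 ≤ a) (h1 : a ≤ 1) (n : ℕ) :
    0 ≤ atMostOnceProb n a := by
  have := sub_nonneg.2 h1
  unfold atMostOnceProb
  positivity

lemma atMostOnceProb_le_one {a : ℝ} (h0 : 0 ≤ a) (h1 : a ≤ 1) (n : ℕ) :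
    atMostOnceProb n a ≤ 1 := by
  rcases n with _ | k
  · simp [atMostOnceProb]
  have := sub_nonneg.2 h1
  rw [atMostOnceProb_succ]
  calc (1 - a) ^ k * (1 + k * a) ≤ (1 - a) ^ k * (1 + a) ^ k := by
        gcongr
        exact one_add_mul_le_pow (by linarith) k
    _ = (1 - a ^ 2) ^ k := by rw [← mul_pow]; ring_nf
    _ ≤ 1 := pow_le_one₀ (by nlinarith) (by nlinarith)

lemma one_sub_atMostOnceProb_le {a : ℝ} (h0 : 0 ≤ a) (h1 : a ≤ 1) (n : ℕ) :
    1 - atMostOnceProb n a ≤ (n * a) ^ 2 := by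
  rcases n with _ | k
  · simp [atMostOnceProb]
  rw [atMostOnceProb_succ]
  have hk : 0 ≤ k * a := by positivity
  have hbern : (1 + k * -a) * (1 + k * a) ≤ (1 - a) ^ k * (1 + k * a) := by
    gcongr
    simpa only [← sub_eq_add_neg] using one_add_mul_le_pow (a := -a) (by linarith) k
  push_cast
  nlinarith

lemma mul_exp_neg_div_four_le (z : ℝ) : z * Real.exp (-(z / 4)) ≤ 4 := by
  rw [Real.exp_neg, ← div_eq_mul_inv, div_le_iff₀ (Real.exp_pos _)]
  linarith [Real.add_one_le_exp (z / 4)]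

lemma sq_mul_exp_neg_div_four_le {z : ℝ} (hz : 0 ≤ z) : z ^ 2 * Real.exp (-(z / 4)) ≤ 64 := by
  have hhalf := mul_exp_neg_div_four_le (z / 2)
  rw [show z ^ 2 * Real.exp (-(z / 4)) = 4 * (z / 2 * Real.exp (-(z / 2 / 4))) ^ 2 by
    rw [mul_pow, ← Real.exp_nat_mul]; ring_nf]
  nlinarith [mul_nonneg (by positivity : 0 ≤ z / 2) (Real.exp_pos (-(z / 2 / 4))).le]

section PowerEstimates

variable {k : ℕ} {N s t : ℝ}

lemma one_sub_add_le_exp (hts : t ≤ s / 2) : 1 - s + t ≤ Real.exp (-(s / 2)) := by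
  linarith [Real.one_sub_le_exp_neg (s / 2)]

lemma exp_neg_half_pow_le (hN : N = k + 4) (hs0 : 0 ≤ s) (hs2 : s ≤ 2) {j : ℕ} (hj : k ≤ j) :
    Real.exp (-(s / 2)) ^ j ≤ Real.exp 4 * Real.exp (-(N * s / 4)) ^ 2 := by
  rw [← Real.exp_nat_mul, ← Real.exp_nat_mul, ← Real.exp_add]
  have : (k : ℝ) ≤ j := by exact_mod_cast hj
  refine Real.exp_le_exp.2 ?_
  push_cast
  nlinarith

lemma abs_one_sub_add_sub_exp_le (hs0 : 0 ≤ s) (ht : 0 ≤ t) :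
    |1 - s + t - Real.exp (-s)| ≤ t + s ^ 2 := by
  have hexp : Real.exp (-s) ≤ 1 - s + s ^ 2 := by
    rcases le_total s 1 with hs1 | hs1
    · have := Real.abs_exp_sub_one_sub_id_le (x := -s) (by rwa [abs_neg, abs_of_nonneg hs0])
      linarith [(abs_le.1 this).2]
    · nlinarith [Real.exp_le_one_iff.2 (neg_nonpos.2 hs0)]
  rw [abs_le]
  constructor <;> nlinarith [Real.one_sub_le_exp_neg s]

lemma abs_exp_pow_sub_exp_le (hN : N = k + 4) (hs0 : 0 ≤ s) (hs2 : s ≤ 2) :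
    |Real.exp (-s) ^ (k + 1) - Real.exp (-(N * s / 4)) ^ 4| ≤
      3 * Real.exp 6 * s * Real.exp (-(N * s / 4)) ^ 4 := by
  have hpow : Real.exp (-s) ^ (k + 1) = Real.exp (3 * s) * Real.exp (-(N * s / 4)) ^ 4 := by
    rw [← Real.exp_nat_mul, ← Real.exp_nat_mul, ← Real.exp_add, hN]
    push_cast
    ring_nf
  have hlin : Real.exp (3 * s) - 1 ≤ 3 * s * Real.exp (3 * s) := by
    have hinv : Real.exp (-(3 * s)) * Real.exp (3 * s) = 1 := by rw [← Real.exp_add]; simp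
    nlinarith [Real.one_sub_le_exp_neg (3 * s), Real.exp_pos (3 * s)]
  rw [hpow, ← sub_one_mul, abs_of_nonneg (mul_nonneg (sub_nonneg.2 (Real.one_le_exp (by linarith)))
    (by positivity))]
  gcongr
  calc _ ≤ 3 * s * Real.exp (3 * s) := hlin
    _ ≤ 3 * s * Real.exp 6 := by gcongr; linarith
    _ = _ := by ring

lemma abs_pow_sub_exp_le (hN : N = k + 4) (hs0 : 0 ≤ s) (hs2 : s ≤ 2) (ht : 0 ≤ t)
    (hts : t ≤ s / 2) (hr : 0 ≤ 1 - s + t) :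
    |(1 - s + t) ^ (k + 1) - Real.exp (-(N * s / 4)) ^ 4| ≤
      N * (t + s ^ 2) * (Real.exp 4 * Real.exp (-(N * s / 4)) ^ 2) +
        3 * Real.exp 6 * s * Real.exp (-(N * s / 4)) ^ 4 := by
  refine (abs_sub_le _ (Real.exp (-s) ^ (k + 1)) _).trans
    (add_le_add ?_ (abs_exp_pow_sub_exp_le hN hs0 hs2))
  have : 0 ≤ N := by rw [hN]; positivity
  have hbase : max |1 - s + t| |Real.exp (-s)| ≤ Real.exp (-(s / 2)) := by
    rw [abs_of_nonneg hr, Real.abs_exp]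
    exact max_le (one_sub_add_le_exp hts) (Real.exp_le_exp.2 (by linarith))
  calc _ ≤ |1 - s + t - Real.exp (-s)| * (k + 1 : ℕ) *
        max |1 - s + t| |Real.exp (-s)| ^ (k + 1 - 1) := abs_pow_sub_pow_le ..
    _ ≤ (t + s ^ 2) * N * (Real.exp 4 * Real.exp (-(N * s / 4)) ^ 2) := by
      gcongr
      · exact abs_one_sub_add_sub_exp_le hs0 ht
      · push_cast
        linarith
      · exact (pow_le_pow_left₀ (by positivity) hbase _).trans
          (exp_neg_half_pow_le hN hs0 hs2 le_rfl)
    _ = _ := by ring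

end PowerEstimates

namespace IsJointProb

variable {a b t : ℝ}

lemma mul (ha0 : 0 ≤ a) (ha1 : a ≤ 1) (hb0 : 0 ≤ b) (hb1 : b ≤ 1) : IsJointProb a b (a * b) :=
  ⟨mul_nonneg ha0 hb0, mul_le_of_le_one_right ha0 hb1, mul_le_of_le_one_left hb0 ha1,
    by nlinarith⟩

lemma left_le_one (h : IsJointProb a b t) : a ≤ 1 := by linarith [h.le_right, h.add_le]

lemma right_le_one (h : IsJointProb a b t) : b ≤ 1 := by linarith [h.le_left, h.add_le]

lemma left_nonneg (h : IsJointProb a b t) : 0 ≤ a := h.nonneg.trans h.le_left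

lemma right_nonneg (h : IsJointProb a b t) : 0 ≤ b := h.nonneg.trans h.le_right

lemma of_mem_uIcc {u v : ℝ} (hu : IsJointProb a b u) (hv : IsJointProb a b v)
    (ht : t ∈ Set.uIcc u v) : IsJointProb a b t := by
  obtain ⟨hmin, hmax⟩ := ht
  exact ⟨(le_inf hu.nonneg hv.nonneg).trans hmin, hmax.trans (sup_le hu.le_left hv.le_left),
    hmax.trans (sup_le hu.le_right hv.le_right), by
      linarith [(le_inf (sub_le_iff_le_add'.2 hu.add_le) (sub_le_iff_le_add'.2 hv.add_le)).trans
        hmin]⟩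

variable {k : ℕ} {N : ℝ}

lemma cube_mul_abs_pow_sub_exp_le (h : IsJointProb a b t) (hN : N = k + 4) :
    N ^ 3 * (a * b) * |(1 - (a + b) + t) ^ (k + 1) - Real.exp (-(N * (a + b) / 4)) ^ 4| ≤
      (64 * Real.exp 4 + 12 * Real.exp 6) *
        (N ^ 2 * (t + a * b) * Real.exp (-(N * (a + b) / 4))) := by
  have ha := h.left_nonneg
  have hb := h.right_nonneg
  have ht := h.nonneg
  have hN0 : 0 ≤ N := by rw [hN]; positivity
  set s := a + b with hs
  have hs0 : 0 ≤ s := add_nonneg ha hb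
  have hpow := abs_pow_sub_exp_le hN hs0 (by linarith [h.left_le_one, h.right_le_one]) ht
    (by linarith [h.le_left, h.le_right]) (by linarith [h.add_le])
  set E := Real.exp (-(N * s / 4)) with hE
  have hE1 : E ≤ 1 := Real.exp_le_one_iff.2 (by have := mul_nonneg hN0 hs0; linarith)
  have hE0 : 0 < E := Real.exp_pos _
  have habs : a * b ≤ s ^ 2 := by rw [hs]; nlinarith
  calc _ ≤ N ^ 3 * (a * b) * (N * (t + s ^ 2) * (Real.exp 4 * E ^ 2) +
        3 * Real.exp 6 * s * E ^ 4) := by gcongr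
    _ = Real.exp 4 * N ^ 2 * t * E * (N ^ 2 * (a * b) * E) +
        Real.exp 4 * (N ^ 2 * (a * b) * E) * ((N * s) ^ 2 * E) +
        3 * Real.exp 6 * (N ^ 2 * (a * b) * (E * E ^ 2)) * (N * s * E) := by ring
    _ ≤ Real.exp 4 * N ^ 2 * t * E * (N ^ 2 * s ^ 2 * E) +
        Real.exp 4 * (N ^ 2 * (a * b) * E) * ((N * s) ^ 2 * E) +
        3 * Real.exp 6 * (N ^ 2 * (a * b) * (E * 1)) * (N * s * E) := by
      have : E ^ 2 ≤ 1 := pow_le_one₀ hE0.le hE1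
      gcongr
    _ ≤ Real.exp 4 * N ^ 2 * t * E * 64 + Real.exp 4 * (N ^ 2 * (a * b) * E) * 64 +
        3 * Real.exp 6 * (N ^ 2 * (a * b) * (E * 1)) * 4 := by
      have hsq := sq_mul_exp_neg_div_four_le (mul_nonneg hN0 hs0)
      have hlin := mul_exp_neg_div_four_le (N * s)
      rw [← hE] at hsq hlin
      gcongr
      rwa [← mul_pow]
    _ ≤ _ := by
      have : 0 ≤ Real.exp 6 * (N ^ 2 * t * E) := by positivity
      linarith

lemma one_sub_add_pow_le (h : IsJointProb a b t) (hN : N = k + 4) {j : ℕ} (hj : k ≤ j) :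
    (1 - (a + b) + t) ^ j ≤ Real.exp 4 * Real.exp (-(N * (a + b) / 4)) ^ 2 :=
  (pow_le_pow_left₀ (by linarith [h.add_le])
    (one_sub_add_le_exp (by linarith [h.le_left, h.le_right])) j).trans
    (exp_neg_half_pow_le hN (add_nonneg h.left_nonneg h.right_nonneg)
      (by linarith [h.left_le_one, h.right_le_one]) hj)

lemma one_sub_add_pow_le_exp (h : IsJointProb a b t) (hN : N = k + 4) {j : ℕ} (hj : k ≤ j) :
    (1 - (a + b) + t) ^ j ≤ Real.exp 4 * Real.exp (-(N * (a + b) / 4)) := by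
  have hle : Real.exp (-(N * (a + b) / 4)) ≤ 1 := Real.exp_le_one_iff.2 (by
    have := mul_nonneg (by rw [hN]; positivity : 0 ≤ N) (add_nonneg h.left_nonneg h.right_nonneg)
    linarith)
  refine (h.one_sub_add_pow_le hN hj).trans ?_
  gcongr
  exact pow_le_of_le_one (Real.exp_pos _).le hle two_ne_zero

lemma sq_mul_pow_le (h : IsJointProb a b t) (hN : N = k + 4) :
    N * (N - 1) * (1 - (a + b) + t) ^ (k + 2) * t ≤
      Real.exp 4 * (N ^ 2 * t * Real.exp (-(N * (a + b) / 4))) := by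
  have ht := h.nonneg
  have hN4 : 4 ≤ N := by rw [hN]; linarith [k.cast_nonneg (α := ℝ)]
  have hr : 0 ≤ 1 - (a + b) + t := by linarith [h.add_le]
  calc _ ≤ N * N * (Real.exp 4 * Real.exp (-(N * (a + b) / 4))) * t := by
        gcongr
        · linarith
        · exact h.one_sub_add_pow_le_exp hN (by lia)
    _ = _ := by ring

lemma cube_mul_pow_le (h : IsJointProb a b t) (hN : N = k + 4) :
    N * (N - 1) * (N - 2) * (1 - (a + b) + t) ^ (k + 1) * (t * (a + b - t)) ≤
      4 * Real.exp 4 * (N ^ 2 * t * Real.exp (-(N * (a + b) / 4))) := by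
  have hb := h.right_nonneg
  have ht := h.nonneg
  have hts : 0 ≤ a + b - t := by linarith [h.le_left]
  have hN4 : 4 ≤ N := by rw [hN]; linarith [k.cast_nonneg (α := ℝ)]
  have hr : 0 ≤ 1 - (a + b) + t := by linarith [h.add_le]
  calc _ ≤ N * N * N * (Real.exp 4 * Real.exp (-(N * (a + b) / 4)) ^ 2) * (t * (a + b)) := by
        have : 0 ≤ N - 1 := by linarith
        gcongr
        · linarith
        · linarith
        · linarith
        · exact h.one_sub_add_pow_le hN (Nat.le_succ k)
        · linarith
    _ = Real.exp 4 * (N ^ 2 * t * Real.exp (-(N * (a + b) / 4))) *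
        (N * (a + b) * Real.exp (-(N * (a + b) / 4))) := by ring
    _ ≤ Real.exp 4 * (N ^ 2 * t * Real.exp (-(N * (a + b) / 4))) * 4 := by
        gcongr
        exact mul_exp_neg_div_four_le _
    _ = _ := by ring

lemma sq_mul_pow_mul_le (h : IsJointProb a b t) (hN : N = k + 4) :
    (3 * N ^ 2 - 2 * N) * (1 - (a + b) + t) ^ (k + 1) * (a * b) ≤
      3 * Real.exp 4 * (N ^ 2 * (a * b) * Real.exp (-(N * (a + b) / 4))) := by
  have ha := h.left_nonneg
  have hb := h.right_nonneg
  have : 0 ≤ N := by rw [hN]; positivity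
  have hr : 0 ≤ 1 - (a + b) + t := by linarith [h.add_le]
  calc _ ≤ 3 * N ^ 2 * (Real.exp 4 * Real.exp (-(N * (a + b) / 4))) * (a * b) := by
        gcongr
        · linarith
        · exact h.one_sub_add_pow_le_exp hN (by lia)
    _ = _ := by ring

-- The left-hand side is the derivative at `t` of `jointAtMostOnceProb (k + 4) a b`, minus its
-- approximate value, which does not depend on `t`.
lemma abs_deriv_jointAtMostOnceProb_sub_le (h : IsJointProb a b t) (hN : N = k + 4) :
    |N * (N - 1) * (1 - (a + b) + t) ^ (k + 2) * t +
        N * (N - 1) * (N - 2) * (1 - (a + b) + t) ^ (k + 1) * ((a - t) * (b - t)) -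
        N ^ 3 * (a * b) * Real.exp (-(N * (a + b) / 4)) ^ 4| ≤
      (69 * Real.exp 4 + 12 * Real.exp 6) *
        (N ^ 2 * (t + a * b) * Real.exp (-(N * (a + b) / 4))) := by
  have ha := h.left_nonneg
  have hb := h.right_nonneg
  have ht := h.nonneg
  have hts : 0 ≤ a + b - t := by linarith [h.le_left]
  have hr : 0 ≤ 1 - (a + b) + t := by linarith [h.add_le]
  have hN4 : 4 ≤ N := by rw [hN]; linarith [k.cast_nonneg (α := ℝ)]
  have hN1 : 0 ≤ N - 1 := by linarith
  have hN2 : 0 ≤ N - 2 := by linarith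
  have hN3 : 0 ≤ 3 * N ^ 2 - 2 * N := by nlinarith
  have hmain := h.cube_mul_abs_pow_sub_exp_le hN
  have hsq := h.sq_mul_pow_le hN
  have hcube := h.cube_mul_pow_le hN
  have hprod := h.sq_mul_pow_mul_le hN
  set E := Real.exp (-(N * (a + b) / 4))
  set r := 1 - (a + b) + t
  have hdecomp : N * (N - 1) * r ^ (k + 2) * t +
      N * (N - 1) * (N - 2) * r ^ (k + 1) * ((a - t) * (b - t)) - N ^ 3 * (a * b) * E ^ 4 =
      N * (N - 1) * r ^ (k + 2) * t - N * (N - 1) * (N - 2) * r ^ (k + 1) * (t * (a + b - t)) -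
        (3 * N ^ 2 - 2 * N) * r ^ (k + 1) * (a * b) +
        N ^ 3 * (a * b) * (r ^ (k + 1) - E ^ 4) := by ring
  rw [hdecomp]
  refine (abs_add_le _ _).trans <| (add_le_add (abs_sub _ _) le_rfl).trans <|
    (add_le_add (add_le_add (abs_sub _ _) le_rfl) le_rfl).trans ?_
  rw [abs_mul (N ^ 3 * (a * b)), abs_of_nonneg (by positivity : 0 ≤ N ^ 3 * (a * b)),
    abs_of_nonneg (by positivity : 0 ≤ N * (N - 1) * r ^ (k + 2) * t), abs_of_nonneg
      (by positivity : 0 ≤ N * (N - 1) * (N - 2) * r ^ (k + 1) * (t * (a + b - t))),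
    abs_of_nonneg (by positivity : 0 ≤ (3 * N ^ 2 - 2 * N) * r ^ (k + 1) * (a * b))]
  have : 0 ≤ Real.exp 4 * (N ^ 2 * (a * b) * E) := by positivity
  linarith

end IsJointProb

lemma hasDerivAt_jointAtMostOnceProb (k : ℕ) {N : ℝ} (hN : N = k + 4) (a b t : ℝ) :
    HasDerivAt (jointAtMostOnceProb (k + 4) a b)
      (N * (N - 1) * (1 - (a + b) + t) ^ (k + 2) * t +
        N * (N - 1) * (N - 2) * (1 - (a + b) + t) ^ (k + 1) * ((a - t) * (b - t))) t := by
  have hr : HasDerivAt (fun t => 1 - a - b + t) 1 t := by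
    simpa using (hasDerivAt_id t).const_add (1 - a - b)
  have hone := ((hr.pow (k + 3)).const_mul N).mul ((hasDerivAt_id t).const_sub (a + b))
  have htwo := ((hr.pow (k + 2)).const_mul (N * (N - 1))).mul
    (((hasDerivAt_id t).const_sub a).mul ((hasDerivAt_id t).const_sub b))
  have hcast : ((k + 4 : ℕ) : ℝ) = N := by rw [hN]; push_cast; ring
  have hfun : jointAtMostOnceProb (k + 4) a b = fun t => (1 - a - b + t) ^ (k + 4) +
      N * (1 - a - b + t) ^ (k + 3) * (a + b - t) +
      N * (N - 1) * (1 - a - b + t) ^ (k + 2) * ((a - t) * (b - t)) := by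
    funext t
    rw [jointAtMostOnceProb, hcast]
    rfl
  rw [hfun]
  refine (((hr.pow (k + 4)).add hone).add htwo).congr_deriv ?_
  simp only [Pi.pow_apply, Pi.mul_apply, id, show k + 4 - 1 = k + 3 by lia,
    show k + 3 - 1 = k + 2 by lia, show k + 2 - 1 = k + 1 by lia, hN, ← sub_sub]
  push_cast
  ring

theorem exists_abs_jointAtMostOnceProb_sub_le : ∃ C : ℝ, 0 < C ∧
    ∀ (n : ℕ) (a b q : ℝ), 4 ≤ n → IsJointProb a b q →
      |jointAtMostOnceProb n a b q - atMostOnceProb n a * atMostOnceProb n b -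
          (n : ℝ) ^ 3 * (q - a * b) * (a * b) * Real.exp (-(n * (a + b)))| ≤
        C * ((n : ℝ) ^ 2 * (q ^ 2 + (a * b) ^ 2) * Real.exp (-(n * (a + b) / 4))) := by
  set C := 69 * Real.exp 4 + 12 * Real.exp 6
  refine ⟨2 * C, by positivity, fun n a b q hn h => ?_⟩
  obtain ⟨k, rfl⟩ := Nat.exists_eq_add_of_le' hn
  set N : ℝ := ((k + 4 : ℕ) : ℝ) with hNdef
  have hN : N = k + 4 := by rw [hNdef]; push_cast; rfl
  have hab : IsJointProb a b (a * b) :=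
    .mul h.left_nonneg h.left_le_one h.right_nonneg h.right_le_one
  set E := Real.exp (-(N * (a + b) / 4)) with hE
  have hE4 : Real.exp (-(N * (a + b))) = E ^ 4 := by
    rw [hE, ← Real.exp_nat_mul]; congr 1; push_cast; ring
  set m := max (a * b) q with hm
  have hm0 : 0 ≤ m := le_max_of_le_right h.nonneg
  have hmvt := Convex.norm_image_sub_le_of_norm_hasDerivWithin_le (𝕜 := ℝ)
    (f := fun t => jointAtMostOnceProb (k + 4) a b t - N ^ 3 * (a * b) * E ^ 4 * t)
    (C := C * (N ^ 2 * (m + m) * E)) (s := Set.uIcc (a * b) q)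
    (fun t _ => ((hasDerivAt_jointAtMostOnceProb k hN a b t).sub
      (by simpa using (hasDerivAt_id t).const_mul (N ^ 3 * (a * b) * E ^ 4))).hasDerivWithinAt)
    (fun t ht => ((hab.of_mem_uIcc h ht).abs_deriv_jointAtMostOnceProb_sub_le hN).trans (by
      have htm : t ≤ m := ht.2
      have habm : a * b ≤ m := le_max_left _ _
      gcongr))
    (convex_uIcc _ _) Set.left_mem_uIcc Set.right_mem_uIcc
  have hdist : |q - a * b| ≤ m := by
    rw [abs_le]
    exact ⟨by linarith [le_max_left (a * b) q, h.nonneg], by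
      linarith [le_max_right (a * b) q, hab.nonneg]⟩
  have hmm : m * m ≤ q ^ 2 + (a * b) ^ 2 := by
    rcases max_choice (a * b) q with hmax | hmax <;> rw [hm, hmax] <;> nlinarith
  calc _ = |jointAtMostOnceProb (k + 4) a b q - N ^ 3 * (a * b) * E ^ 4 * q -
        (jointAtMostOnceProb (k + 4) a b (a * b) - N ^ 3 * (a * b) * E ^ 4 * (a * b))| := by
        rw [← jointAtMostOnceProb_mul (by lia), hE4]; ring_nf
    _ ≤ C * (N ^ 2 * (m + m) * E) * |q - a * b| := hmvt
    _ ≤ C * (N ^ 2 * (m + m) * E) * m := by gcongr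
    _ = 2 * C * (N ^ 2 * (m * m) * E) := by ring
    _ ≤ _ := by gcongr

/-! ### Joint occurrence of two words -/

section JointOccurrence

variable {ι α : Type*}

/-- The letter weights `(m, a) ↦ p a` of words over directions `ι` and labels `α`. -/
def stepWeight (ι : Type*) {α : Type*} (p : α → ℝ) : ι × α → ℝ := fun x => p x.2

variable [DecidableEq ι] [DecidableEq α]

/-- The probability that both words occur in a random labeling with letter probabilities `p`. -/
def jointOccurProb (p : α → ℝ) : List (ι × α) → List (ι × α) → ℝ
  | [], w => wordWeight (stepWeight ι p) w
  | w, [] => wordWeight (stepWeight ι p) w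
  | x :: v, y :: v' =>
    if x = y then p x.2 * jointOccurProb p v v'
    else if x.1 = y.1 then 0
    else wordWeight (stepWeight ι p) (x :: v) * wordWeight (stepWeight ι p) (y :: v')

lemma jointOccurProb_comm (p : α → ℝ) (w w' : List (ι × α)) :
    jointOccurProb p w w' = jointOccurProb p w' w := by
  induction w generalizing w' with
  | nil => cases w' <;> simp [jointOccurProb]
  | cons x v ih =>
    cases w' with
    | nil => simp [jointOccurProb]
    | cons y v' =>
      simp only [jointOccurProb, eq_comm (a := y), eq_comm (a := y.1), ih v']
      split_ifs with h
      · rw [h]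
      · rfl
      · ring

lemma jointOccurProb_of_prefix (p : α → ℝ) {w w' : List (ι × α)} (h : w <+: w') :
    jointOccurProb p w w' = wordWeight (stepWeight ι p) w' := by
  obtain ⟨v, rfl⟩ := h
  induction w with
  | nil => simp [jointOccurProb]
  | cons x w ih => simp_all [jointOccurProb, stepWeight]

/-- The joint probability `jointOccurProb`, restricted to pairs of words neither of which is a
prefix of the other. -/
def forkedOccurProb (p : α → ℝ) (w w' : List (ι × α)) : ℝ :=
  if w <+: w' ∨ w' <+: w then 0 else jointOccurProb p w w'

lemma IsJointProb.const_mul {a b t c : ℝ} (h : IsJointProb a b t) (h0 : 0 ≤ c) (h1 : c ≤ 1) :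
    IsJointProb (c * a) (c * b) (c * t) :=
  ⟨mul_nonneg h0 h.nonneg, by gcongr; exact h.le_left, by gcongr; exact h.le_right, by
    nlinarith [h.add_le]⟩

lemma isJointProb_jointOccurProb [Fintype α] {p : α → ℝ} (hp : ∀ j, 0 ≤ p j)
    (hsum : ∑ j, p j = 1) (w w' : List (ι × α)) :
    IsJointProb (wordWeight (stepWeight ι p) w) (wordWeight (stepWeight ι p) w')
      (jointOccurProb p w w') := by
  have hp1 : ∀ j, p j ≤ 1 := fun j =>
    hsum ▸ Finset.single_le_sum (fun i _ => hp i) (Finset.mem_univ j)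
  have h0 (w : List (ι × α)) : 0 ≤ wordWeight (stepWeight ι p) w :=
    wordWeight_nonneg (g := stepWeight ι p) (fun x => hp x.2) w
  have h1 (w : List (ι × α)) : wordWeight (stepWeight ι p) w ≤ 1 :=
    wordWeight_le_one (g := stepWeight ι p) (fun x => hp x.2) (fun x => hp1 x.2) w
  induction w generalizing w' with
  | nil => simpa [jointOccurProb] using IsJointProb.mul zero_le_one le_rfl (h0 w') (h1 w')
  | cons x v ih =>
    cases w' with
    | nil =>
      simpa [jointOccurProb] using IsJointProb.mul (h0 (x :: v)) (h1 (x :: v)) zero_le_one le_rfl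
    | cons y v' =>
      unfold jointOccurProb
      split_ifs with hxy hdir
      · subst hxy
        simpa only [wordWeight_cons, stepWeight] using (ih v').const_mul (hp x.2) (hp1 x.2)
      · have hlabel : x.2 ≠ y.2 := fun h => hxy (Prod.ext hdir h)
        have hle : p x.2 + p y.2 ≤ 1 := by
          rw [← hsum, ← Finset.sum_pair hlabel]
          exact Finset.sum_le_univ_sum_of_nonneg hp
        refine ⟨le_rfl, h0 _, h0 _, ?_⟩
        rw [wordWeight_cons, wordWeight_cons, add_zero]
        exact (add_le_add (mul_le_of_le_one_right (hp x.2) (h1 v))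
          (mul_le_of_le_one_right (hp y.2) (h1 v'))).trans hle
      · exact .mul (h0 _) (h1 _) (h0 _) (h1 _)

lemma forkedOccurProb_cons_self (p : α → ℝ) (x : ι × α) (v v' : List (ι × α)) :
    forkedOccurProb p (x :: v) (x :: v') = p x.2 * forkedOccurProb p v v' := by
  simp [forkedOccurProb, jointOccurProb]

end JointOccurrence

/-! ### Sums over forked pairs of words -/

section Forks

variable {ι α : Type*}

/-- A pair of words that leave their common prefix `u` in different directions, parametrized by
`u`, the first steps `z` after `u`, and the remaining words. -/
def forkedPair (i : List (ι × α) × {z : (ι × α) × ι × α // z.1.1 ≠ z.2.1} ×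
    List (ι × α) × List (ι × α)) : List (ι × α) × List (ι × α) :=
  (i.1 ++ i.2.1.1.1 :: i.2.2.1, i.1 ++ i.2.1.1.2 :: i.2.2.2)

lemma forkedPair_injective : Function.Injective (forkedPair (ι := ι) (α := α)) := by
  rintro ⟨u, ⟨⟨x, y⟩, hxy⟩, v, w⟩ ⟨u', ⟨⟨x', y'⟩, hxy'⟩, v', w'⟩ h
  simp only [forkedPair, Prod.mk.injEq] at h
  simp only [Prod.mk.injEq, Subtype.mk.injEq]
  induction u generalizing u' with
  | nil => cases u' <;> grind
  | cons a u ih => cases u' <;> grind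

lemma forkedOccurProb_forkedPair [DecidableEq ι] [DecidableEq α] (p : α → ℝ)
    (i : List (ι × α) × {z : (ι × α) × ι × α // z.1.1 ≠ z.2.1} × List (ι × α) × List (ι × α)) :
    forkedOccurProb p (forkedPair i).1 (forkedPair i).2 =
      wordWeight (stepWeight ι p) i.1 * (wordWeight (stepWeight ι p) (i.2.1.1.1 :: i.2.2.1) *
        wordWeight (stepWeight ι p) (i.2.1.1.2 :: i.2.2.2)) := by
  obtain ⟨u, ⟨⟨x, y⟩, hdir⟩, v, v'⟩ := i
  have hxy : x ≠ y := fun h => hdir (congrArg Prod.fst h)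
  simp only [forkedPair]
  induction u with
  | nil => simp [forkedOccurProb, jointOccurProb, hxy, hxy.symm, show x.1 ≠ y.1 from hdir]
  | cons a u ih =>
    rw [List.cons_append, List.cons_append, forkedOccurProb_cons_self, ih, wordWeight_cons _ a,
      mul_assoc, stepWeight]

lemma mem_range_forkedPair [DecidableEq ι] [DecidableEq α] {p : α → ℝ} {w w' : List (ι × α)}
    (h : forkedOccurProb p w w' ≠ 0) : (w, w') ∈ Set.range (forkedPair (ι := ι) (α := α)) := by
  induction w generalizing w' with
  | nil => simp [forkedOccurProb] at h
  | cons x v ih =>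
    cases w' with
    | nil => simp [forkedOccurProb] at h
    | cons y v' =>
      by_cases hxy : x = y
      · subst hxy
        rw [forkedOccurProb_cons_self] at h
        obtain ⟨⟨u, i⟩, hi⟩ := ih (right_ne_zero_of_mul h)
        simp only [forkedPair, Prod.mk.injEq] at hi
        exact ⟨(x :: u, i), by simp [forkedPair, hi]⟩
      · have hdir : x.1 ≠ y.1 := fun hdir =>
          h (by simp [forkedOccurProb, jointOccurProb, hxy, hdir])
        exact ⟨([], ⟨(x, y), hdir⟩, v, v'), rfl⟩

lemma hasSum_prod_of_nonneg {β γ : Type*} {f : β × γ → ℝ} (hf : 0 ≤ f) {g : β → ℝ} {a : ℝ}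
    (hfiber : ∀ b, HasSum (fun c => f (b, c)) (g b)) (hg : HasSum g a) : HasSum f a := by
  have hsum : Summable f := (summable_prod_of_nonneg hf).2
    ⟨fun b => (hfiber b).summable, hg.summable.congr fun b => (hfiber b).tsum_eq.symm⟩
  rw [← (hsum.hasSum.prod_fiberwise hfiber).unique hg]
  exact hsum.hasSum

lemma sum_forking_steps [Fintype ι] [DecidableEq ι] [Fintype α] (B : α → ℝ) :
    ∑ z : {z : (ι × α) × ι × α // z.1.1 ≠ z.2.1}, B z.1.1.2 * B z.1.2.2 =
      (1 - 1 / (Fintype.card ι : ℝ)) * (Fintype.card ι * ∑ j, B j) ^ 2 := by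
  have hdirs : ∑ m : ι, ∑ m' : ι, (1 - if m = m' then (1 : ℝ) else 0) =
      Fintype.card ι * (Fintype.card ι - 1) := by
    simp [mul_sub]
  calc _ = ∑ z : (ι × α) × ι × α, if z.1.1 ≠ z.2.1 then B z.1.2 * B z.2.2 else 0 := by
        rw [← Finset.sum_filter]
        exact (Finset.sum_subtype _ (by simp) fun z : (ι × α) × ι × α => B z.1.2 * B z.2.2).symm
    _ = ∑ m : ι, ∑ j, ∑ m' : ι, ∑ j', (1 - if m = m' then 1 else 0) * (B j * B j') := by
        simp only [Fintype.sum_prod_type]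
        refine Fintype.sum_congr _ _ fun m => Fintype.sum_congr _ _ fun j =>
          Fintype.sum_congr _ _ fun m' => Fintype.sum_congr _ _ fun j' => ?_
        split_ifs <;> simp_all
    _ = Fintype.card ι * (Fintype.card ι - 1) * ((∑ j, B j) * ∑ j, B j) := by
        simp only [← Finset.mul_sum, ← Finset.sum_mul, hdirs]
    _ = _ := by
        rcases eq_or_ne (Fintype.card ι : ℝ) 0 with hcard | hcard
        · simp [hcard]
        · field_simp

namespace MalthusianWeights

variable [Fintype ι] [Fintype α] {p : α → ℝ} {ρ : ℝ}

lemma hasSum_harmonicTerm_mul_forking_steps (h : MalthusianWeights (stepWeight ι p) ρ) {x : ℝ}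
    (hx : 0 ≤ x) :
    HasSum (fun i : {z : (ι × α) × ι × α // z.1.1 ≠ z.2.1} × List (ι × α) × List (ι × α) =>
        harmonicTerm (stepWeight ι p) x (i.1.1.1 :: i.2.1) *
          harmonicTerm (stepWeight ι p) x (i.1.1.2 :: i.2.2))
      ((1 - 1 / (Fintype.card ι : ℝ)) *
        (harmonicSum (stepWeight ι p) x - Real.exp (-x)) ^ 2) := by
  classical
  set B : α → ℝ := fun j => p j ^ 2 * harmonicSum (stepWeight ι p) (p j * x)
  have hcons (z : ι × α) : HasSum (fun w => harmonicTerm (stepWeight ι p) x (z :: w)) (B z.2) :=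
    h.hasSum_harmonicTerm_cons hx z
  have hB : harmonicSum (stepWeight ι p) x - Real.exp (-x) = Fintype.card ι * ∑ j, B j := by
    rw [h.harmonicSum_eq_exp_add hx, add_sub_cancel_left, Fintype.sum_prod_type]
    simp [stepWeight, B]
  rw [hB, ← sum_forking_steps]
  refine hasSum_prod_of_nonneg
    (fun i => mul_nonneg (harmonicTerm_nonneg _ _ _) (harmonicTerm_nonneg _ _ _))
    (fun z => (hcons z.1.1).mul (hcons z.1.2) ?_) (hasSum_fintype _)
  exact (hcons z.1.1).summable.mul_of_nonneg (hcons z.1.2).summable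
    (fun w => harmonicTerm_nonneg _ _ _) fun w => harmonicTerm_nonneg _ _ _

lemma hasSum_of_support_subset_range_forkedPair (h : MalthusianWeights (stepWeight ι p) ρ)
    {F : List (ι × α) × List (ι × α) → ℝ} (hF : F.support ⊆ Set.range forkedPair)
    {c X : List (ι × α) → ℝ} (hc : ∀ u, 0 ≤ c u) (hX : ∀ u, 0 ≤ X u)
    (hFc : ∀ i, F (forkedPair i) = c i.1 *
      (harmonicTerm (stepWeight ι p) (X i.1) (i.2.1.1.1 :: i.2.2.1) *
        harmonicTerm (stepWeight ι p) (X i.1) (i.2.1.1.2 :: i.2.2.2))) {a : ℝ}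
    (ha : HasSum (fun u => c u * ((1 - 1 / (Fintype.card ι : ℝ)) *
      (harmonicSum (stepWeight ι p) (X u) - Real.exp (-(X u))) ^ 2)) a) :
    HasSum F a := by
  rw [← forkedPair_injective.hasSum_iff fun z hz => by_contra fun hne => hz (hF hne)]
  refine hasSum_prod_of_nonneg (fun i => ?_) (fun u => ?_) ha
  · simp only [Pi.zero_apply, Function.comp_apply, hFc]
    exact mul_nonneg (hc _) (mul_nonneg (harmonicTerm_nonneg _ _ _) (harmonicTerm_nonneg _ _ _))
  · simp only [Function.comp_apply, hFc]
    exact (h.hasSum_harmonicTerm_mul_forking_steps (hX u)).mul_left (c u)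

end MalthusianWeights

end Forks

/-! ### Covariances of occurrences -/

section PowerBounds

variable {x σ : ℝ}

lemma min_sq_one_le_rpow (hx : 0 ≤ x) (h1 : 0 ≤ σ) (h2 : σ ≤ 2) : min (x ^ 2) 1 ≤ x ^ σ := by
  rcases le_total x 1 with hx1 | hx1
  · rw [← Real.rpow_two]
    exact (min_le_left _ _).trans (Real.rpow_le_rpow_of_exponent_ge' hx hx1 h1 h2)
  · exact (min_le_right _ _).trans (Real.one_le_rpow hx1 h1)

lemma mul_exp_neg_le_one (x : ℝ) : x * Real.exp (-x) ≤ 1 := by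
  refine (Real.mul_exp_neg_le_exp_neg_one x).trans (Real.exp_le_one_iff.2 (by norm_num))

lemma sq_mul_exp_neg_le_rpow (hx : 0 ≤ x) (h1 : 1 ≤ σ) (h2 : σ ≤ 2) :
    x ^ 2 * Real.exp (-x) ≤ x ^ σ := by
  rcases le_total x 1 with hx1 | hx1
  · rw [← Real.rpow_two]
    exact (mul_le_of_le_one_right (by positivity) (Real.exp_le_one_iff.2 (by linarith))).trans
      (Real.rpow_le_rpow_of_exponent_ge' hx hx1 (by linarith) h2)
  · calc x ^ 2 * Real.exp (-x) = x * (x * Real.exp (-x)) := by ring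
      _ ≤ x := mul_le_of_le_one_right hx (mul_exp_neg_le_one x)
      _ ≤ x ^ σ := Real.self_le_rpow_of_one_le hx1 h1

lemma one_sub_atMostOnceProb_le_rpow {a : ℝ} (h0 : 0 ≤ a) (h1 : a ≤ 1) (n : ℕ) (hσ0 : 0 ≤ σ)
    (hσ2 : σ ≤ 2) : 1 - atMostOnceProb n a ≤ (n * a) ^ σ :=
  (le_min (one_sub_atMostOnceProb_le h0 h1 n)
    (sub_le_self _ (atMostOnceProb_nonneg h0 h1 n))).trans
    (min_sq_one_le_rpow (by positivity) hσ0 hσ2)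

end PowerBounds

lemma harmonicTerm_mul_harmonicTerm {β : Type*} (g : β → ℝ) (x : ℝ) (w w' : List β) :
    harmonicTerm g x w * harmonicTerm g x w' =
      (wordWeight g w * wordWeight g w') ^ 2 *
        Real.exp (-(x * (wordWeight g w + wordWeight g w'))) := by
  rw [harmonicTerm, harmonicTerm, mul_add, neg_add, Real.exp_add]
  ring

/-- The weights `wordWeight g w' ^ σ` of the pairs of words `w`, `w'` such that `w` is a prefix
of `w'`, extended by zero to all pairs. -/
noncomputable def prefixWeight {β : Type*} [DecidableEq β] (g : β → ℝ) (σ : ℝ) (w w' : List β) :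
    ℝ :=
  if w <+: w' then wordWeight g w' ^ σ else 0

lemma prefixWeight_nonneg {β : Type*} [DecidableEq β] {g : β → ℝ} (hg : ∀ x, 0 ≤ g x) (σ : ℝ)
    (w w' : List β) : 0 ≤ prefixWeight g σ w w' := by
  unfold prefixWeight
  split_ifs
  · exact Real.rpow_nonneg (wordWeight_nonneg hg w') σ
  · rfl

lemma MalthusianWeights.summable_prefixWeight {β : Type*} [Fintype β] [DecidableEq β] {g : β → ℝ}
    {ρ σ : ℝ} (h : MalthusianWeights g ρ) (hσ : ρ < σ) :
    Summable fun z : List β × List β => prefixWeight g σ z.1 z.2 := by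
  have hinj : Function.Injective fun z : List β × List β => (z.1, z.1 ++ z.2) := by
    rintro ⟨u, v⟩ ⟨u', v'⟩ huv
    obtain ⟨rfl, hv⟩ := Prod.mk.inj huv
    exact congrArg (Prod.mk u) (List.append_cancel_left hv)
  rw [← hinj.summable_iff]
  · refine ((h.summable_rpow hσ).mul_of_nonneg (h.summable_rpow hσ)
      (fun w => Real.rpow_nonneg (h.weight_pos w).le σ)
      fun w => Real.rpow_nonneg (h.weight_pos w).le σ).congr fun z => ?_
    simp [prefixWeight, Real.mul_rpow (h.weight_pos z.1).le (h.weight_pos z.2).le]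
  · rintro ⟨u, w⟩ hz
    refine if_neg ?_
    rintro ⟨v, hv⟩
    exact hz ⟨(u, v), Prod.ext rfl hv⟩

section Covariance

variable {ι α : Type*} [DecidableEq ι] [DecidableEq α]

/-- The covariance of the events that `w` and `w'`, respectively, occur in at most one of `n`
independent random labelings with letter probabilities `p`. -/
noncomputable def occurCov (p : α → ℝ) (n : ℕ) (w w' : List (ι × α)) : ℝ :=
  jointAtMostOnceProb n (wordWeight (stepWeight ι p) w) (wordWeight (stepWeight ι p) w')
      (jointOccurProb p w w') -
    atMostOnceProb n (wordWeight (stepWeight ι p) w) *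
      atMostOnceProb n (wordWeight (stepWeight ι p) w')

lemma occurCov_comm (p : α → ℝ) (n : ℕ) (w w' : List (ι × α)) :
    occurCov p n w w' = occurCov p n w' w := by
  rw [occurCov, occurCov, jointAtMostOnceProb_comm, jointOccurProb_comm, mul_comm]

lemma abs_atMostOnceProb_sub_mul_add_le (n : ℕ) {a b σ : ℝ} (ha0 : 0 ≤ a) (ha1 : a ≤ 1)
    (hb0 : 0 ≤ b) (hb1 : b ≤ 1) (h1 : 1 ≤ σ) (h2 : σ ≤ 2) :
    |atMostOnceProb n a - atMostOnceProb n a * atMostOnceProb n b +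
        n ^ 3 * ((a * b) ^ 2 * Real.exp (-(n * (a + b))))| ≤ 2 * (n ^ σ * b ^ σ) := by
  have hφ := mul_le_mul (atMostOnceProb_le_one ha0 ha1 n)
    (one_sub_atMostOnceProb_le_rpow hb0 hb1 n (by linarith) h2)
    (sub_nonneg.2 (atMostOnceProb_le_one hb0 hb1 n)) zero_le_one
  have hφ0 := mul_nonneg (atMostOnceProb_nonneg ha0 ha1 n)
    (sub_nonneg.2 (atMostOnceProb_le_one hb0 hb1 n))
  have hsplit : (n : ℝ) ^ 3 * ((a * b) ^ 2 * Real.exp (-(n * (a + b)))) =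
      a * (n * a * Real.exp (-(n * a))) * ((n * b) ^ 2 * Real.exp (-(n * b))) := by
    rw [mul_add, neg_add, Real.exp_add]
    ring
  have hexp : a * (n * a * Real.exp (-(n * a))) * ((n * b) ^ 2 * Real.exp (-(n * b))) ≤
      1 * 1 * (n * b) ^ σ := by
    gcongr
    · exact mul_exp_neg_le_one _
    · exact sq_mul_exp_neg_le_rpow (by positivity) h1 h2
  rw [← Real.mul_rpow n.cast_nonneg hb0, hsplit, ← mul_one_sub, abs_of_nonneg (by positivity)]
  linarith

variable [Fintype α] {p : α → ℝ}

lemma abs_occurCov_add_le_of_prefix (hp : ∀ j, 0 ≤ p j) (hsum : ∑ j, p j = 1) (n : ℕ) {σ : ℝ}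
    (h1 : 1 ≤ σ) (h2 : σ ≤ 2) {w w' : List (ι × α)} (h : w <+: w') :
    |occurCov p n w w' + n ^ 3 *
        (harmonicTerm (stepWeight ι p) n w * harmonicTerm (stepWeight ι p) n w')| ≤
      2 * (n ^ σ * prefixWeight (stepWeight ι p) σ w w') := by
  have hjoint := isJointProb_jointOccurProb hp hsum w w'
  rw [occurCov, jointOccurProb_of_prefix p h, jointAtMostOnceProb_right, prefixWeight, if_pos h,
    harmonicTerm_mul_harmonicTerm]
  exact abs_atMostOnceProb_sub_mul_add_le n hjoint.left_nonneg hjoint.left_le_one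
    hjoint.right_nonneg hjoint.right_le_one h1 h2

lemma abs_occurCov_add_le_of_prefix_or_prefix (hp : ∀ j, 0 ≤ p j) (hsum : ∑ j, p j = 1) (n : ℕ)
    {σ : ℝ} (h1 : 1 ≤ σ) (h2 : σ ≤ 2) {w w' : List (ι × α)} (h : w <+: w' ∨ w' <+: w) :
    |occurCov p n w w' + n ^ 3 *
        (harmonicTerm (stepWeight ι p) n w * harmonicTerm (stepWeight ι p) n w')| ≤
      2 * (n ^ σ * (prefixWeight (stepWeight ι p) σ w w' +
        prefixWeight (stepWeight ι p) σ w' w)) := by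
  have hnonneg := prefixWeight_nonneg (g := stepWeight ι p) (fun x => hp x.2) σ
  rcases h with h | h
  · refine (abs_occurCov_add_le_of_prefix hp hsum n h1 h2 h).trans ?_
    gcongr
    exact le_add_of_nonneg_right (hnonneg w' w)
  · rw [occurCov_comm, mul_comm (harmonicTerm _ _ w)]
    refine (abs_occurCov_add_le_of_prefix hp hsum n h1 h2 h).trans ?_
    gcongr
    exact le_add_of_nonneg_left (hnonneg w w')

lemma exists_abs_occurCov_sub_jointOccurProb_le (hp : ∀ j, 0 ≤ p j) (hsum : ∑ j, p j = 1) :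
    ∃ C, 0 ≤ C ∧ ∀ (n : ℕ) (w w' : List (ι × α)), 4 ≤ n →
      |occurCov p n w w' -
          (n ^ 3 * (jointOccurProb p w w' *
              (wordWeight (stepWeight ι p) w * wordWeight (stepWeight ι p) w') *
              Real.exp (-(n * (wordWeight (stepWeight ι p) w + wordWeight (stepWeight ι p) w')))) -
            n ^ 3 * (harmonicTerm (stepWeight ι p) n w * harmonicTerm (stepWeight ι p) n w'))| ≤
        C * ((n / 4) ^ 2 * (jointOccurProb p w w' ^ 2 * Real.exp
              (-(n / 4 * (wordWeight (stepWeight ι p) w + wordWeight (stepWeight ι p) w')))) +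
          (n / 4) ^ 2 * (harmonicTerm (stepWeight ι p) (n / 4) w *
            harmonicTerm (stepWeight ι p) (n / 4) w')) := by
  obtain ⟨C, hC, hcov⟩ := exists_abs_jointAtMostOnceProb_sub_le
  refine ⟨16 * C, by positivity, fun n w w' hn => ?_⟩
  have hcov := hcov n _ _ _ hn (isJointProb_jointOccurProb hp hsum w w')
  rw [harmonicTerm_mul_harmonicTerm, harmonicTerm_mul_harmonicTerm]
  set a := wordWeight (stepWeight ι p) w with ha
  set b := wordWeight (stepWeight ι p) w' with hb
  calc _ = |jointAtMostOnceProb n a b (jointOccurProb p w w') -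
          atMostOnceProb n a * atMostOnceProb n b -
          n ^ 3 * (jointOccurProb p w w' - a * b) * (a * b) * Real.exp (-(n * (a + b)))| := by
        rw [occurCov, ← ha, ← hb]
        congr 1
        ring
    _ ≤ _ := hcov
    _ = _ := by
        rw [mul_div_right_comm]
        ring

lemma exists_abs_occurCov_sub_le (hp : ∀ j, 0 ≤ p j) (hsum : ∑ j, p j = 1) :
    ∃ C, 0 ≤ C ∧ ∀ (n : ℕ) (σ : ℝ) (w w' : List (ι × α)), 4 ≤ n → 1 ≤ σ → σ ≤ 2 →
      |occurCov p n w w' -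
          (n ^ 3 * (forkedOccurProb p w w' *
              (wordWeight (stepWeight ι p) w * wordWeight (stepWeight ι p) w') *
              Real.exp (-(n * (wordWeight (stepWeight ι p) w + wordWeight (stepWeight ι p) w')))) -
            n ^ 3 * (harmonicTerm (stepWeight ι p) n w * harmonicTerm (stepWeight ι p) n w'))| ≤
        C * ((n / 4) ^ 2 * (forkedOccurProb p w w' ^ 2 * Real.exp
              (-(n / 4 * (wordWeight (stepWeight ι p) w + wordWeight (stepWeight ι p) w')))) +
          (n / 4) ^ 2 * (harmonicTerm (stepWeight ι p) (n / 4) w *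
            harmonicTerm (stepWeight ι p) (n / 4) w') +
          n ^ σ * (prefixWeight (stepWeight ι p) σ w w' +
            prefixWeight (stepWeight ι p) σ w' w)) := by
  obtain ⟨C, hC, hcov⟩ := exists_abs_occurCov_sub_jointOccurProb_le (ι := ι) hp hsum
  refine ⟨C + 2, by positivity, fun n σ w w' hn h1 h2 => ?_⟩
  have hprefix := add_nonneg
    (prefixWeight_nonneg (g := stepWeight ι p) (fun x => hp x.2) σ w w')
    (prefixWeight_nonneg (g := stepWeight ι p) (fun x => hp x.2) σ w' w)
  have hharmonic := mul_nonneg (harmonicTerm_nonneg (stepWeight ι p) (n / 4) w)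
    (harmonicTerm_nonneg (stepWeight ι p) (n / 4) w')
  by_cases h : w <+: w' ∨ w' <+: w
  · calc _ = |occurCov p n w w' + n ^ 3 *
        (harmonicTerm (stepWeight ι p) n w * harmonicTerm (stepWeight ι p) n w')| := by
          rw [forkedOccurProb, if_pos h]
          congr 1
          ring
      _ ≤ 2 * (0 + 0 + n ^ σ * (prefixWeight (stepWeight ι p) σ w w' +
            prefixWeight (stepWeight ι p) σ w' w)) := by
          simpa using abs_occurCov_add_le_of_prefix_or_prefix hp hsum n h1 h2 h
      _ ≤ _ := by
          gcongr
          · linarith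
          · positivity
          · positivity
  · rw [forkedOccurProb, if_neg h]
    exact (hcov n w w' hn).trans (mul_le_mul (by linarith)
      (le_add_of_nonneg_right (mul_nonneg (by positivity) hprefix)) (by positivity) (by positivity))

end Covariance

/-! ### Sums over branching points -/

lemma logGammaKernel_log (c : ℝ) {x : ℝ} (hx : 0 < x) :
    logGammaKernel c (Real.log x) = x ^ c * Real.exp (-x) := by
  rw [logGammaKernel, Real.exp_log hx, Real.rpow_def_of_pos hx, ← Real.exp_add, mul_comm c,
    sub_eq_add_neg]

lemma rpow_mul_sq_rpow_mul (ρ y : ℝ) {x : ℝ} (hx : 0 < x) :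
    x ^ (2 * ρ - 1) * (x ^ (2 - ρ) * y) ^ 2 = x ^ 3 * y ^ 2 := by
  rw [mul_pow, ← mul_assoc, ← Real.rpow_mul_natCast hx.le, ← Real.rpow_add hx,
    ← Real.rpow_natCast x 3]
  congr 2
  push_cast
  ring

/-- The contribution, on the logarithmic scale, of the pairs of words that fork after the common
prefix `u`. -/
noncomputable def branchingTerm {α : Type*} (g : α → ℝ) (ρ t : ℝ) (u : List α) : ℝ :=
  wordWeight g u ^ (2 * ρ - 1) *
    (logHarmonicSum g ρ (t + Real.log (wordWeight g u)) -
      logGammaKernel (2 - ρ) (t + Real.log (wordWeight g u))) ^ 2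

namespace MalthusianWeights

variable {α : Type*} [Fintype α] {g : α → ℝ} {ρ : ℝ}

lemma neg_log_wordWeight_mem_asymptoticPeriods (h : MalthusianWeights g ρ) (u : List α) :
    -Real.log (wordWeight g u) ∈ asymptoticPeriods (logHarmonicSum g ρ) := by
  induction u with
  | nil => simp
  | cons x u ih =>
    rw [wordWeight_cons, Real.log_mul (h.pos x).ne' (h.weight_pos u).ne', neg_add]
    exact add_mem (h.renewalEquation.step_mem_asymptoticPeriods x) ih

lemma rpow_mul_branchingTerm_log (h : MalthusianWeights g ρ) {x : ℝ} (hx : 0 < x) (u : List α) :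
    x ^ (2 * ρ - 1) * branchingTerm g ρ (Real.log x) u =
      (x * wordWeight g u) ^ 3 *
        (harmonicSum g (x * wordWeight g u) - Real.exp (-(x * wordWeight g u))) ^ 2 := by
  have hw := h.weight_pos u
  rw [← rpow_mul_sq_rpow_mul ρ _ (mul_pos hx hw), branchingTerm, ← Real.log_mul hx.ne' hw.ne',
    logHarmonicSum_log g ρ (mul_pos hx hw), logGammaKernel_log _ (mul_pos hx hw),
    Real.mul_rpow (z := 2 * ρ - 1) hx.le hw.le]
  ring

lemma abs_logHarmonicSum_sub_logGammaKernel_le (h : MalthusianWeights g ρ) (t : ℝ) :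
    |logHarmonicSum g ρ t - logGammaKernel (2 - ρ) t| ≤ logHarmonicSum g ρ t := by
  rw [abs_of_nonneg (sub_nonneg.2 (h.logGammaKernel_le_logHarmonicSum t))]
  exact sub_le_self _ (logGammaKernel_pos _ t).le

lemma summable_branchingTerm (h : MalthusianWeights g ρ) (t : ℝ) :
    Summable (branchingTerm g ρ t) := by
  obtain ⟨C, hC⟩ := h.exists_logHarmonicSum_le
  have hρ := h.one_lt
  refine Summable.of_nonneg_of_le
    (fun u => mul_nonneg (Real.rpow_nonneg (h.weight_pos u).le _) (sq_nonneg _)) (fun u => ?_)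
    ((h.summable_rpow (σ := 2 * ρ - 1) (by linarith)).mul_right (C ^ 2))
  refine mul_le_mul_of_nonneg_left (sq_le_sq' ?_ ?_) (Real.rpow_nonneg (h.weight_pos u).le _)
  all_goals
    have := abs_le.1 ((h.abs_logHarmonicSum_sub_logGammaKernel_le _).trans
      (hC (t + Real.log (wordWeight g u))))
    linarith

lemma tendsto_sq_sub_sq (h : MalthusianWeights g ρ) (u : List α) :
    Tendsto (fun t => (logHarmonicSum g ρ (t + Real.log (wordWeight g u)) -
      logGammaKernel (2 - ρ) (t + Real.log (wordWeight g u))) ^ 2 - logHarmonicSum g ρ t ^ 2)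
      atTop (𝓝 0) := by
  obtain ⟨C, hC⟩ := h.exists_logHarmonicSum_le
  have hshift : Tendsto (fun t => logHarmonicSum g ρ (t + Real.log (wordWeight g u)) -
      logHarmonicSum g ρ t) atTop (𝓝 0) := by
    have hperiod : Tendsto (fun t => logHarmonicSum g ρ (t - -Real.log (wordWeight g u)) -
        logHarmonicSum g ρ t) atTop (𝓝 0) := h.neg_log_wordWeight_mem_asymptoticPeriods u
    simpa only [sub_neg_eq_add] using hperiod
  have hkernel := h.renewalEquation.tendsto_kernel_atTop.comp
    (tendsto_atTop_add_const_right _ (Real.log (wordWeight g u)) tendsto_id)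
  have hdiff := ((hshift.sub hkernel).abs).mul_const (C + C)
  rw [sub_zero, abs_zero, zero_mul] at hdiff
  refine squeeze_zero_norm (fun t => ?_) hdiff
  rw [Real.norm_eq_abs, sq_sub_sq, mul_comm, abs_mul, sub_right_comm]
  refine mul_le_mul_of_nonneg_left ((abs_add_le _ _).trans (add_le_add ?_ ?_)) (abs_nonneg _)
  · exact (h.abs_logHarmonicSum_sub_logGammaKernel_le _).trans (hC _)
  · rw [abs_of_nonneg (logHarmonicSum_nonneg g ρ t)]
    exact hC t

lemma tendsto_tsum_branchingTerm_sub (h : MalthusianWeights g ρ) :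
    Tendsto (fun t => ∑' u, branchingTerm g ρ t u -
      (1 - ∑ x, g x ^ (2 * ρ - 1))⁻¹ * logHarmonicSum g ρ t ^ 2) atTop (𝓝 0) := by
  obtain ⟨C, hC⟩ := h.exists_logHarmonicSum_le
  have hσ : ρ < 2 * ρ - 1 := by linarith [h.one_lt]
  have hsum := h.summable_rpow hσ
  have hlim : Tendsto (fun t => ∑' u, (branchingTerm g ρ t u -
      wordWeight g u ^ (2 * ρ - 1) * logHarmonicSum g ρ t ^ 2)) atTop (𝓝 (∑' _ : List α, 0)) := by
    refine tendsto_tsum_of_dominated_convergence (hsum.mul_right (C ^ 2)) (fun u => ?_)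
      (Eventually.of_forall fun t u => ?_)
    · simpa only [branchingTerm, mul_zero, mul_sub] using
        (h.tendsto_sq_sub_sq u).const_mul (wordWeight g u ^ (2 * ρ - 1))
    · have hw := Real.rpow_nonneg (h.weight_pos u).le (2 * ρ - 1)
      rw [branchingTerm, ← mul_sub, norm_mul, Real.norm_of_nonneg hw]
      gcongr
      exact abs_sub_le_of_nonneg_of_le (sq_nonneg _)
        ((sq_abs _).symm.trans_le (pow_le_pow_left₀ (abs_nonneg _)
          ((h.abs_logHarmonicSum_sub_logGammaKernel_le _).trans (hC _)) 2))
        (sq_nonneg _) (pow_le_pow_left₀ (logHarmonicSum_nonneg g ρ t) (hC t) 2)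
  rw [tsum_zero] at hlim
  refine hlim.congr fun t => ?_
  rw [(h.summable_branchingTerm t).tsum_sub (hsum.mul_right _), tsum_mul_right, h.tsum_rpow hσ]

lemma exists_mul_harmonicSum_sq_le (h : MalthusianWeights g ρ) {σ : ℝ} (hρσ : ρ ≤ σ)
    (hσ : σ ≤ 2) : ∃ C, ∀ x, 0 < x → (x * harmonicSum g x) ^ 2 ≤ C * x ^ σ := by
  have hρ := h.lt_two
  obtain ⟨C, hC⟩ :=
    h.exists_harmonicSum_le_rpow (τ := 1 - σ / 2) (by linarith) (by linarith)
  refine ⟨C ^ 2, fun x hx => ?_⟩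
  calc (x * harmonicSum g x) ^ 2 ≤ (x * (C * x ^ (-(1 - σ / 2)))) ^ 2 := by
        have := harmonicSum_nonneg g x
        gcongr
        exact hC x hx
    _ = C ^ 2 * (x ^ (1 : ℝ) * x ^ (-(1 - σ / 2))) ^ 2 := by rw [Real.rpow_one]; ring
    _ = C ^ 2 * x ^ σ := by
        rw [← Real.rpow_add hx, ← Real.rpow_mul_natCast hx.le]
        congr 2
        push_cast
        ring

end MalthusianWeights

/-! ### The sum of all covariances -/

namespace MalthusianWeights

lemma hasSum_harmonicTerm_mul {β : Type*} [Fintype β] {g : β → ℝ} {ρ : ℝ}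
    (h : MalthusianWeights g ρ) {x : ℝ} (hx : 0 ≤ x) :
    HasSum (fun z : List β × List β => harmonicTerm g x z.1 * harmonicTerm g x z.2)
      (harmonicSum g x ^ 2) := by
  have hsum := (h.summable_harmonicTerm hx).hasSum
  rw [sq]
  exact hsum.mul hsum ((h.summable_harmonicTerm hx).mul_of_nonneg (h.summable_harmonicTerm hx)
    (harmonicTerm_nonneg g x) (harmonicTerm_nonneg g x))

variable {ι α : Type*} [Fintype ι] [DecidableEq ι] [Fintype α] [DecidableEq α]
  {p : α → ℝ} {ρ : ℝ}

lemma hasSum_forkedOccurProb_mul_exp (h : MalthusianWeights (stepWeight ι p) ρ) {x : ℝ}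
    (hx : 0 < x) :
    HasSum (fun z : List (ι × α) × List (ι × α) => x ^ 3 * (forkedOccurProb p z.1 z.2 *
        (wordWeight (stepWeight ι p) z.1 * wordWeight (stepWeight ι p) z.2) *
        Real.exp (-(x * (wordWeight (stepWeight ι p) z.1 + wordWeight (stepWeight ι p) z.2)))))
      (x ^ (2 * ρ - 1) * ((1 - 1 / (Fintype.card ι : ℝ)) *
        ∑' u, branchingTerm (stepWeight ι p) ρ (Real.log x) u)) := by
  have hw := h.weight_pos
  refine h.hasSum_of_support_subset_range_forkedPair
    (c := fun u => (x * wordWeight (stepWeight ι p) u) ^ 3)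
    (X := fun u => x * wordWeight (stepWeight ι p) u) (fun z hz => mem_range_forkedPair
      (left_ne_zero_of_mul (left_ne_zero_of_mul (right_ne_zero_of_mul hz))))
    (fun u => by have := hw u; positivity) (fun u => by have := hw u; positivity) (fun i => ?_) ?_
  · rw [harmonicTerm_mul_harmonicTerm, forkedOccurProb_forkedPair, forkedPair, wordWeight_append,
      wordWeight_append, ← mul_add (wordWeight _ i.1), ← mul_assoc x]
    ring
  · refine (((h.summable_branchingTerm (Real.log x)).hasSum.mul_left
      (1 - 1 / (Fintype.card ι : ℝ))).mul_left (x ^ (2 * ρ - 1))).congr_fun fun u => ?_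
    rw [mul_left_comm, ← h.rpow_mul_branchingTerm_log hx, mul_left_comm]

lemma exists_hasSum_forkedOccurProb_sq_mul_exp (h : MalthusianWeights (stepWeight ι p) ρ) {σ : ℝ}
    (hρσ : ρ < σ) (hσ : σ ≤ 2) :
    ∃ C, ∀ x, 0 < x → ∃ a, a ≤ C * x ^ σ ∧
      HasSum (fun z : List (ι × α) × List (ι × α) => x ^ 2 * (forkedOccurProb p z.1 z.2 ^ 2 *
        Real.exp (-(x * (wordWeight (stepWeight ι p) z.1 +
          wordWeight (stepWeight ι p) z.2))))) a := by
  obtain ⟨C, hC⟩ := h.exists_mul_harmonicSum_sq_le hρσ.le hσ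
  have hw := h.weight_pos
  set ζ : ℝ := 1 - 1 / (Fintype.card ι : ℝ)
  have hζ0 : 0 ≤ ζ := sub_nonneg.2 (by simpa using Nat.cast_inv_le_one (Fintype.card ι))
  have hζ1 : ζ ≤ 1 := sub_le_self _ (by positivity)
  refine ⟨C * ∑' u, wordWeight (stepWeight ι p) u ^ σ, fun x hx => ?_⟩
  set X : List (ι × α) → ℝ := fun u => x * wordWeight (stepWeight ι p) u
  have hX (u : List (ι × α)) : 0 < X u := mul_pos hx (hw u)
  have hle (u : List (ι × α)) : X u ^ 2 *
      (ζ * (harmonicSum (stepWeight ι p) (X u) - Real.exp (-X u)) ^ 2) ≤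
      C * x ^ σ * wordWeight (stepWeight ι p) u ^ σ := by
    calc _ ≤ X u ^ 2 * (1 * harmonicSum (stepWeight ι p) (X u) ^ 2) := by
          have hexp := h.exp_neg_le_harmonicSum (hX u).le
          have := sub_nonneg.2 hexp
          gcongr
          exact sub_le_self _ (Real.exp_pos _).le
      _ ≤ C * X u ^ σ := by rw [one_mul, ← mul_pow]; exact hC _ (hX u)
      _ = _ := by rw [Real.mul_rpow hx.le (hw u).le, mul_assoc]
  have hbound := (h.summable_rpow hρσ).mul_left (C * x ^ σ)
  have hsum := Summable.of_nonneg_of_le (fun u => by positivity) hle hbound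
  refine ⟨_, (hsum.tsum_le_tsum hle hbound).trans_eq ?_,
    h.hasSum_of_support_subset_range_forkedPair (fun z hz => mem_range_forkedPair
      (ne_zero_pow two_ne_zero (left_ne_zero_of_mul (right_ne_zero_of_mul hz))))
      (fun u => sq_nonneg (X u)) (fun u => (hX u).le) (fun i => ?_) hsum.hasSum⟩
  · rw [tsum_mul_left]
    ring
  · rw [harmonicTerm_mul_harmonicTerm, forkedOccurProb_forkedPair, forkedPair, wordWeight_append,
      wordWeight_append, ← mul_add (wordWeight _ i.1), ← mul_assoc x]
    ring

lemma exists_abs_tsum_occurCov_sub_le (h : MalthusianWeights (stepWeight ι p) ρ)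
    (hp : ∀ j, 0 ≤ p j) (hsum : ∑ j, p j = 1) {σ : ℝ} (hρσ : ρ < σ) (hσ : σ ≤ 2) :
    ∃ C, ∀ n : ℕ, 4 ≤ n →
      Summable (fun z : List (ι × α) × List (ι × α) => occurCov p n z.1 z.2) ∧
      |∑' z : List (ι × α) × List (ι × α), occurCov p n z.1 z.2 -
          ((n : ℝ) ^ (2 * ρ - 1) * ((1 - 1 / (Fintype.card ι : ℝ)) *
            ∑' u, branchingTerm (stepWeight ι p) ρ (Real.log n) u) -
            n ^ (2 * ρ - 1) * logHarmonicSum (stepWeight ι p) ρ (Real.log n) ^ 2)| ≤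
        C * (n : ℝ) ^ σ := by
  obtain ⟨C₁, hC₁0, hC₁⟩ := exists_abs_occurCov_sub_le (ι := ι) hp hsum
  obtain ⟨C₂, hC₂⟩ := h.exists_hasSum_forkedOccurProb_sq_mul_exp hρσ hσ
  obtain ⟨C₃, hC₃⟩ := h.exists_mul_harmonicSum_sq_le hρσ.le hσ
  have hprefix : Summable fun z : List (ι × α) × List (ι × α) =>
      prefixWeight (stepWeight ι p) σ z.1 z.2 + prefixWeight (stepWeight ι p) σ z.2 z.1 :=
    (h.summable_prefixWeight hρσ).add (h.summable_prefixWeight hρσ).prod_symm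
  set b := ∑' z : List (ι × α) × List (ι × α),
      (prefixWeight (stepWeight ι p) σ z.1 z.2 + prefixWeight (stepWeight ι p) σ z.2 z.1)
  refine ⟨C₁ * ((C₂ + C₃) / 4 ^ σ + b), fun n hn => ?_⟩
  have hn0 : (0 : ℝ) < n := by exact_mod_cast (by lia : 0 < n)
  obtain ⟨a, ha, hforked⟩ := hC₂ (n / 4) (by positivity)
  have hmain := (h.hasSum_forkedOccurProb_mul_exp hn0).sub
    ((h.hasSum_harmonicTerm_mul hn0.le).mul_left ((n : ℝ) ^ 3))
  rw [← rpow_mul_sq_rpow_mul ρ _ hn0, ← logHarmonicSum_log _ ρ hn0] at hmain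
  have herror := ((hforked.add ((h.hasSum_harmonicTerm_mul (x := n / 4) (by positivity)).mul_left
    ((n / 4 : ℝ) ^ 2))).add (hprefix.hasSum.mul_left ((n : ℝ) ^ σ))).mul_left C₁
  have hbound (z : List (ι × α) × List (ι × α)) :=
    hC₁ n σ z.1 z.2 hn (by linarith [h.one_lt]) hσ
  have hcov := ((Summable.of_norm_bounded herror.summable hbound).add hmain.summable).congr
    fun z => sub_add_cancel _ _
  refine ⟨hcov, ?_⟩
  rw [← (hcov.hasSum.sub hmain).tsum_eq, ← Real.norm_eq_abs]
  refine le_trans (tsum_of_norm_bounded herror hbound) ?_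
  calc C₁ * (a + (n / 4 : ℝ) ^ 2 * harmonicSum (stepWeight ι p) (n / 4) ^ 2 + n ^ σ * b)
    _ ≤ C₁ * (C₂ * (n / 4 : ℝ) ^ σ + C₃ * (n / 4 : ℝ) ^ σ + n ^ σ * b) := by
        rw [← mul_pow]
        gcongr
        exact hC₃ _ (by positivity)
    _ = C₁ * ((C₂ + C₃) / 4 ^ σ + b) * n ^ σ := by
        rw [Real.div_rpow hn0.le (by norm_num)]
        ring

lemma tendsto_tsum_occurCov_div_sub (h : MalthusianWeights (stepWeight ι p) ρ)
    (hp : ∀ j, 0 ≤ p j) (hsum : ∑ j, p j = 1) :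
    Tendsto (fun n : ℕ =>
      (∑' z : List (ι × α) × List (ι × α), occurCov p n z.1 z.2) / (n : ℝ) ^ (2 * ρ - 1) -
        ((1 - 1 / (Fintype.card ι : ℝ)) * (1 - ∑ x, stepWeight ι p x ^ (2 * ρ - 1))⁻¹ - 1) *
          logHarmonicSum (stepWeight ι p) ρ (Real.log n) ^ 2) atTop (𝓝 0) := by
  obtain ⟨σ, hρσ, hσ⟩ := exists_between
    (lt_min h.lt_two (by linarith [h.one_lt] : ρ < 2 * ρ - 1))
  rw [lt_min_iff] at hσ
  obtain ⟨C, hC⟩ := h.exists_abs_tsum_occurCov_sub_le hp hsum hρσ hσ.1.le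
  have hbranch := (h.tendsto_tsum_branchingTerm_sub.comp
    (Real.tendsto_log_atTop.comp tendsto_natCast_atTop_atTop)).const_mul
      (1 - 1 / (Fintype.card ι : ℝ))
  have hpow := ((tendsto_rpow_neg_atTop (by linarith : 0 < 2 * ρ - 1 - σ)).comp
    (tendsto_natCast_atTop_atTop (R := ℝ))).const_mul C
  have hmain : Tendsto (fun n : ℕ =>
      (∑' z : List (ι × α) × List (ι × α), occurCov p n z.1 z.2) / (n : ℝ) ^ (2 * ρ - 1) -
        ((1 - 1 / (Fintype.card ι : ℝ)) *
          ∑' u, branchingTerm (stepWeight ι p) ρ (Real.log n) u -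
            logHarmonicSum (stepWeight ι p) ρ (Real.log n) ^ 2)) atTop (𝓝 0) := by
    refine squeeze_zero_norm' ?_ (by simpa using hpow)
    filter_upwards [eventually_ge_atTop 4] with n hn
    have hn0 : (0 : ℝ) < n := by exact_mod_cast (by lia : 0 < n)
    have hpos : (0 : ℝ) < n ^ (2 * ρ - 1) := Real.rpow_pos_of_pos hn0 _
    have hle := (hC n hn).2
    rw [← mul_sub, ← div_le_div_iff_of_pos_right hpos, ← abs_of_pos hpos, ← abs_div,
      abs_of_pos hpos, sub_div, mul_div_cancel_left₀ _ hpos.ne', mul_div_assoc,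
      ← Real.rpow_sub hn0] at hle
    simpa using hle
  refine (by simpa using hmain.add hbranch : Tendsto _ _ _).congr fun n => ?_
  ring

end MalthusianWeights

/-! ### Occurrence probabilities -/

section Cylinders

variable {N α : Type*} {p : α → ℝ} {D D' : Set N} {E E' : Set (N → α)} {q q' : ℝ}

/-- `E` is the event that finitely many nodes, all in `D`, have prescribed labels, and `q` is the
product of the probabilities `p` of these labels. -/
def IsCylinder (p : α → ℝ) (D : Set N) (E : Set (N → α)) (q : ℝ) : Prop :=
  ∃ (s : Finset N) (f : N → α), ↑s ⊆ D ∧ E = {L | ∀ u ∈ s, L u = f u} ∧ q = ∏ u ∈ s, p (f u)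

namespace IsCylinder

lemma mono (h : IsCylinder p D E q) (hD : D ⊆ D') : IsCylinder p D' E q := by
  obtain ⟨s, f, hs, rfl, rfl⟩ := h
  exact ⟨s, f, hs.trans hD, rfl, rfl⟩

lemma univ [Nonempty α] (p : α → ℝ) (D : Set N) : IsCylinder p D Set.univ 1 :=
  ⟨∅, fun _ => Classical.arbitrary α, by simp⟩

lemma singleton (p : α → ℝ) (u : N) (a : α) : IsCylinder p {u} {L | L u = a} (p a) :=
  ⟨{u}, fun _ => a, by simp⟩

lemma inter (h : IsCylinder p D E q) (h' : IsCylinder p D' E' q') (hD : Disjoint D D') :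
    IsCylinder p (D ∪ D') (E ∩ E') (q * q') := by
  classical
  obtain ⟨s, f, hs, rfl, rfl⟩ := h
  obtain ⟨s', f', hs', rfl, rfl⟩ := h'
  have hdisj : Disjoint s s' := by exact_mod_cast hD.mono hs hs'
  have hf : ∀ u ∈ s, s.piecewise f f' u = f u := fun u hu => s.piecewise_eq_of_mem f f' hu
  have hf' : ∀ u ∈ s', s.piecewise f f' u = f' u := fun u hu =>
    s.piecewise_eq_of_notMem f f' (Finset.disjoint_right.1 hdisj hu)
  refine ⟨s ∪ s', s.piecewise f f', ?_, ?_, ?_⟩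
  · push_cast
    exact Set.union_subset_union hs hs'
  · ext L
    simp only [Set.mem_inter_iff, Set.mem_ofPred_eq, Finset.forall_mem_union]
    exact and_congr (forall₂_congr fun u hu => by rw [hf u hu])
      (forall₂_congr fun u hu => by rw [hf' u hu])
  · rw [Finset.prod_union hdisj]
    exact congrArg₂ _ (Finset.prod_congr rfl fun u hu => by rw [hf u hu])
      (Finset.prod_congr rfl fun u hu => by rw [hf' u hu])

lemma measureReal_eq {M A : ℕ} {p : Fin A → ℝ} (hp : ∀ j, 0 ≤ p j)
    {μL : Measure (List (Fin M) → Fin A)} (hμL : IsLabelingMeasure p μL)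
    {D : Set (List (Fin M))} {E : Set (List (Fin M) → Fin A)} (h : IsCylinder p D E q) :
    μL.real E = q := by
  obtain ⟨s, f, -, rfl, rfl⟩ := h
  rw [measureReal_def, hμL s f, ← ENNReal.ofReal_prod_of_nonneg fun u _ => hp (f u),
    ENNReal.toReal_ofReal (Finset.prod_nonneg fun u _ => hp (f u))]

end IsCylinder

end Cylinders

section Occurrences

variable {ι α : Type*}

/-- The word occurs in the labeling `L` when the walk through the tree starts at the node `z`
instead of at the root. -/
def OccursFrom (L : List ι → α) : List ι → List (ι × α) → Prop
  | _, [] => True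
  | z, x :: v => L (z ++ [x.1]) = x.2 ∧ OccursFrom L (z ++ [x.1]) v

lemma occursFrom_iff (L : List ι → α) (z : List ι) (w : List (ι × α)) :
    OccursFrom L z w ↔
      ∀ t : Fin w.length, L (z ++ (w.take (t.1 + 1)).map Prod.fst) = (w.get t).2 := by
  induction w generalizing z with
  | nil => simp [OccursFrom]
  | cons x v ih =>
    rw [OccursFrom, ih]
    exact (by simp : _ ↔ _).trans (Fin.forall_fin_succ (n := v.length)).symm

lemma prefix_inj_of_append_singleton_prefix {z u : List ι} {m m' : ι} (h : z ++ [m] <+: u)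
    (h' : z ++ [m'] <+: u) : m = m' := by
  have := List.prefix_of_prefix_length_le h h' (by simp)
  simpa using this.eq_of_length (by simp)

/-- The nodes strictly below `z`. -/
def strictDescendants (z : List ι) : Set (List ι) := {u | z <+: u ∧ u ≠ z}

lemma subtree_subset_strictDescendants (z : List ι) (m : ι) :
    {u | z ++ [m] <+: u} ⊆ strictDescendants z := by
  rintro u hu
  refine ⟨(List.prefix_append _ _).trans hu, ?_⟩
  rintro rfl
  simpa using hu.length_le

variable {p : α → ℝ}

lemma IsCylinder.cons {z : List ι} {E : Set (List ι → α)} {q : ℝ} (x : ι × α)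
    (h : IsCylinder p (strictDescendants (z ++ [x.1])) E q) :
    IsCylinder p {u | z ++ [x.1] <+: u} ({L | L (z ++ [x.1]) = x.2} ∩ E) (p x.2 * q) := by
  refine ((IsCylinder.singleton p _ x.2).inter h ?_).mono ?_
  · simp [strictDescendants]
  · rintro u (rfl | hu)
    exacts [List.prefix_rfl, hu.1]

variable [Nonempty α]

lemma isCylinder_occursFrom (p : α → ℝ) (z : List ι) (w : List (ι × α)) :
    IsCylinder p (strictDescendants z) {L | OccursFrom L z w} (wordWeight (stepWeight ι p) w) := by
  induction w generalizing z with
  | nil => simpa [OccursFrom] using IsCylinder.univ p (strictDescendants z)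
  | cons x v ih =>
    rw [wordWeight_cons]
    exact ((ih _).cons x).mono (subtree_subset_strictDescendants z x.1)

variable [DecidableEq ι] [DecidableEq α]

lemma isCylinder_occursFrom_inter (p : α → ℝ) (z : List ι) (w w' : List (ι × α)) :
    {L | OccursFrom L z w} ∩ {L | OccursFrom L z w'} = ∅ ∧ jointOccurProb p w w' = 0 ∨
      IsCylinder p (strictDescendants z) ({L | OccursFrom L z w} ∩ {L | OccursFrom L z w'})
        (jointOccurProb p w w') := by
  induction w generalizing z w' with
  | nil => simpa [OccursFrom, jointOccurProb] using Or.inr (isCylinder_occursFrom p z w')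
  | cons x v ih =>
    cases w' with
    | nil => simpa [OccursFrom, jointOccurProb] using Or.inr (isCylinder_occursFrom p z (x :: v))
    | cons y v' =>
      unfold jointOccurProb
      split_ifs with hxy hdir
      · subst hxy
        have hinter : {L | OccursFrom L z (x :: v)} ∩ {L | OccursFrom L z (x :: v')} =
            {L : List ι → α | L (z ++ [x.1]) = x.2} ∩
              ({L | OccursFrom L (z ++ [x.1]) v} ∩ {L | OccursFrom L (z ++ [x.1]) v'}) :=
          (Set.inter_inter_distrib_left _ _ _).symm
        rw [hinter]
        refine (ih (z ++ [x.1]) v').imp (fun h => by simp [h]) fun h => ?_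
        exact (h.cons x).mono (subtree_subset_strictDescendants z x.1)
      · refine Or.inl ⟨Set.eq_empty_of_forall_notMem fun L hL => ?_, rfl⟩
        exact hxy (Prod.ext hdir (hL.1.1.symm.trans ((congrArg (fun m => L (z ++ [m])) hdir).trans
          hL.2.1)))
      · refine Or.inr ((((isCylinder_occursFrom p _ v).cons x).inter
          ((isCylinder_occursFrom p _ v').cons y) ?_).mono (Set.union_subset
            (subtree_subset_strictDescendants z x.1) (subtree_subset_strictDescendants z y.1)))
        exact Set.disjoint_left.2 fun u hu hu' =>
          hdir (prefix_inj_of_append_singleton_prefix hu hu')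

end Occurrences

section LabelingMeasure

variable {M A : ℕ} {p : Fin A → ℝ}

lemma occurs_iff_occursFrom (L : List (Fin M) → Fin A) (w : List (Fin M × Fin A)) :
    Occurs L w ↔ OccursFrom L [] w :=
  (occursFrom_iff L [] w).symm

lemma measurableSet_occurs (w : List (Fin M × Fin A)) :
    MeasurableSet {L : List (Fin M) → Fin A | Occurs L w} := by
  simp only [Occurs, Set.ofPred_forall]
  exact MeasurableSet.iInter fun t => measurableSet_eq_fun (measurable_pi_apply _) measurable_const

variable [Nonempty (Fin A)] {μL : Measure (List (Fin M) → Fin A)}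

lemma measureReal_occurs (hp : ∀ j, 0 ≤ p j) (hμL : IsLabelingMeasure p μL)
    (w : List (Fin M × Fin A)) :
    μL.real {L | Occurs L w} = wordWeight (stepWeight (Fin M) p) w := by
  simp only [occurs_iff_occursFrom]
  exact (isCylinder_occursFrom p [] w).measureReal_eq hp hμL

lemma measureReal_occurs_inter (hp : ∀ j, 0 ≤ p j) (hμL : IsLabelingMeasure p μL)
    (w w' : List (Fin M × Fin A)) :
    μL.real ({L | Occurs L w} ∩ {L | Occurs L w'}) = jointOccurProb p w w' := by
  simp only [occurs_iff_occursFrom]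
  rcases isCylinder_occursFrom_inter p [] w w' with ⟨hempty, hq⟩ | hcyl
  · rw [hempty, hq, measureReal_empty]
  · exact hcyl.measureReal_eq hp hμL

end LabelingMeasure

/-! ### Events occurring at most once in independent trials -/

section AtMostOnce

variable {Ω : Type*} {n : ℕ} {E F : Set Ω}

/-- The event that `E` occurs at most once in `n` trials. -/
def atMostOnce (n : ℕ) (E : Set Ω) : Set (Fin n → Ω) := {x | Nat.card {i // x i ∈ E} ≤ 1}

/-- The event that `E` occurs in the `i`-th trial only, for `o = some i`, or in no trial, for
`o = none`. -/
def occursOnlyAt (E : Set Ω) (o : Option (Fin n)) : Set (Fin n → Ω) :=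
  {x | ∀ k, x k ∈ E ↔ o = some k}

lemma atMostOnce_eq_iUnion (n : ℕ) (E : Set Ω) : atMostOnce n E = ⋃ o, occursOnlyAt E o := by
  ext x
  simp only [atMostOnce, occursOnlyAt, Set.mem_iUnion, Set.mem_ofPred_eq,
    Finite.card_le_one_iff_subsingleton]
  constructor
  · intro hx
    by_cases hne : ∃ i, x i ∈ E
    · obtain ⟨i, hi⟩ := hne
      refine ⟨some i, fun k => ⟨fun hk => ?_, fun hk => Option.some.inj hk ▸ hi⟩⟩
      exact congrArg some (congrArg Subtype.val
        (Subsingleton.elim (⟨i, hi⟩ : {i // x i ∈ E}) ⟨k, hk⟩))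
    · push Not at hne
      exact ⟨none, fun k => by simp [hne k]⟩
  · rintro ⟨o, ho⟩
    refine ⟨fun i j => Subtype.ext (Option.some.inj ?_)⟩
    rw [← (ho i).1 i.2, ← (ho j).1 j.2]

lemma pairwise_disjoint_occursOnlyAt (E : Set Ω) :
    Pairwise (Function.onFun Disjoint (occursOnlyAt (n := n) E)) := by
  refine fun o o' hne => Set.disjoint_left.2 fun x hx hx' => hne (Option.ext fun k => ?_)
  exact (hx k).symm.trans (hx' k)

variable [MeasurableSpace Ω]

lemma measurableSet_occursOnlyAt (hE : MeasurableSet E) (o : Option (Fin n)) :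
    MeasurableSet (occursOnlyAt E o) := by
  simp only [occursOnlyAt, Set.ofPred_forall]
  exact MeasurableSet.iInter fun k => ((measurable_pi_apply k) hE).iff (.const _)

lemma measurableSet_atMostOnce (hE : MeasurableSet E) : MeasurableSet (atMostOnce n E) := by
  rw [atMostOnce_eq_iUnion]
  exact MeasurableSet.iUnion (measurableSet_occursOnlyAt hE)

variable {μ : Measure Ω} [IsProbabilityMeasure μ]

lemma measureReal_iff_inter_iff (hE : MeasurableSet E) (hF : MeasurableSet F) (P Q : Prop)
    [Decidable P] [Decidable Q] :
    μ.real {y | (y ∈ E ↔ P) ∧ (y ∈ F ↔ Q)} =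
      if P then if Q then μ.real (E ∩ F) else μ.real E - μ.real (E ∩ F)
      else if Q then μ.real F - μ.real (E ∩ F)
      else 1 - μ.real E - μ.real F + μ.real (E ∩ F) := by
  have hEF : μ.real (E ∩ F) + μ.real (E \ F) = μ.real E := measureReal_inter_add_sdiff hF
  have hFE : μ.real (F ∩ E) + μ.real (F \ E) = μ.real F := measureReal_inter_add_sdiff hE
  have hunion : μ.real (E ∪ F) + μ.real (E ∩ F) = μ.real E + μ.real F :=
    measureReal_union_add_inter hF
  have hcompl : μ.real (E ∪ F)ᶜ = 1 - μ.real (E ∪ F) := probReal_compl_eq_one_sub (hE.union hF)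
  rw [Set.inter_comm F E, Set.sdiff_eq, Set.inter_comm F Eᶜ] at hFE
  rw [Set.compl_union] at hcompl
  split_ifs with hP hQ hQ <;> simp only [hP, hQ, iff_true, iff_false]
  · rfl
  · exact eq_sub_of_add_eq' hEF
  · exact eq_sub_of_add_eq' hFE
  · refine hcompl.trans ?_
    linarith

lemma measureReal_occursOnlyAt_inter (hE : MeasurableSet E) (hF : MeasurableSet F)
    (o o' : Option (Fin n)) :
    (Measure.pi fun _ : Fin n => μ).real (occursOnlyAt E o ∩ occursOnlyAt F o') =
      ∏ k, if o = some k then if o' = some k then μ.real (E ∩ F) else μ.real E - μ.real (E ∩ F)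
        else if o' = some k then μ.real F - μ.real (E ∩ F)
        else 1 - μ.real E - μ.real F + μ.real (E ∩ F) := by
  have hbox : occursOnlyAt E o ∩ occursOnlyAt F o' =
      Set.univ.pi fun k => {y | (y ∈ E ↔ o = some k) ∧ (y ∈ F ↔ o' = some k)} := by
    ext x
    simp [occursOnlyAt, forall_and]
  rw [hbox, measureReal_def, Measure.pi_pi, ENNReal.toReal_prod]
  exact Finset.prod_congr rfl fun k _ => measureReal_iff_inter_iff hE hF _ _

lemma prod_ite_eq_mul_pow {R : Type*} [CommMonoid R] (i : Fin n) (u r : R) :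
    ∏ k, (if i = k then u else r) = u * r ^ (n - 1) := by
  simp [Finset.prod_ite, Finset.filter_eq, Finset.filter_ne]

lemma prod_ite_ite_eq_mul_pow {R : Type*} [CommMonoid R] (i j : Fin n) (t u v r : R) :
    ∏ k, (if i = k then if j = k then t else u else if j = k then v else r) =
      if i = j then t * r ^ (n - 1) else u * v * r ^ (n - 2) := by
  split_ifs with hij
  · subst hij
    rw [← prod_ite_eq_mul_pow i t r]
    exact Finset.prod_congr rfl fun k _ => by split_ifs <;> rfl
  · have hji : j ≠ i := Ne.symm hij
    simp [Finset.prod_ite, Finset.filter_eq, Finset.filter_ne, hji, Nat.sub_sub, mul_assoc]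

lemma sum_option_prod_ite_eq_jointAtMostOnceProb (hn : 2 ≤ n) (a b t : ℝ) :
    ∑ z : Option (Fin n) × Option (Fin n), ∏ k, (if z.1 = some k then
      if z.2 = some k then t else a - t else if z.2 = some k then b - t else 1 - a - b + t) =
      jointAtMostOnceProb n a b t := by
  have hsum (i : Fin n) (u v : ℝ) : ∑ j, (if i = j then u else v) = u + (n - 1) * v := by
    simp [Finset.sum_ite, Finset.filter_eq, Finset.filter_ne, Nat.cast_sub (by lia : 1 ≤ n)]
  simp only [Fintype.sum_prod_type, Fintype.sum_option, Option.some.injEq, reduceCtorEq, if_false,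
    prod_ite_eq_mul_pow, prod_ite_ite_eq_mul_pow, Finset.sum_add_distrib, hsum,
    Finset.prod_const, Finset.sum_const, Finset.card_univ, Fintype.card_fin, nsmul_eq_mul]
  unfold jointAtMostOnceProb
  ring

lemma measureReal_atMostOnce_inter (hn : 2 ≤ n) (hE : MeasurableSet E) (hF : MeasurableSet F) :
    (Measure.pi fun _ : Fin n => μ).real (atMostOnce n E ∩ atMostOnce n F) =
      jointAtMostOnceProb n (μ.real E) (μ.real F) (μ.real (E ∩ F)) := by
  have hunion : atMostOnce n E ∩ atMostOnce n F =
      ⋃ z : Option (Fin n) × Option (Fin n), occursOnlyAt E z.1 ∩ occursOnlyAt F z.2 := by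
    rw [atMostOnce_eq_iUnion, atMostOnce_eq_iUnion, Set.iUnion_inter_iUnion,
      Set.iUnion_prod']
  rw [hunion, measureReal_iUnion_fintype,
    ← sum_option_prod_ite_eq_jointAtMostOnceProb hn]
  · exact Finset.sum_congr rfl fun z _ => measureReal_occursOnlyAt_inter hE hF z.1 z.2
  · refine fun z z' hne => Set.disjoint_left.2 fun x hx hx' => hne (Prod.ext ?_ ?_)
    · exact (pairwise_disjoint_occursOnlyAt E).eq (Set.not_disjoint_iff.2 ⟨x, hx.1, hx'.1⟩)
    · exact (pairwise_disjoint_occursOnlyAt F).eq (Set.not_disjoint_iff.2 ⟨x, hx.2, hx'.2⟩)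
  · exact fun z => (measurableSet_occursOnlyAt hE _).inter (measurableSet_occursOnlyAt hF _)

lemma measureReal_atMostOnce (hn : 2 ≤ n) (hE : MeasurableSet E) :
    (Measure.pi fun _ : Fin n => μ).real (atMostOnce n E) = atMostOnceProb n (μ.real E) := by
  have huniv : atMostOnce n (∅ : Set Ω) = Set.univ := by simp [atMostOnce]
  have hinter := measureReal_atMostOnce_inter (μ := μ) hn hE MeasurableSet.empty
  rw [huniv, Set.inter_univ, Set.inter_empty, measureReal_empty] at hinter
  have hmul := jointAtMostOnceProb_mul hn (μ.real E) 0
  rw [mul_zero] at hmul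
  rw [hinter, hmul]
  simp [atMostOnceProb]

end AtMostOnce

/-! ### Variance of the number of occurring events -/

section NcardMoments

variable {Ω ι : Type*}

lemma ncard_eq_toReal_tsum_indicator (B : ι → Set Ω) (ω : Ω) :
    ({i | ω ∈ B i}.ncard : ℝ) = (∑' i, (B i).indicator (1 : Ω → ENNReal) ω).toReal := by
  have hencard : ∑' i, (B i).indicator (1 : Ω → ENNReal) ω = ({i | ω ∈ B i}.encard : ENNReal) := by
    rw [← ENNReal.tsum_set_one, tsum_subtype {i | ω ∈ B i} fun _ => (1 : ENNReal)]
    rfl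
  rw [hencard, Set.ncard_def]
  cases {i | ω ∈ B i}.encard <;> simp

lemma ncard_inter_eq_sq (B : ι → Set Ω) (ω : Ω) :
    ({z : ι × ι | ω ∈ B z.1 ∩ B z.2}.ncard : ℝ) = ({i | ω ∈ B i}.ncard : ℝ) ^ 2 := by
  have hprod : {z : ι × ι | ω ∈ B z.1 ∩ B z.2} = {i | ω ∈ B i} ×ˢ {i | ω ∈ B i} := rfl
  rw [hprod, Set.ncard_prod, Nat.cast_mul, sq]

variable [MeasurableSpace Ω] {μ : Measure Ω} {B : ι → Set Ω}

lemma tsum_measure_ne_top [IsFiniteMeasure μ] (hs : Summable fun i => μ.real (B i)) :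
    ∑' i, μ (B i) ≠ ⊤ := by
  simpa only [ofReal_measureReal (measure_ne_top μ _)] using hs.tsum_ofReal_ne_top

variable [Countable ι]

lemma measurable_tsum_indicator_one (hB : ∀ i, MeasurableSet (B i)) :
    Measurable fun ω => ∑' i, (B i).indicator (1 : Ω → ENNReal) ω :=
  Measurable.tsum fun i => measurable_one.indicator (hB i)

lemma lintegral_tsum_indicator_one (hB : ∀ i, MeasurableSet (B i)) :
    ∫⁻ ω, ∑' i, (B i).indicator (1 : Ω → ENNReal) ω ∂μ = ∑' i, μ (B i) := by
  rw [lintegral_tsum fun i => (measurable_one.indicator (hB i)).aemeasurable]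
  exact tsum_congr fun i => lintegral_indicator_one (hB i)

lemma integrable_ncard [IsFiniteMeasure μ] (hB : ∀ i, MeasurableSet (B i))
    (hs : Summable fun i => μ.real (B i)) :
    Integrable (fun ω => ({i | ω ∈ B i}.ncard : ℝ)) μ := by
  simp only [ncard_eq_toReal_tsum_indicator]
  refine integrable_toReal_of_lintegral_ne_top (measurable_tsum_indicator_one hB).aemeasurable ?_
  rw [lintegral_tsum_indicator_one hB]
  exact tsum_measure_ne_top hs

lemma integral_ncard [IsFiniteMeasure μ] (hB : ∀ i, MeasurableSet (B i))
    (hs : Summable fun i => μ.real (B i)) :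
    ∫ ω, ({i | ω ∈ B i}.ncard : ℝ) ∂μ = ∑' i, μ.real (B i) := by
  simp only [ncard_eq_toReal_tsum_indicator]
  have hmeas := (measurable_tsum_indicator_one hB).aemeasurable (μ := μ)
  have hfin := tsum_measure_ne_top hs
  rw [← lintegral_tsum_indicator_one hB] at hfin
  rw [integral_toReal hmeas (ae_lt_top' hmeas hfin), lintegral_tsum_indicator_one hB,
    ENNReal.tsum_toReal_eq fun i => measure_ne_top μ (B i)]
  rfl

/-- The square of the count is itself the count of the pairwise intersections. -/
lemma variance_ncard_eq_tsum [IsProbabilityMeasure μ] (hB : ∀ i, MeasurableSet (B i))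
    (hs : Summable fun i => μ.real (B i))
    (hcov : Summable fun z : ι × ι =>
      μ.real (B z.1 ∩ B z.2) - μ.real (B z.1) * μ.real (B z.2)) :
    variance (fun ω => ({i | ω ∈ B i}.ncard : ℝ)) μ =
      ∑' z : ι × ι, (μ.real (B z.1 ∩ B z.2) - μ.real (B z.1) * μ.real (B z.2)) := by
  have hmul : Summable fun z : ι × ι => μ.real (B z.1) * μ.real (B z.2) :=
    hs.mul_of_nonneg hs (fun _ => measureReal_nonneg) fun _ => measureReal_nonneg
  have hinter : Summable fun z : ι × ι => μ.real (B z.1 ∩ B z.2) := by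
    simpa using hcov.add hmul
  have hB2 (z : ι × ι) : MeasurableSet (B z.1 ∩ B z.2) := (hB z.1).inter (hB z.2)
  have hsq := integrable_ncard hB2 hinter
  have hint := integral_ncard hB2 hinter
  simp only [ncard_inter_eq_sq] at hsq hint
  have hL2 : MemLp (fun ω => ({i | ω ∈ B i}.ncard : ℝ)) 2 μ :=
    (memLp_two_iff_integrable_sq (integrable_ncard hB hs).aestronglyMeasurable).2 hsq
  rw [variance_eq_sub hL2, hinter.tsum_sub hmul, integral_ncard hB hs, sq (∑' i, _),
    hs.tsum_mul_tsum hs hmul]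
  exact congrArg (· - _) hint

end NcardMoments

section GTrieSize

variable {M A : ℕ} {p : Fin A → ℝ} {ρ : ℝ} {μL : Measure (List (Fin M) → Fin A)}
  [IsProbabilityMeasure μL] {n : ℕ}

lemma gtrieSize_eq_ncard (Ls : Fin n → List (Fin M) → Fin A) :
    gtrieSize Ls = {w | Ls ∈ (atMostOnce n {L | Occurs L w})ᶜ}.ncard := by
  have hset : GTrie Ls = {w | Ls ∈ (atMostOnce n {L | Occurs L w})ᶜ} :=
    Set.ext fun w => (Nat.not_le (a := occCount Ls w) (b := 1)).symm
  rw [gtrieSize, hset]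

lemma measureReal_compl_inter_compl_sub {Ω : Type*} [MeasurableSpace Ω] {μ : Measure Ω}
    [IsProbabilityMeasure μ] {E F : Set Ω} (hE : MeasurableSet E) (hF : MeasurableSet F) :
    μ.real (Eᶜ ∩ Fᶜ) - μ.real Eᶜ * μ.real Fᶜ = μ.real (E ∩ F) - μ.real E * μ.real F := by
  have hunion := measureReal_union_add_inter (μ := μ) (s := E) hF
  rw [← Set.compl_union, probReal_compl_eq_one_sub (hE.union hF), probReal_compl_eq_one_sub hE,
    probReal_compl_eq_one_sub hF]
  linear_combination -hunion

theorem MalthusianWeights.variance_gtrieSize_eq_tsum_occurCov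
    (h : MalthusianWeights (stepWeight (Fin M) p) ρ) (hp : ∀ j, 0 ≤ p j) (hsum : ∑ j, p j = 1)
    (hμL : IsLabelingMeasure p μL) (hn : 2 ≤ n)
    (hcov : Summable fun z : List (Fin M × Fin A) × List (Fin M × Fin A) =>
      occurCov p n z.1 z.2) :
    variance (fun Ls => gtrieSize Ls) (Measure.pi fun _ : Fin n => μL) =
      ∑' z : List (Fin M × Fin A) × List (Fin M × Fin A), occurCov p n z.1 z.2 := by
  have : Nonempty (Fin A) := by
    by_contra hempty
    simp [not_nonempty_iff.1 hempty] at hsum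
  have hE (w : List (Fin M × Fin A)) := measurableSet_atMostOnce (n := n) (measurableSet_occurs w)
  have hprob (w : List (Fin M × Fin A)) :
      (Measure.pi fun _ : Fin n => μL).real (atMostOnce n {L | Occurs L w})ᶜ =
        1 - atMostOnceProb n (wordWeight (stepWeight (Fin M) p) w) := by
    rw [probReal_compl_eq_one_sub (hE w), measureReal_atMostOnce hn (measurableSet_occurs w),
      measureReal_occurs hp hμL]
  have hcov_eq (z : List (Fin M × Fin A) × List (Fin M × Fin A)) :
      (Measure.pi fun _ : Fin n => μL).real ((atMostOnce n {L | Occurs L z.1})ᶜ ∩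
          (atMostOnce n {L | Occurs L z.2})ᶜ) -
        (Measure.pi fun _ : Fin n => μL).real (atMostOnce n {L | Occurs L z.1})ᶜ *
          (Measure.pi fun _ : Fin n => μL).real (atMostOnce n {L | Occurs L z.2})ᶜ =
        occurCov p n z.1 z.2 := by
    rw [measureReal_compl_inter_compl_sub (hE z.1) (hE z.2),
      measureReal_atMostOnce_inter hn (measurableSet_occurs _) (measurableSet_occurs _),
      measureReal_atMostOnce hn (measurableSet_occurs _),
      measureReal_atMostOnce hn (measurableSet_occurs _), measureReal_occurs_inter hp hμL,
      measureReal_occurs hp hμL, measureReal_occurs hp hμL, occurCov]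
  have hle (w : List (Fin M × Fin A)) : wordWeight (stepWeight (Fin M) p) w ≤ 1 :=
    wordWeight_le_one (g := stepWeight (Fin M) p) (fun x => hp x.2) (fun x => (h.lt_one x).le) w
  have hs : Summable fun w : List (Fin M × Fin A) =>
      1 - atMostOnceProb n (wordWeight (stepWeight (Fin M) p) w) := by
    refine Summable.of_nonneg_of_le (fun w => sub_nonneg.2 ?_) (fun w => ?_)
      ((h.summable_rpow h.lt_two).mul_left ((n : ℝ) ^ 2))
    · exact atMostOnceProb_le_one (h.weight_pos w).le (hle w) n
    · rw [Real.rpow_two, ← mul_pow]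
      exact one_sub_atMostOnceProb_le (h.weight_pos w).le (hle w) n
  simp only [gtrieSize_eq_ncard]
  rw [variance_ncard_eq_tsum (fun w => (hE w).compl) (by simpa only [hprob] using hs)
    (by simpa only [hcov_eq] using hcov)]
  exact tsum_congr hcov_eq

end GTrieSize

/-! ### Asymptotics of the variance -/

section Asymptotics

variable {M A : ℕ} {p : Fin A → ℝ} {ρ : ℝ}

lemma sum_snd_eq_mul_sum {α R : Type*} [Fintype α] [Semiring R] (F : α → R) :
    ∑ x : Fin M × α, F x.2 = M * ∑ j, F j := by
  simp [Fintype.sum_prod_type]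

lemma malthusianWeights_stepWeight (hM : 1 ≤ M) (hp0 : ∀ j, 0 < p j) (hp1 : ∀ j, p j < 1)
    (hnonexp : ∑ j, p j ^ 2 < 1 / (M : ℝ)) (hρ : ∑ j, p j ^ ρ = 1 / (M : ℝ)) (hρ1 : 1 < ρ) :
    MalthusianWeights (stepWeight (Fin M) p) ρ where
  pos x := hp0 x.2
  lt_one x := hp1 x.2
  sum_rpow := by
    have hM0 : (M : ℝ) ≠ 0 := by exact_mod_cast (by lia : M ≠ 0)
    rw [← mul_one_div_cancel hM0, ← hρ]
    exact sum_snd_eq_mul_sum fun j => p j ^ ρ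
  one_lt := hρ1
  lt_two := by
    by_contra! hρ2
    have hle : ∑ j, p j ^ ρ ≤ ∑ j, p j ^ 2 := Finset.sum_le_sum fun j _ => by
      rw [← Real.rpow_two]
      exact Real.rpow_le_rpow_of_exponent_ge (hp0 j) (hp1 j).le hρ2
    exact (hnonexp.trans_eq hρ.symm).not_ge hle

lemma rootsLine_eq_criticalRoots :
    rootsLine M A p ρ = criticalRoots (stepWeight (Fin M) p) ρ := by
  ext s
  have hsum : ∑ x, (stepWeight (Fin M) p x : ℂ) ^ s = M * ∑ j, (p j : ℂ) ^ s :=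
    sum_snd_eq_mul_sum fun j => (p j : ℂ) ^ s
  simp only [rootsLine, criticalRoots, Set.mem_ofPred_eq, Pfun, hsum, sub_eq_zero]
  rw [eq_comm (a := (1 : ℂ))]

lemma natCast_cpow_sub_one {n : ℕ} (hn : n ≠ 0) (β : ℂ) (ρ : ℝ) :
    (n : ℂ) ^ (β - 1) = ((n : ℝ) ^ (ρ - 1) : ℝ) * Complex.exp (Real.log n * (β - ρ)) := by
  have hn0 : (n : ℂ) ≠ 0 := by exact_mod_cast hn
  rw [Complex.ofReal_cpow (Nat.cast_nonneg n), Complex.ofReal_natCast,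
    Complex.cpow_def_of_ne_zero hn0, Complex.cpow_def_of_ne_zero hn0, ← Complex.exp_add,
    Complex.natCast_log]
  push_cast
  ring_nf

lemma Gamma_two_sub {s : ℂ} (h0 : s ≠ 0) (h1 : s ≠ 1) :
    Complex.Gamma (2 - s) = -(s * ((1 - s) * Complex.Gamma (-s))) := by
  rw [show 2 - s = 1 - s + 1 by ring, Complex.Gamma_add_one _ (sub_ne_zero.2 h1.symm),
    show 1 - s = -s + 1 by ring, Complex.Gamma_add_one _ (neg_ne_zero.2 h0)]
  ring

namespace MalthusianWeights

lemma mul_GE_eq_Gamma_div (h : MalthusianWeights (stepWeight (Fin M) p) ρ) {β : ℂ}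
    (hβ : β ∈ criticalRoots (stepWeight (Fin M) p) ρ) :
    β * GE M A p β = Complex.Gamma (2 - β) /
      meanStep (fun x => stepWeight (Fin M) p x ^ ρ)
        (fun x => -Real.log (stepWeight (Fin M) p x)) := by
  have hre : 1 < β.re := h.one_lt.trans_eq hβ.2.symm
  have hβ0 : β ≠ 0 := by rintro rfl; norm_num at hre
  have hβ1 : β ≠ 1 := by rintro rfl; norm_num at hre
  have hmean : (M : ℂ) * ∑ j, (p j : ℂ) ^ β * (Real.log (p j) : ℂ) =
      -(meanStep (fun x => stepWeight (Fin M) p x ^ ρ)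
        (fun x => -Real.log (stepWeight (Fin M) p x)) : ℂ) :=
    (sum_snd_eq_mul_sum fun j => (p j : ℂ) ^ β * (Real.log (p j) : ℂ)).symm.trans
      (h.sum_cpow_mul_log hβ)
  rw [GE, hmean, Gamma_two_sub hβ0 hβ1, div_neg, mul_neg, neg_div, ← mul_div_assoc]

lemma tsum_rootsLine_eq (h : MalthusianWeights (stepWeight (Fin M) p) ρ) {n : ℕ} (hn : n ≠ 0) :
    ∑' β : rootsLine M A p ρ, (β : ℂ) * GE M A p β * (n : ℂ) ^ ((β : ℂ) - 1) =
      ((n : ℝ) ^ (ρ - 1) : ℝ) * ((∑' β : criticalRoots (stepWeight (Fin M) p) ρ,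
        Complex.Gamma (2 - β) * Complex.exp (Real.log n * (β - ρ))) /
          meanStep (fun x => stepWeight (Fin M) p x ^ ρ)
            (fun x => -Real.log (stepWeight (Fin M) p x))) := by
  rw [rootsLine_eq_criticalRoots, ← tsum_div_const, ← tsum_mul_left]
  refine tsum_congr fun β => ?_
  rw [h.mul_GE_eq_Gamma_div β.2, natCast_cpow_sub_one hn β ρ]
  ring

lemma tendsto_variance_gtrieSize_div_sub (h : MalthusianWeights (stepWeight (Fin M) p) ρ)
    (hp : ∀ j, 0 ≤ p j) (hsum : ∑ j, p j = 1) {μL : Measure (List (Fin M) → Fin A)}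
    [IsProbabilityMeasure μL] (hμL : IsLabelingMeasure p μL) :
    Tendsto (fun n : ℕ =>
      variance (fun Ls => gtrieSize Ls) (Measure.pi fun _ : Fin n => μL) / (n : ℝ) ^ (2 * ρ - 1) -
        (((M : ℝ) - 1) / (M * (1 - M * ∑ j, p j ^ (2 * ρ - 1))) - 1) *
          logHarmonicSum (stepWeight (Fin M) p) ρ (Real.log n) ^ 2) atTop (𝓝 0) := by
  have hM : (M : ℝ) ≠ 0 := by
    obtain ⟨x⟩ := h.nonempty
    exact_mod_cast x.1.pos.ne'
  have hcoeff : (1 - 1 / (M : ℝ)) * (1 - ∑ x, stepWeight (Fin M) p x ^ (2 * ρ - 1))⁻¹ =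
      ((M : ℝ) - 1) / (M * (1 - M * ∑ j, p j ^ (2 * ρ - 1))) := by
    rw [← sum_snd_eq_mul_sum fun j => p j ^ (2 * ρ - 1), ← div_div, sub_div, div_self hM,
      div_eq_mul_inv _ (1 - _)]
    rfl
  obtain ⟨C, hC⟩ := h.exists_abs_tsum_occurCov_sub_le hp hsum h.lt_two le_rfl
  have hlim := h.tendsto_tsum_occurCov_div_sub hp hsum
  rw [Fintype.card_fin, hcoeff] at hlim
  refine hlim.congr' ?_
  filter_upwards [eventually_ge_atTop 4] with n hn
  rw [h.variance_gtrieSize_eq_tsum_occurCov hp hsum hμL (by lia) (hC n hn).1]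

lemma tendsto_logHarmonicSum_sq_sub {α : Type*} [Fintype α] {g : α → ℝ}
    (h : MalthusianWeights g ρ) {T : ℝ → ℂ}
    (hT : Tendsto (fun t => (logHarmonicSum g ρ t : ℂ) - T t) atTop (𝓝 0)) :
    Tendsto (fun t => (logHarmonicSum g ρ t : ℂ) ^ 2 - T t ^ 2) atTop (𝓝 0) := by
  obtain ⟨C, hC⟩ := h.exists_logHarmonicSum_le
  have hbdd : IsBoundedUnder (· ≤ ·) atTop
      (norm ∘ fun t => (2 * logHarmonicSum g ρ t : ℂ)) := by
    refine isBoundedUnder_of ⟨2 * C, fun t => ?_⟩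
    simpa [abs_of_nonneg (logHarmonicSum_nonneg g ρ t)] using hC t
  have hlim := (hT.zero_mul_isBoundedUnder_le hbdd).sub (hT.pow 2)
  refine (by simpa using hlim : Tendsto _ _ _).congr fun t => ?_
  ring

end MalthusianWeights

lemma isLittleO_rpow_of_tendsto_div {f : ℕ → ℂ} {s : ℝ}
    (hf : Tendsto (fun n : ℕ => f n / ((n : ℝ) ^ s : ℝ)) atTop (𝓝 0)) :
    f =o[atTop] fun n : ℕ => (n : ℝ) ^ s := by
  refine Complex.isLittleO_ofReal_right.1 (Asymptotics.isLittleO_of_tendsto' ?_ hf)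
  filter_upwards [eventually_gt_atTop 0] with n hn h0
  have hpos : 0 < (n : ℝ) ^ s := Real.rpow_pos_of_pos (by exact_mod_cast hn) s
  exact absurd (by exact_mod_cast h0) hpos.ne'

lemma natCast_rpow_sub_one_sq_mul {n : ℕ} (hn : n ≠ 0) (ρ : ℝ) :
    ((n : ℝ) ^ (ρ - 1)) ^ 2 * n = (n : ℝ) ^ (2 * ρ - 1) := by
  have hn0 : (0 : ℝ) < n := by exact_mod_cast Nat.pos_of_ne_zero hn
  rw [← Real.rpow_mul_natCast hn0.le, ← Real.rpow_add_one hn0.ne']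
  push_cast
  ring_nf

end Asymptotics

end GTrieVariance

open GTrieVariance

theorem gtrie_variance_nonuniform_case_general
    {M A : ℕ} (hM : 1 ≤ M)
    (p : Fin A → ℝ) (hp0 : ∀ j, 0 < p j) (hp1 : ∀ j, p j < 1)
    (hpsum : ∑ j, p j = 1)
    (hnonexp : ∑ j, (p j) ^ 2 < 1 / (M : ℝ))
    (ρ : ℝ) (hρ : ∑ j, (p j) ^ ρ = 1 / (M : ℝ)) (hρ1 : 1 < ρ)
    (μL : Measure (List (Fin M) → Fin A)) [IsProbabilityMeasure μL]
    (hμL : IsLabelingMeasure p μL)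
    (μ : (n : ℕ) → Measure (Fin n → List (Fin M) → Fin A))
    (hμ : ∀ n, μ n = Measure.pi fun _ => μL)
    (V : ℕ → ℝ)
    (hV : ∀ n, V n = variance (fun Ls => gtrieSize Ls) (μ n))
    (c : ℝ)
    (hc : c = ((M : ℝ) - 1) / ((M : ℝ) * (1 - (M : ℝ) * ∑ j, (p j) ^ (2 * ρ - 1))) - 1) :
    (fun n : ℕ => (V n : ℂ) -
        (c : ℂ) * (∑' β : rootsLine M A p ρ, (β : ℂ) * GE M A p β *
          (n : ℂ) ^ ((β : ℂ) - 1)) ^ 2 * (n : ℂ))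
      =o[atTop] (fun n : ℕ => (n : ℝ) ^ (2 * ρ - 1)) := by
  have h := malthusianWeights_stepWeight hM hp0 hp1 hnonexp hρ hρ1
  have hlog : Tendsto (fun n : ℕ => Real.log n) atTop atTop :=
    Real.tendsto_log_atTop.comp tendsto_natCast_atTop_atTop
  have hvar := h.tendsto_variance_gtrieSize_div_sub (fun j => (hp0 j).le) hpsum hμL
  rw [← hc] at hvar
  have hroots := (h.tendsto_logHarmonicSum_sq_sub
    h.tendsto_logHarmonicSum_sub_tsum_criticalRoots).comp hlog
  have hlim := ((Complex.continuous_ofReal.tendsto 0).comp hvar).add (hroots.const_mul (c : ℂ))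
  rw [Complex.ofReal_zero, mul_zero, add_zero] at hlim
  refine isLittleO_rpow_of_tendsto_div (hlim.congr' ?_)
  filter_upwards [eventually_ne_atTop 0] with n hn
  have hpow : (((n : ℝ) ^ (2 * ρ - 1) : ℝ) : ℂ) ≠ 0 := by
    exact_mod_cast (Real.rpow_pos_of_pos (by positivity) _).ne'
  rw [h.tsum_rootsLine_eq hn, hV, hμ, eq_div_iff hpow]
  simp only [Function.comp_apply, Complex.ofReal_sub, Complex.ofReal_div, Complex.ofReal_mul,
    Complex.ofReal_pow, sub_add_eq_add_sub, mul_sub, sub_mul, add_mul, div_mul_cancel₀ _ hpow]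
  rw [← natCast_rpow_sub_one_sq_mul hn ρ]
  push_cast
  ring

/-- **Variance of the size of a G-trie, non-uniform case** (Proposition 2(ii)).
If not all `p_j` are equal and `ρ > 1`, then
`Var(S_n) = ((M-1)/(M·P(2ρ-1)) - 1) · (∑_{β ∈ S_ρ} β G_E(β) n^{β-1})² · n + o(n^{2ρ-1})`. -/
theorem gtrie_variance_nonuniform_case
    {M A : ℕ} (hM : 1 ≤ M) (hA : 2 ≤ A)
    (p : Fin A → ℝ) (hp0 : ∀ j, 0 < p j) (hp1 : ∀ j, p j < 1)
    (hpsum : ∑ j, p j = 1)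
    (hnonexp : ∑ j, (p j) ^ 2 < 1 / (M : ℝ))
    (hnonunif : ∃ j₁ j₂, p j₁ ≠ p j₂)
    (ρ : ℝ) (hρ : ∑ j, (p j) ^ ρ = 1 / (M : ℝ)) (hρ1 : 1 < ρ)
    (μL : Measure (List (Fin M) → Fin A)) [IsProbabilityMeasure μL]
    (hμL : IsLabelingMeasure p μL)
    (μ : (n : ℕ) → Measure (Fin n → List (Fin M) → Fin A))
    (hμ : ∀ n, μ n = Measure.pi fun _ => μL)
    (V : ℕ → ℝ)
    (hV : ∀ n, V n = variance (fun Ls => gtrieSize Ls) (μ n))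
    (c : ℝ)
    (hc : c = ((M : ℝ) - 1) / ((M : ℝ) * (1 - (M : ℝ) * ∑ j, (p j) ^ (2 * ρ - 1))) - 1) :
    (fun n : ℕ => (V n : ℂ) -
        (c : ℂ) * (∑' β : rootsLine M A p ρ, (β : ℂ) * GE M A p β *
          (n : ℂ) ^ ((β : ℂ) - 1)) ^ 2 * (n : ℂ))
      =o[atTop] (fun n : ℕ => (n : ℝ) ^ (2 * ρ - 1)) :=
  gtrie_variance_nonuniform_case_general hM p hp0 hp1 hpsum hnonexp ρ hρ hρ1 μL hμL μ hμ V hV c hc
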